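/- arXiv:1706.00392 — 4 statements merged into one kernel-verified Lean document; each statement's English description precedes it below -/
import Mathlib

section
/- Fix a positive integer ℓ. There exists a constant C > 0 (depending only on ℓ) such that for all sufficiently large real x, writing y = log log x, one has Σ_{p ≤ x, p prime, p > ℓ} (ω_y(p−ℓ) − log log y)² ≤ C · π(x) · log log y, and likewise Σ_{p ≤ x, p prime} (ω_y(p+ℓ) − log log y)² ≤ C · π(x) · log log y. -/
open Filter Topology

/-- `omegay y n` is the number of distinct prime divisors `q ≤ y` of `n`. -/
noncomputable def omegay (y : ℝ) (n : ℕ) : ℕ :=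
  (n.primeFactors.filter (fun q : ℕ => (q : ℝ) ≤ y)).card

/-!
Let `M` be the product of the primes `q ≤ y`, and `c = ±ℓ`. The summand depends only on `p` modulo
`M`, through the divisibility of `p - c` by the primes `q ≤ y`. Averaged over the reduced residues
modulo `M`, these events are independent for distinct `q` with probabilities about `1 / q`, so the
mean square deviation from `log log y` is at most the variance, `∑ 1 / q`, plus a bounded bias, by
Mertens.

It remains to compare primes `p ≤ x` with reduced residues. Weighting `n` by the square of
`∑ μ(m) c_m(n) / φ(m)`, where `c_m` is the Ramanujan sum and `m` runs over the squarefree integers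
`m ≤ D` coprime to `M`, gives a constant weight to all primes `p > D`, while by orthogonality the
off-diagonal terms have mean zero. This sieves by the primes outside `M` and leaves the distribution
modulo `M` intact: a nonnegative function of `p` mod `M`, summed over primes `D < p ≤ x`, is at most
`x / log D` times its mean over the reduced residues, up to an error polynomial in `M` and `D`.
For `y ≤ (log x) / 8` and `D = x ^ (1 / 8)` that error is negligible.
-/

namespace TuranKubilius

open Finset Function
open scoped BigOperators

section PeriodicMeans

variable {f g : ℕ → ℝ} {M a b : ℕ}

lemma periodic_of_dvd (hf : Periodic f a) (hab : a ∣ b) : Periodic f b := by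
  obtain ⟨k, rfl⟩ := hab
  simpa [mul_comm] using hf.nat_mul k

lemma periodic_ite_dvd (p : ℕ) (u v : ℝ) : Periodic (fun n ↦ if p ∣ n then u else v) p := by
  intro n
  simp

lemma periodic_prod {s : Finset ℕ} {k : ℕ → ℕ → ℝ} (hk : ∀ p ∈ s, Periodic (k p) p) :
    Periodic (fun n ↦ ∏ p ∈ s, k p n) (∏ p ∈ s, p) :=
  fun n ↦ prod_congr rfl fun p hp ↦ periodic_of_dvd (hk p hp) (dvd_prod_of_mem _ hp) n

lemma sum_range_of_periodic (hf : Periodic f M) (N : ℕ) :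
    ∑ n ∈ range N, f n =
      (N / M : ℕ) * ∑ n ∈ range M, f n + ∑ n ∈ range (N % M), f n := by
  have shift (k i : ℕ) : f (M * k + i) = f i := by
    simpa [mul_comm, add_comm] using hf.nat_mul k i
  have multiple (k : ℕ) : ∑ n ∈ range (M * k), f n = k * ∑ n ∈ range M, f n := by
    induction k with
    | zero => simp
    | succ k ih =>
      rw [Nat.mul_succ, sum_range_add, ih]
      simp only [shift]
      push_cast
      ring
  conv_lhs => rw [← Nat.div_add_mod N M, sum_range_add, multiple]
  simp only [shift]

lemma abs_sum_range_sub_mul_expect_le (hM : 0 < M) (hf : Periodic f M) {B : ℝ}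
    (hB : ∀ n, |f n| ≤ B) (N : ℕ) :
    |∑ n ∈ range N, f n - N * 𝔼 n ∈ range M, f n| ≤ 2 * M * B := by
  set μ := 𝔼 n ∈ range M, f n
  have sum_eq : ∑ n ∈ range M, f n = M * μ := by
    simpa using (card_mul_expect (range M) f).symm
  have mean_le : |μ| ≤ B :=
    (abs_expect_le _ _).trans (expect_le (by simpa using hM.ne') fun n _ ↦ hB n)
  have hN : (N : ℝ) = (N / M : ℕ) * M + (N % M : ℕ) := by
    exact_mod_cast (Nat.div_add_mod' N M).symm
  have remainder : ∑ n ∈ range N, f n - N * μ = ∑ n ∈ range (N % M), (f n - μ) := by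
    rw [sum_range_of_periodic hf, sum_eq, sum_sub_distrib, sum_const, card_range, nsmul_eq_mul, hN]
    ring
  calc |∑ n ∈ range N, f n - N * μ| ≤ ∑ n ∈ range (N % M), |f n - μ| :=
        remainder ▸ abs_sum_le_sum_abs _ _
    _ ≤ ∑ _n ∈ range (N % M), (B + B) :=
        sum_le_sum fun n _ ↦ (abs_sub _ _).trans (add_le_add (hB n) mean_le)
    _ = (N % M : ℕ) * (B + B) := by rw [sum_const, card_range, nsmul_eq_mul]
    _ ≤ M * (B + B) := by
        have := (abs_nonneg _).trans (hB 0)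
        gcongr
        exact (Nat.mod_lt N hM).le
    _ = 2 * M * B := by ring

lemma sum_range_mul_of_coprime (ha : 0 < a) (hb : 0 < b) (hab : a.Coprime b) (hf : Periodic f a)
    (hg : Periodic g b) :
    ∑ n ∈ range (a * b), f n * g n = (∑ n ∈ range a, f n) * ∑ n ∈ range b, g n := by
  rw [sum_mul_sum, ← sum_product']
  refine sum_bij (fun n _ ↦ (n % a, n % b)) ?_ ?_ ?_ ?_
  · intro n _
    simp [Nat.mod_lt _ ha, Nat.mod_lt _ hb]
  · intro m hm n hn h
    rw [Prod.mk.injEq] at h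
    exact Nat.ModEq.eq_of_lt_of_lt ((Nat.modEq_and_modEq_iff_modEq_mul hab).1 h)
      (mem_range.1 hm) (mem_range.1 hn)
  · rintro ⟨i, j⟩ hij
    rw [mem_product, mem_range, mem_range] at hij
    obtain ⟨hi, hj⟩ := (Nat.chineseRemainder hab i j).2
    refine ⟨Nat.chineseRemainder hab i j,
      mem_range.2 (Nat.chineseRemainder_lt_mul hab i j ha.ne' hb.ne'), ?_⟩
    rw [hi, hj, Nat.mod_eq_of_lt hij.1, Nat.mod_eq_of_lt hij.2]
  · intro n _
    rw [hf.map_mod_nat, hg.map_mod_nat]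

lemma expect_range_mul_of_coprime (ha : 0 < a) (hb : 0 < b) (hab : a.Coprime b)
    (hf : Periodic f a) (hg : Periodic g b) :
    𝔼 n ∈ range (a * b), f n * g n = (𝔼 n ∈ range a, f n) * 𝔼 n ∈ range b, g n := by
  simp only [expect_eq_sum_div_card, card_range, Nat.cast_mul,
    sum_range_mul_of_coprime ha hb hab hf hg, mul_div_mul_comm]

lemma expect_range_prod {s : Finset ℕ} (hs : ∀ p ∈ s, p.Prime) {k : ℕ → ℕ → ℝ}
    (hk : ∀ p ∈ s, Periodic (k p) p) :
    𝔼 n ∈ range (∏ p ∈ s, p), ∏ p ∈ s, k p n = ∏ p ∈ s, 𝔼 n ∈ range p, k p n := by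
  induction s using Finset.induction_on with
  | empty => simp
  | insert q s hq ih =>
    obtain ⟨hq_prime, hs_prime⟩ := forall_mem_insert .. |>.1 hs
    obtain ⟨hkq, hks⟩ := forall_mem_insert .. |>.1 hk
    simp only [prod_insert hq]
    rw [← ih hs_prime hks]
    refine expect_range_mul_of_coprime hq_prime.pos (prod_pos fun p hp ↦ (hs_prime p hp).pos)
      (Nat.Coprime.prod_right fun p hp ↦ ?_) hkq (periodic_prod hks)
    exact (Nat.coprime_primes hq_prime (hs_prime p hp)).2 fun h ↦ hq (h ▸ hp)

end PeriodicMeans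

section ReducedResidues

/-- The reduced residue system `{n < M : (n, M) = 1}`; averages over it model the distribution of
the primes modulo `M`. -/
def reducedResidues (M : ℕ) : Finset ℕ := {n ∈ range M | M.Coprime n}

variable {f g : ℕ → ℝ} {M a b : ℕ}

lemma card_reducedResidues (M : ℕ) : #(reducedResidues M) = M.totient :=
  (Nat.totient_eq_card_coprime M).symm

lemma reducedResidues_nonempty (hM : 0 < M) : (reducedResidues M).Nonempty := by
  rw [← card_pos, card_reducedResidues]
  exact Nat.totient_pos.2 hM

lemma sum_reducedResidues (M : ℕ) (f : ℕ → ℝ) :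
    ∑ n ∈ reducedResidues M, f n = ∑ n ∈ range M, if M.Coprime n then f n else 0 :=
  sum_filter _ _

lemma periodic_ite_coprime (hf : Periodic f M) :
    Periodic (fun n ↦ if M.Coprime n then f n else 0) M := by
  intro n
  simp only [Nat.periodic_coprime M n, hf n]

lemma expect_reducedResidues_mul (ha : 0 < a) (hb : 0 < b) (hab : a.Coprime b)
    (hf : Periodic f a) (hg : Periodic g b) :
    𝔼 n ∈ reducedResidues (a * b), f n * g n =
      (𝔼 n ∈ reducedResidues a, f n) * 𝔼 n ∈ reducedResidues b, g n := by
  simp only [expect_eq_sum_div_card, card_reducedResidues, Nat.totient_mul hab, Nat.cast_mul,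
    sum_reducedResidues, div_mul_div_comm]
  rw [← sum_range_mul_of_coprime ha hb hab (periodic_ite_coprime hf) (periodic_ite_coprime hg)]
  refine congrArg (· / _) (sum_congr rfl fun n _ ↦ ?_)
  rw [ite_zero_mul_ite_zero]
  exact if_congr Nat.coprime_mul_iff_left rfl rfl

lemma expect_reducedResidues_of_dvd (hM : Squarefree M) (haM : a ∣ M) (hf : Periodic f a) :
    𝔼 n ∈ reducedResidues M, f n = 𝔼 n ∈ reducedResidues a, f n := by
  obtain ⟨b, rfl⟩ := haM
  have ha : 0 < a := Nat.pos_of_ne_zero (left_ne_zero_of_mul hM.ne_zero)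
  have hb : 0 < b := Nat.pos_of_ne_zero (right_ne_zero_of_mul hM.ne_zero)
  simpa [expect_const (reducedResidues_nonempty hb)] using
    expect_reducedResidues_mul (g := fun _ ↦ 1) ha hb (Nat.coprime_of_squarefree_mul hM) hf
      fun _ ↦ rfl

/-- Distinct primes contribute independent, hence orthogonal, summands. -/
lemma expect_reducedResidues_sq_add_sum (hM : Squarefree M) {Z : ℕ → ℕ → ℝ}
    (hZ : ∀ q ∈ M.primeFactors, Periodic (Z q) q)
    (hZ_mean : ∀ q ∈ M.primeFactors, 𝔼 n ∈ reducedResidues q, Z q n = 0) (c : ℝ) :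
    𝔼 n ∈ reducedResidues M, (c + ∑ q ∈ M.primeFactors, Z q n) ^ 2 =
      c ^ 2 + ∑ q ∈ M.primeFactors, 𝔼 n ∈ reducedResidues q, Z q n ^ 2 := by
  have single (q) (hq : q ∈ M.primeFactors) : 𝔼 n ∈ reducedResidues M, Z q n = 0 := by
    rw [expect_reducedResidues_of_dvd hM (Nat.dvd_of_mem_primeFactors hq) (hZ q hq), hZ_mean q hq]
  have pair (q) (hq : q ∈ M.primeFactors) (r) (hr : r ∈ M.primeFactors) :
      𝔼 n ∈ reducedResidues M, Z q n * Z r n =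
        if q = r then 𝔼 n ∈ reducedResidues q, Z q n ^ 2 else 0 := by
    have hqp := Nat.prime_of_mem_primeFactors hq
    have hrp := Nat.prime_of_mem_primeFactors hr
    have hqM := Nat.dvd_of_mem_primeFactors hq
    split_ifs with hqr
    · subst hqr
      simp only [← sq]
      exact expect_reducedResidues_of_dvd hM hqM fun n ↦ by simp only [hZ q hq n]
    · have hcop := (Nat.coprime_primes hqp hrp).2 hqr
      have hZqr : Periodic (fun n ↦ Z q n * Z r n) (q * r) :=
        (periodic_of_dvd (hZ q hq) (dvd_mul_right _ _)).mul
          (periodic_of_dvd (hZ r hr) (dvd_mul_left _ _))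
      rw [expect_reducedResidues_of_dvd hM
          (hcop.mul_dvd_of_dvd_of_dvd hqM (Nat.dvd_of_mem_primeFactors hr)) hZqr,
        expect_reducedResidues_mul hqp.pos hrp.pos hcop (hZ q hq) (hZ r hr), hZ_mean q hq, zero_mul]
  have expand (n : ℕ) : (c + ∑ q ∈ M.primeFactors, Z q n) ^ 2 = c ^ 2 +
      2 * c * ∑ q ∈ M.primeFactors, Z q n +
        ∑ q ∈ M.primeFactors, ∑ r ∈ M.primeFactors, Z q n * Z r n := by
    rw [← sum_mul_sum]
    ring
  simp only [expand, expect_add_distrib, ← mul_expect, expect_sum_comm]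
  rw [expect_const (reducedResidues_nonempty (Nat.pos_of_ne_zero hM.ne_zero)),
    sum_eq_zero single, mul_zero, add_zero]
  congr 1
  refine sum_congr rfl fun q hq ↦ ?_
  rw [sum_congr rfl (pair q hq), sum_ite_eq, if_pos hq]

end ReducedResidues

section ShiftedOmega

variable {c : ℤ} {q n : ℕ}

/-- The number of primes `q ≤ Y` dividing `n - c`. Unlike `omegay` it is periodic in `n` and also
makes sense at `n = c`, where it is `π(Y)`. -/
def shiftedOmega (c : ℤ) (Y n : ℕ) : ℕ := #{q ∈ Nat.primesLE Y | ((q : ℕ) : ℤ) ∣ n - c}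

/-- For a prime `q`, the proportion of reduced residues modulo `q` that are congruent to `c`. -/
noncomputable def residueDensity (c : ℤ) (q : ℕ) : ℝ := if (q : ℤ) ∣ c then 0 else ((q : ℝ) - 1)⁻¹

/-- The sum of `residueDensity c q` over the primes `q ≤ Y`, which is the mean of
`shiftedOmega c Y` over the reduced residues modulo the primorial of `Y`. -/
noncomputable def meanShiftedOmega (c : ℤ) (Y : ℕ) : ℝ := ∑ q ∈ Nat.primesLE Y, residueDensity c q

lemma residueDensity_nonneg (c : ℤ) (hq : 1 ≤ q) : 0 ≤ residueDensity c q := by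
  have : (1 : ℝ) ≤ q := mod_cast hq
  unfold residueDensity
  split_ifs
  exacts [le_rfl, inv_nonneg.2 (sub_nonneg.2 this)]

lemma periodic_dvd_sub (c : ℤ) (q : ℕ) : Periodic (fun n : ℕ ↦ (q : ℤ) ∣ n - c) q := by
  intro n
  simp [add_sub_right_comm]

lemma filter_reducedResidues_dvd_sub (c : ℤ) (hq : q.Prime) :
    {n ∈ reducedResidues q | (q : ℤ) ∣ ((n : ℕ) : ℤ) - c} =
      if (q : ℤ) ∣ c then ∅ else {(c : ZMod q).val} := by
  have := Fact.mk hq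
  have dvd_sub_iff (n : ℕ) : (q : ℤ) ∣ n - c ↔ (n : ZMod q) = c := by
    rw [← ZMod.intCast_eq_intCast_iff_dvd_sub, eq_comm, Int.cast_natCast]
  ext n
  rw [mem_filter, dvd_sub_iff, reducedResidues, mem_filter, mem_range, hq.coprime_iff_not_dvd,
    ← ZMod.natCast_eq_zero_iff]
  split_ifs with hc <;> rw [← ZMod.intCast_zmod_eq_zero_iff_dvd] at hc
  · simp only [notMem_empty, iff_false]
    rintro ⟨⟨-, hn⟩, hnc⟩
    exact hn (hnc.trans hc)
  · rw [mem_singleton]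
    constructor
    · rintro ⟨⟨hn, -⟩, hnc⟩
      rw [← hnc, ZMod.val_cast_of_lt hn]
    · rintro rfl
      simpa using ⟨ZMod.val_lt _, hc⟩

lemma expect_reducedResidues_ite_dvd_sub (c : ℤ) (hq : q.Prime) :
    𝔼 n ∈ reducedResidues q, (if (q : ℤ) ∣ n - c then 1 else 0) = residueDensity c q := by
  rw [expect_eq_sum_div_card, sum_boole, filter_reducedResidues_dvd_sub c hq, card_reducedResidues,
    Nat.totient_prime hq, Nat.cast_pred hq.pos, residueDensity]
  split_ifs <;> simp

lemma cast_shiftedOmega (c : ℤ) (Y n : ℕ) :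
    (shiftedOmega c Y n : ℝ) = ∑ q ∈ Nat.primesLE Y, if (q : ℤ) ∣ n - c then 1 else 0 :=
  (sum_boole ..).symm

lemma shiftedOmega_le (c : ℤ) (Y n : ℕ) : shiftedOmega c Y n ≤ Y := by
  calc shiftedOmega c Y n ≤ #(Nat.primesLE Y) := card_filter_le _ _
    _ ≤ #(Icc 1 Y) := card_le_card fun q hq ↦
        mem_Icc.2 ⟨(Nat.one_lt_of_mem_primesLE hq).le, Nat.le_of_mem_primesLE hq⟩
    _ = Y := by simp

lemma periodic_shiftedOmega (c : ℤ) (Y : ℕ) : Periodic (shiftedOmega c Y) (primorial Y) := by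
  intro n
  refine congrArg card (filter_congr fun q hq ↦ ?_)
  have hqY : (q : ℤ) ∣ primorial Y := by
    rw [primorial_eq_prod_primesLE]
    exact_mod_cast dvd_prod_of_mem _ hq
  rw [Nat.cast_add, add_sub_right_comm, dvd_add_left hqY]

lemma expect_reducedResidues_sq_shiftedOmega_sub_le (c : ℤ) (Y : ℕ) (L : ℝ) :
    𝔼 n ∈ reducedResidues (primorial Y), ((shiftedOmega c Y n : ℝ) - L) ^ 2 ≤
      meanShiftedOmega c Y + (meanShiftedOmega c Y - L) ^ 2 := by
  set ρ := residueDensity c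
  let Z (q n : ℕ) : ℝ := (if (q : ℤ) ∣ n - c then 1 else 0) - ρ q
  have Z_periodic (q : ℕ) : Periodic (Z q) q := fun n ↦ by
    simp only [Z, periodic_dvd_sub c q n]
  have Z_mean (q : ℕ) (hq : q.Prime) : 𝔼 n ∈ reducedResidues q, Z q n = 0 := by
    rw [expect_sub_distrib, expect_reducedResidues_ite_dvd_sub c hq,
      expect_const (reducedResidues_nonempty hq.pos), sub_self]
  have Z_variance (q : ℕ) (hq : q.Prime) : 𝔼 n ∈ reducedResidues q, Z q n ^ 2 ≤ ρ q := by
    have expand (n : ℕ) : Z q n ^ 2 = Z q n * (1 - 2 * ρ q) + (ρ q - ρ q ^ 2) := by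
      simp only [Z]
      split_ifs <;> ring
    simp only [expand, expect_add_distrib, ← expect_mul, Z_mean q hq]
    rw [expect_const (reducedResidues_nonempty hq.pos)]
    nlinarith [sq_nonneg (ρ q)]
  have decompose (n : ℕ) : (shiftedOmega c Y n : ℝ) - L =
      (meanShiftedOmega c Y - L) + ∑ q ∈ (primorial Y).primeFactors, Z q n := by
    rw [primeFactors_primorial, sum_sub_distrib, ← cast_shiftedOmega, meanShiftedOmega]
    ring
  simp only [decompose]
  rw [expect_reducedResidues_sq_add_sum (squarefree_primorial Y) (fun q _ ↦ Z_periodic q)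
    fun q hq ↦ Z_mean q (Nat.prime_of_mem_primeFactors hq), add_comm, primeFactors_primorial]
  gcongr
  exact sum_le_sum fun q hq ↦ Z_variance q (Nat.prime_of_mem_primesLE hq)

lemma sq_shiftedOmega_sub_le (c : ℤ) (Y n : ℕ) (L : ℝ) :
    ((shiftedOmega c Y n : ℝ) - L) ^ 2 ≤ (Y + |L|) ^ 2 := by
  have : (shiftedOmega c Y n : ℝ) ≤ Y := mod_cast shiftedOmega_le c Y n
  refine sq_le_sq' ?_ ?_ <;> have := le_abs_self L <;> have := neg_abs_le L <;>
    have := Nat.cast_nonneg (α := ℝ) (shiftedOmega c Y n) <;> linarith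

lemma omegay_eq_shiftedOmega {y : ℝ} (hy : 0 ≤ y) {m : ℕ} (hm : m ≠ 0) (h : (m : ℤ) = n - c) :
    omegay y m = shiftedOmega c ⌊y⌋₊ n := by
  unfold omegay shiftedOmega
  congr 1
  ext q
  simp only [mem_filter, Nat.mem_primeFactors, Nat.mem_primesLE, ← h, Nat.le_floor_iff hy]
  norm_cast
  tauto

lemma sum_sq_omegay_sub_le {y : ℝ} (hy : 0 ≤ y) (ℓ : ℕ) (S : Finset ℕ) (L : ℝ) :
    ∑ p ∈ S with ℓ < p, ((omegay y (p - ℓ) : ℝ) - L) ^ 2 ≤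
      ∑ p ∈ S, ((shiftedOmega ℓ ⌊y⌋₊ p : ℝ) - L) ^ 2 := by
  rw [sum_congr rfl fun p hp ↦ ?_]
  · exact sum_le_sum_of_subset_of_nonneg (filter_subset _ _) fun _ _ _ ↦ sq_nonneg _
  · have hp : ℓ < p := (mem_filter.1 hp).2
    rw [omegay_eq_shiftedOmega hy (Nat.sub_ne_zero_of_lt hp) (Nat.cast_sub hp.le)]

lemma omegay_add_eq_shiftedOmega {y : ℝ} (hy : 0 ≤ y) {ℓ : ℕ} (hℓ : 0 < ℓ) (n : ℕ) :
    omegay y (n + ℓ) = shiftedOmega (-ℓ) ⌊y⌋₊ n :=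
  omegay_eq_shiftedOmega hy (by omega) (by push_cast; ring)

end ShiftedOmega

section RamanujanWeights

variable {s t : Finset ℕ} {p : ℕ}

/-- For a prime `p`, the Ramanujan sum `c_p(n)` normalized as `μ(p) c_p(n) / φ(p)`. -/
noncomputable def ramanujanFactor (p n : ℕ) : ℝ := if p ∣ n then -1 else ((p : ℝ) - 1)⁻¹

/-- For a finite set `s` of primes with product `m`, the normalized Ramanujan sum
`μ(m) c_m(n) / φ(m)`. -/
noncomputable def ramanujanWeight (s : Finset ℕ) (n : ℕ) : ℝ := ∏ p ∈ s, ramanujanFactor p n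

lemma expect_range_ite_dvd (hp : 0 < p) (u v : ℝ) :
    𝔼 n ∈ range p, (if p ∣ n then u else v) = (u + (p - 1) * v) / p := by
  obtain ⟨k, rfl⟩ : ∃ k, p = k + 1 := ⟨p - 1, by omega⟩
  have not_dvd (n : ℕ) (hn : n ∈ range k) : ¬ k + 1 ∣ n + 1 :=
    Nat.not_dvd_of_pos_of_lt n.succ_pos (by simpa using hn)
  rw [expect_eq_sum_div_card, sum_range_succ', sum_congr rfl fun n hn ↦ if_neg (not_dvd n hn)]
  simp [add_comm]

lemma expect_ramanujanFactor (hp : p.Prime) : 𝔼 n ∈ range p, ramanujanFactor p n = 0 := by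
  have : (p : ℝ) - 1 ≠ 0 := sub_ne_zero.2 (mod_cast hp.one_lt.ne')
  simp [ramanujanFactor, expect_range_ite_dvd hp.pos, this]

lemma expect_sq_ramanujanFactor (hp : p.Prime) :
    𝔼 n ∈ range p, ramanujanFactor p n ^ 2 = ((p : ℝ) - 1)⁻¹ := by
  have hp0 : (p : ℝ) ≠ 0 := mod_cast hp.ne_zero
  have hp1 : (p : ℝ) - 1 ≠ 0 := sub_ne_zero.2 (mod_cast hp.one_lt.ne')
  simp only [ramanujanFactor, ite_pow, expect_range_ite_dvd hp.pos]
  field_simp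
  ring

lemma abs_ramanujanFactor_le_one (hp : p.Prime) (n : ℕ) : |ramanujanFactor p n| ≤ 1 := by
  have : (1 : ℝ) ≤ p - 1 := le_sub_iff_add_le.2 (by exact_mod_cast hp.two_le)
  unfold ramanujanFactor
  split_ifs
  · simp
  · rw [abs_of_nonneg (by positivity)]
    exact inv_le_one_of_one_le₀ this

lemma abs_ramanujanWeight_le_one (hs : ∀ p ∈ s, p.Prime) (n : ℕ) : |ramanujanWeight s n| ≤ 1 := by
  rw [ramanujanWeight, abs_prod]
  exact prod_le_one (fun _ _ ↦ abs_nonneg _) fun p hp ↦ abs_ramanujanFactor_le_one (hs p hp) n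

lemma ramanujanWeight_of_not_dvd {n : ℕ} (h : ∀ p ∈ s, ¬ p ∣ n) :
    ramanujanWeight s n = ∏ p ∈ s, ((p : ℝ) - 1)⁻¹ :=
  prod_congr rfl fun p hp ↦ if_neg (h p hp)

lemma ramanujanWeight_mul (s t : Finset ℕ) (n : ℕ) :
    ramanujanWeight s n * ramanujanWeight t n =
      ∏ p ∈ s ∪ t, (if p ∈ s then ramanujanFactor p n else 1) *
        (if p ∈ t then ramanujanFactor p n else 1) := by
  rw [prod_mul_distrib, prod_ite_mem, prod_ite_mem, union_inter_cancel_left,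
    union_inter_cancel_right, ramanujanWeight, ramanujanWeight]

lemma periodic_ramanujanFactor (p : ℕ) : Periodic (ramanujanFactor p) p :=
  periodic_ite_dvd p _ _

lemma periodic_ramanujanWeight_mul (s t : Finset ℕ) :
    Periodic (fun n ↦ ramanujanWeight s n * ramanujanWeight t n) (∏ p ∈ s ∪ t, p) := by
  simp only [ramanujanWeight_mul]
  exact periodic_prod fun p _ n ↦ by simp only [periodic_ramanujanFactor p n]

lemma expect_ramanujanWeight_mul (hs : ∀ p ∈ s, p.Prime) (ht : ∀ p ∈ t, p.Prime) :
    𝔼 n ∈ range (∏ p ∈ s ∪ t, p), ramanujanWeight s n * ramanujanWeight t n =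
      if s = t then ∏ p ∈ s, ((p : ℝ) - 1)⁻¹ else 0 := by
  simp only [ramanujanWeight_mul]
  rw [expect_range_prod (fun p hp ↦ (mem_union.1 hp).elim (hs p) (ht p))
    fun p _ n ↦ by simp only [periodic_ramanujanFactor p n]]
  split_ifs with hst
  · subst hst
    rw [union_self]
    refine prod_congr rfl fun p hp ↦ ?_
    simpa only [if_pos hp, ← sq] using expect_sq_ramanujanFactor (hs p hp)
  · obtain ⟨p, hp⟩ := symmDiff_nonempty.2 hst
    obtain ⟨hps, hpt⟩ | ⟨hpt, hps⟩ := mem_symmDiff.1 hp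
    · refine prod_eq_zero (mem_union_left _ hps) ?_
      simpa only [if_pos hps, if_neg hpt, mul_one] using expect_ramanujanFactor (hs p hps)
    · refine prod_eq_zero (mem_union_right _ hpt) ?_
      simpa only [if_neg hps, if_pos hpt, one_mul] using expect_ramanujanFactor (ht p hpt)

end RamanujanWeights

section LargeSieve

variable {s t : Finset ℕ} {M D : ℕ} {T : ℕ → ℝ} {B : ℝ}

/-- The finite sets of primes not dividing `M` with product at most `D`, that is, the squarefree
moduli up to `D` that are coprime to `M`. -/
def sieveSupport (M D : ℕ) : Finset (Finset ℕ) :=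
  {s ∈ powerset {p ∈ Nat.primesLE D | ¬ p ∣ M} | ∏ p ∈ s, p ≤ D}

/-- The sum of `1 / φ(m)` over the squarefree `m ≤ D` coprime to `M`, which is the sieving gain of
Selberg's sieve. -/
noncomputable def sieveMass (M D : ℕ) : ℝ := ∑ s ∈ sieveSupport M D, ∏ p ∈ s, ((p : ℝ) - 1)⁻¹

lemma mem_sieveSupport :
    s ∈ sieveSupport M D ↔ (∀ p ∈ s, p.Prime ∧ ¬ p ∣ M) ∧ ∏ p ∈ s, p ≤ D := by
  simp only [sieveSupport, mem_filter, mem_powerset, and_congr_left_iff]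
  intro hD
  constructor
  · intro h p hp
    obtain ⟨hpD, hpM⟩ := mem_filter.1 (h hp)
    exact ⟨Nat.prime_of_mem_primesLE hpD, hpM⟩
  · intro h p hp
    have hpD : p ≤ ∏ p ∈ s, p :=
      single_le_prod' (f := fun p ↦ p) (fun q hq ↦ (h q hq).1.pos) hp
    exact mem_filter.2 ⟨Nat.mem_primesLE.2 ⟨hpD.trans hD, (h p hp).1⟩, (h p hp).2⟩

lemma card_sieveSupport_le (M D : ℕ) : #(sieveSupport M D) ≤ D := by
  suffices #(sieveSupport M D) ≤ #(Icc 1 D) by simpa using this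
  refine card_le_card_of_injOn (fun s ↦ ∏ p ∈ s, p) (fun s hs ↦ ?_) fun s hs t ht hst ↦ ?_
  · obtain ⟨hs, hsD⟩ := mem_sieveSupport.1 hs
    exact mem_Icc.2 ⟨prod_pos fun p hp ↦ (hs p hp).1.pos, hsD⟩
  · have hs := (mem_sieveSupport.1 hs).1
    have ht := (mem_sieveSupport.1 ht).1
    rw [← Nat.primeFactors_prod fun p hp ↦ (hs p hp).1, show ∏ p ∈ s, p = ∏ p ∈ t, p from hst,
      Nat.primeFactors_prod fun p hp ↦ (ht p hp).1]

lemma one_le_sieveMass (hD : 1 ≤ D) : 1 ≤ sieveMass M D := by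
  have nonneg (s) (hs : s ∈ sieveSupport M D) : 0 ≤ ∏ p ∈ s, ((p : ℝ) - 1)⁻¹ :=
    prod_nonneg fun p hp ↦ inv_nonneg.2 <| sub_nonneg.2 <|
      mod_cast ((mem_sieveSupport.1 hs).1 p hp).1.one_lt.le
  have empty_mem : ∅ ∈ sieveSupport M D := mem_sieveSupport.2 (by simpa using hD)
  simpa [sieveMass] using single_le_sum nonneg empty_mem

lemma abs_sum_mul_ramanujanWeight_mul_sub_le (hM : 0 < M) (hT : Periodic T M)
    (hB : ∀ n, |T n| ≤ B) (hs : s ∈ sieveSupport M D) (ht : t ∈ sieveSupport M D) (N : ℕ) :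
    |∑ n ∈ range N, T n * (ramanujanWeight s n * ramanujanWeight t n) -
        N * ((𝔼 n ∈ range M, T n) * if s = t then ∏ p ∈ s, ((p : ℝ) - 1)⁻¹ else 0)| ≤
      2 * (M * D ^ 2) * B := by
  obtain ⟨hs, hsD⟩ := mem_sieveSupport.1 hs
  obtain ⟨ht, htD⟩ := mem_sieveSupport.1 ht
  have hs_prime (p) (hp : p ∈ s) := (hs p hp).1
  have ht_prime (p) (hp : p ∈ t) := (ht p hp).1
  set K := ∏ p ∈ s ∪ t, p
  have hst (p) (hp : p ∈ s ∪ t) : p.Prime ∧ ¬ p ∣ M := (mem_union.1 hp).elim (hs p) (ht p)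
  have hK : 0 < K := prod_pos fun p hp ↦ (hst p hp).1.pos
  have hKD : K ≤ D ^ 2 :=
    calc K ≤ K * ∏ p ∈ s ∩ t, p :=
          Nat.le_mul_of_pos_right _ (prod_pos fun p hp ↦ (hs_prime p (mem_inter.1 hp).1).pos)
      _ = (∏ p ∈ s, p) * ∏ p ∈ t, p := prod_union_inter
      _ ≤ D * D := Nat.mul_le_mul hsD htD
      _ = D ^ 2 := (sq D).symm
  have hMK : M.Coprime K := Nat.Coprime.prod_right fun p hp ↦
    ((hst p hp).1.coprime_iff_not_dvd.2 (hst p hp).2).symm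
  have bounded (n : ℕ) : |T n * (ramanujanWeight s n * ramanujanWeight t n)| ≤ B := by
    rw [abs_mul, abs_mul]
    refine (mul_le_of_le_one_right (abs_nonneg _) ?_).trans (hB n)
    exact mul_le_one₀ (abs_ramanujanWeight_le_one hs_prime n) (abs_nonneg _)
      (abs_ramanujanWeight_le_one ht_prime n)
  have periodic : Periodic (fun n ↦ T n * (ramanujanWeight s n * ramanujanWeight t n)) (M * K) :=
    (periodic_of_dvd hT (dvd_mul_right _ _)).mul
      (periodic_of_dvd (periodic_ramanujanWeight_mul s t) (dvd_mul_left _ _))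
  have mean := expect_range_mul_of_coprime hM hK hMK hT (periodic_ramanujanWeight_mul s t)
  rw [expect_ramanujanWeight_mul hs_prime ht_prime] at mean
  rw [← mean]
  refine (abs_sum_range_sub_mul_expect_le (Nat.mul_pos hM hK) periodic bounded N).trans ?_
  have := (abs_nonneg _).trans (hB 0)
  gcongr
  exact_mod_cast Nat.mul_le_mul_left M hKD

lemma sum_mul_sq_sum_ramanujanWeight_le (hM : 0 < M) (hT : Periodic T M) (hB : ∀ n, |T n| ≤ B)
    (N : ℕ) :
    ∑ n ∈ range N, T n * (∑ s ∈ sieveSupport M D, ramanujanWeight s n) ^ 2 ≤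
      N * (𝔼 n ∈ range M, T n) * sieveMass M D + 2 * M * D ^ 4 * B := by
  set 𝒮 := sieveSupport M D
  set μ := 𝔼 n ∈ range M, T n
  have expand : ∑ n ∈ range N, T n * (∑ s ∈ 𝒮, ramanujanWeight s n) ^ 2 =
      ∑ s ∈ 𝒮, ∑ t ∈ 𝒮, ∑ n ∈ range N, T n * (ramanujanWeight s n * ramanujanWeight t n) := by
    simp only [sq, sum_mul_sum]
    simp only [mul_sum]
    rw [sum_comm]
    exact sum_congr rfl fun s _ ↦ sum_comm
  have pair (s) (hs : s ∈ 𝒮) (t) (ht : t ∈ 𝒮) :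
      ∑ n ∈ range N, T n * (ramanujanWeight s n * ramanujanWeight t n) ≤
        (if s = t then N * μ * ∏ p ∈ s, ((p : ℝ) - 1)⁻¹ else 0) + 2 * (M * D ^ 2) * B := by
    have := (abs_le.1 (abs_sum_mul_ramanujanWeight_mul_sub_le hM hT hB hs ht N)).2
    rw [← mul_assoc, mul_ite, mul_zero] at this
    linarith
  have card_le : (#𝒮 : ℝ) ≤ D := mod_cast card_sieveSupport_le M D
  have := (abs_nonneg _).trans (hB 0)
  calc ∑ n ∈ range N, T n * (∑ s ∈ 𝒮, ramanujanWeight s n) ^ 2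
      ≤ ∑ s ∈ 𝒮, ∑ t ∈ 𝒮,
          ((if s = t then N * μ * ∏ p ∈ s, ((p : ℝ) - 1)⁻¹ else 0) + 2 * (M * D ^ 2) * B) :=
        expand.trans_le (sum_le_sum fun s hs ↦ sum_le_sum fun t ht ↦ pair s hs t ht)
    _ = N * μ * sieveMass M D + #𝒮 * (#𝒮 * (2 * (M * D ^ 2) * B)) := by
        simp +contextual [sum_add_distrib, sieveMass, mul_sum, 𝒮]
    _ ≤ N * μ * sieveMass M D + D * (D * (2 * (M * D ^ 2) * B)) := by gcongr
    _ = N * μ * sieveMass M D + 2 * M * D ^ 4 * B := by ring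

end LargeSieve

section SieveMass

variable {s t A : Finset ℕ} {M D : ℕ}

/-- The completely multiplicative function `n ↦ n⁻¹`, in the form required by Euler products. -/
noncomputable def invHom : ℕ →* ℝ where
  toFun n := (n : ℝ)⁻¹
  map_one' := by simp
  map_mul' a b := by rw [Nat.cast_mul, mul_inv]

lemma sum_inv_le_prod_of_primeFactors_subset (ht : ∀ p ∈ t, p.Prime) (hA : ∀ n ∈ A, n ≠ 0)
    (hAt : ∀ n ∈ A, n.primeFactors ⊆ t) :
    ∑ n ∈ A, (n : ℝ)⁻¹ ≤ ∏ p ∈ t, (1 - (p : ℝ)⁻¹)⁻¹ := by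
  have norm_lt_one {p : ℕ} (hp : p.Prime) : ‖invHom p‖ < 1 := by
    rw [invHom, MonoidHom.coe_mk, OneHom.coe_mk, norm_inv, Real.norm_natCast]
    exact inv_lt_one_of_one_lt₀ (mod_cast hp.one_lt)
  have euler_product :=
    (EulerProduct.summable_and_hasSum_factoredNumbers_prod_filter_prime_geometric norm_lt_one t).2
  rw [filter_true_of_mem ht] at euler_product
  have factored (n) (hn : n ∈ A) : n ∈ Nat.factoredNumbers t :=
    Nat.mem_factoredNumbers_iff_primeFactors_subset.2 ⟨hA n hn, hAt n hn⟩
  rw [← sum_subtype_of_mem _ factored]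
  exact sum_le_hasSum _ (fun n _ ↦ inv_nonneg.2 (Nat.cast_nonneg (n : ℕ))) euler_product

/-- Divide each `n ∈ A` by the product of `s`. -/
lemma sum_inv_le_prod_mul_prod (hs : ∀ p ∈ s, p.Prime) (ht : ∀ p ∈ t, p.Prime)
    (hst : Disjoint s t) (hA : ∀ n ∈ A, n ≠ 0) (hAs : ∀ n ∈ A, s ⊆ n.primeFactors)
    (hAt : ∀ n ∈ A, n.primeFactors ⊆ s ∪ t) :
    ∑ n ∈ A, (n : ℝ)⁻¹ ≤ (∏ p ∈ s, ((p : ℝ) - 1)⁻¹) * ∏ p ∈ t, (1 - (p : ℝ)⁻¹)⁻¹ := by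
  set m := ∏ p ∈ s, p
  have dvd (n) (hn : n ∈ A) : m ∣ n :=
    (prod_dvd_prod_of_subset _ _ _ (hAs n hn)).trans (Nat.prod_primeFactors_dvd n)
  have injOn : Set.InjOn (· / m) (A : Set ℕ) := fun a ha b hb hab ↦ by
    rw [← Nat.div_mul_cancel (dvd a ha), ← Nat.div_mul_cancel (dvd b hb)]
    exact congrArg (· * m) hab
  have quotient_bound : ∑ n ∈ A, ((n / m : ℕ) : ℝ)⁻¹ ≤ ∏ p ∈ s ∪ t, (1 - (p : ℝ)⁻¹)⁻¹ := by
    rw [← sum_image (f := fun k : ℕ ↦ (k : ℝ)⁻¹) injOn]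
    refine sum_inv_le_prod_of_primeFactors_subset
      (fun p hp ↦ (mem_union.1 hp).elim (hs p) (ht p)) ?_ ?_ <;> rw [forall_mem_image]
    · exact fun n hn ↦ (Nat.div_ne_zero_iff_of_dvd (dvd n hn)).2
        ⟨hA n hn, (prod_pos fun p hp ↦ (hs p hp).pos).ne'⟩
    · exact fun n hn ↦ (Nat.primeFactors_mono (Nat.div_dvd_of_dvd (dvd n hn)) (hA n hn)).trans
        (hAt n hn)
  calc ∑ n ∈ A, (n : ℝ)⁻¹ = (m : ℝ)⁻¹ * ∑ n ∈ A, ((n / m : ℕ) : ℝ)⁻¹ := by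
        rw [mul_sum]
        refine sum_congr rfl fun n hn ↦ ?_
        rw [← mul_inv, ← Nat.cast_mul, Nat.mul_div_cancel' (dvd n hn)]
    _ ≤ (m : ℝ)⁻¹ * ∏ p ∈ s ∪ t, (1 - (p : ℝ)⁻¹)⁻¹ := by gcongr
    _ = _ := by
        rw [prod_union hst, ← mul_assoc, Nat.cast_prod, ← prod_inv_distrib, ← prod_mul_distrib]
        congr 1
        refine prod_congr rfl fun p hp ↦ ?_
        have : (p : ℝ) ≠ 0 := mod_cast (hs p hp).ne_zero
        rw [← mul_inv, mul_sub, mul_inv_cancel₀ this, mul_one]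

lemma log_mul_totient_div_le_sieveMass (hM : M ≠ 0) (D : ℕ) :
    Real.log (D + 1) * (M.totient / M) ≤ sieveMass M D := by
  set G : ℕ → Finset ℕ := fun n ↦ n.primeFactors \ M.primeFactors
  set V := ∏ p ∈ M.primeFactors, (1 - (p : ℝ)⁻¹)
  have V_eq : (M.totient / M : ℝ) = V := by
    have := congrArg (Rat.cast (K := ℝ)) (Nat.totient_eq_mul_prod_factors M)
    push_cast at this
    rw [this, mul_div_cancel_left₀ _ (Nat.cast_ne_zero.2 hM)]
  have V_pos : 0 < V := by
    rw [← V_eq]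
    have := Nat.totient_pos.2 (Nat.pos_of_ne_zero hM)
    positivity
  have maps_to : ∀ n ∈ Icc 1 D, G n ∈ sieveSupport M D := by
    intro n hn
    obtain ⟨hn1, hnD⟩ := mem_Icc.1 hn
    refine mem_sieveSupport.2 ⟨fun p hp ↦ ?_, ?_⟩
    · obtain ⟨hpn, hpM⟩ := mem_sdiff.1 hp
      have hp := Nat.prime_of_mem_primeFactors hpn
      exact ⟨hp, fun h ↦ hpM (Nat.mem_primeFactors.2 ⟨hp, h, hM⟩)⟩
    · exact (Nat.le_of_dvd hn1 ((prod_dvd_prod_of_subset _ _ _ sdiff_subset).trans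
        (Nat.prod_primeFactors_dvd n))).trans hnD
  have fiber (s) (hs : s ∈ sieveSupport M D) :
      ∑ n ∈ Icc 1 D with G n = s, (n : ℝ)⁻¹ ≤ (∏ p ∈ s, ((p : ℝ) - 1)⁻¹) * V⁻¹ := by
    have hs := (mem_sieveSupport.1 hs).1
    rw [← prod_inv_distrib]
    refine sum_inv_le_prod_mul_prod (fun p hp ↦ (hs p hp).1)
      (fun p ↦ Nat.prime_of_mem_primeFactors)
      (disjoint_left.2 fun p hp hpM ↦ (hs p hp).2 (Nat.dvd_of_mem_primeFactors hpM)) ?_ ?_ ?_ <;>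
      intro n hn <;> obtain ⟨hnD, rfl⟩ := mem_filter.1 hn
    · exact (zero_lt_one.trans_le (mem_Icc.1 hnD).1).ne'
    · exact sdiff_subset
    · exact subset_union_left.trans sdiff_union_self_eq_union.superset
  have harmonic_le : Real.log (D + 1) ≤ ∑ n ∈ Icc 1 D, (n : ℝ)⁻¹ := by
    simpa [harmonic_eq_sum_Icc] using log_add_one_le_harmonic D
  rw [V_eq, ← le_div_iff₀ V_pos]
  calc Real.log (D + 1) ≤ ∑ s ∈ sieveSupport M D, ∑ n ∈ Icc 1 D with G n = s, (n : ℝ)⁻¹ :=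
        harmonic_le.trans_eq (sum_fiberwise_of_maps_to maps_to _).symm
    _ ≤ ∑ s ∈ sieveSupport M D, (∏ p ∈ s, ((p : ℝ) - 1)⁻¹) * V⁻¹ := sum_le_sum fiber
    _ = sieveMass M D / V := by rw [← sum_mul, sieveMass, div_eq_mul_inv]

lemma expect_range_ite_coprime (M : ℕ) (T : ℕ → ℝ) :
    𝔼 n ∈ range M, (if M.Coprime n then T n else 0) =
      M.totient / M * 𝔼 n ∈ reducedResidues M, T n := by
  rw [expect_eq_sum_div_card, expect_eq_sum_div_card, ← sum_reducedResidues, card_range,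
    card_reducedResidues]
  obtain rfl | hM := eq_or_ne M 0
  · simp
  · have : (M.totient : ℝ) ≠ 0 :=
      Nat.cast_ne_zero.2 (Nat.totient_pos.2 (Nat.pos_of_ne_zero hM)).ne'
    field_simp

/-- At a prime `p > D` every weight takes its constant value, so that `(∑ s, w s p) ^ 2` is
`sieveMass M D ^ 2` there. -/
lemma sum_primes_mul_sieveMass_sq_le {T : ℕ → ℝ} {B : ℝ} (hM : 0 < M)
    (hMD : ∀ p ∈ M.primeFactors, p ≤ D) (hT : Periodic T M) (hT_nonneg : ∀ n, 0 ≤ T n)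
    (hB : ∀ n, T n ≤ B) (N : ℕ) :
    (∑ p ∈ Nat.primesLE N with D < p, T p) * sieveMass M D ^ 2 ≤
      (N + 1) * (M.totient / M * 𝔼 n ∈ reducedResidues M, T n) * sieveMass M D +
        2 * M * D ^ 4 * B := by
  let U (n : ℕ) : ℝ := if M.Coprime n then T n else 0
  have U_nonneg (n : ℕ) : 0 ≤ U n := ite_nonneg (hT_nonneg n) le_rfl
  have U_le (n : ℕ) : |U n| ≤ B := by
    rw [abs_of_nonneg (U_nonneg n)]
    exact (ite_le_sup ..).trans (sup_le (hB n) ((hT_nonneg n).trans (hB n)))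
  have U_prime (p : ℕ) (hp : p.Prime) (hDp : D < p) : U p = T p :=
    if_pos ((Nat.coprime_comm.1 (hp.coprime_iff_not_dvd.2 fun h ↦
      (hMD p (Nat.mem_primeFactors.2 ⟨hp, h, hM.ne'⟩)).not_gt hDp)))
  have weight_prime (p : ℕ) (hp : p.Prime) (hDp : D < p) :
      ∑ s ∈ sieveSupport M D, ramanujanWeight s p = sieveMass M D := by
    refine sum_congr rfl fun s hs ↦ ramanujanWeight_of_not_dvd fun q hq hqp ↦ ?_
    obtain ⟨hs, hsD⟩ := mem_sieveSupport.1 hs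
    have hqs : q ≤ ∏ q ∈ s, q := single_le_prod' (f := fun q ↦ q) (fun r hr ↦ (hs r hr).1.pos) hq
    exact hDp.not_ge (((Nat.prime_dvd_prime_iff_eq (hs q hq).1 hp).1 hqp) ▸ hqs.trans hsD)
  calc (∑ p ∈ Nat.primesLE N with D < p, T p) * sieveMass M D ^ 2
      = ∑ p ∈ Nat.primesLE N with D < p,
          U p * (∑ s ∈ sieveSupport M D, ramanujanWeight s p) ^ 2 := by
        rw [sum_mul]
        refine sum_congr rfl fun p hp ↦ ?_
        obtain ⟨hpN, hDp⟩ := mem_filter.1 hp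
        have hp := Nat.prime_of_mem_primesLE hpN
        rw [U_prime p hp hDp, weight_prime p hp hDp]
    _ ≤ ∑ n ∈ range (N + 1), U n * (∑ s ∈ sieveSupport M D, ramanujanWeight s n) ^ 2 :=
        sum_le_sum_of_subset_of_nonneg ((filter_subset _ _).trans (filter_subset _ _))
          fun n _ _ ↦ mul_nonneg (U_nonneg n) (sq_nonneg _)
    _ ≤ _ := by
        refine (sum_mul_sq_sum_ramanujanWeight_le hM (periodic_ite_coprime hT) U_le _).trans_eq ?_
        rw [expect_range_ite_coprime, Nat.cast_succ]

/-- A Brun–Titchmarsh inequality averaged over residue classes. -/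
theorem sum_primes_le_expect_reducedResidues {T : ℕ → ℝ} {B : ℝ} (hM : 0 < M)
    (hMD : ∀ p ∈ M.primeFactors, p ≤ D) (hD : 1 ≤ D) (hT : Periodic T M)
    (hT_nonneg : ∀ n, 0 ≤ T n) (hB : ∀ n, T n ≤ B) (N : ℕ) :
    ∑ p ∈ Nat.primesLE N with D < p, T p ≤
      (N + 1) * (𝔼 n ∈ reducedResidues M, T n) / Real.log (D + 1) + 2 * M * D ^ 4 * B := by
  set H := sieveMass M D
  set μ := 𝔼 n ∈ reducedResidues M, T n
  have hH : 1 ≤ H := one_le_sieveMass hD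
  have hμ : 0 ≤ μ := expect_nonneg fun n _ ↦ hT_nonneg n
  have hB_nonneg : 0 ≤ B := (hT_nonneg 0).trans (hB 0)
  have hlog : 0 < Real.log (D + 1) := Real.log_pos (by exact_mod_cast Nat.lt_succ_of_le hD)
  have density_le : M.totient / M * H ≤ H ^ 2 / Real.log (D + 1) := by
    rw [le_div_iff₀' hlog, sq, ← mul_assoc]
    exact mul_le_mul_of_nonneg_right (log_mul_totient_div_le_sieveMass hM.ne' D) (by positivity)
  refine le_of_mul_le_mul_right ?_ (show 0 < H ^ 2 by positivity)
  calc (∑ p ∈ Nat.primesLE N with D < p, T p) * H ^ 2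
      ≤ (N + 1) * μ * (M.totient / M * H) + 2 * M * D ^ 4 * B * 1 :=
        (sum_primes_mul_sieveMass_sq_le hM hMD hT hT_nonneg hB N).trans_eq (by ring)
    _ ≤ (N + 1) * μ * (H ^ 2 / Real.log (D + 1)) + 2 * M * D ^ 4 * B * H ^ 2 := by
        gcongr
        exact one_le_pow₀ hH
    _ = ((N + 1) * μ / Real.log (D + 1) + 2 * M * D ^ 4 * B) * H ^ 2 := by ring

end SieveMass

section Mertens

lemma pow_div_dvd_factorial {p : ℕ} (hp : 0 < p) (n : ℕ) : p ^ (n / p) ∣ n.factorial :=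
  calc p ^ (n / p) ∣ p.factorial ^ (n / p) := pow_dvd_pow_of_dvd (Nat.dvd_factorial hp le_rfl) _
    _ ∣ (n / p * p).factorial := by
        simpa using Nat.prod_factorial_dvd_factorial_sum (range (n / p)) fun _ ↦ p
    _ ∣ n.factorial := Nat.factorial_dvd_factorial (Nat.div_mul_le_self n p)

lemma sum_primesLE_log_div_le {n : ℕ} (hn : 1 ≤ n) :
    ∑ p ∈ Nat.primesLE n, Real.log p / p ≤ Real.log n + Real.log 4 := by
  have prod_dvd : ∏ p ∈ Nat.primesLE n, p ^ (n / p) ∣ n.factorial := by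
    refine prod_dvd_of_isRelPrime (fun p hp q hq hpq ↦ ?_) fun p hp ↦ ?_
    · exact Nat.coprime_iff_isRelPrime.1 (Nat.coprime_pow_primes _ _
        (Nat.prime_of_mem_primesLE hp) (Nat.prime_of_mem_primesLE hq) hpq)
    · exact pow_div_dvd_factorial (Nat.prime_of_mem_primesLE hp).pos n
  have pow_ne_zero (p) (hp : p ∈ Nat.primesLE n) : (p : ℝ) ^ (n / p) ≠ 0 :=
    pow_ne_zero _ (mod_cast (Nat.prime_of_mem_primesLE hp).ne_zero)
  have log_factorial_bound : ∑ p ∈ Nat.primesLE n, (n / p : ℕ) * Real.log p ≤ n * Real.log n := by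
    have prod_le : ∏ p ∈ Nat.primesLE n, (p : ℝ) ^ (n / p) ≤ (n : ℝ) ^ n := mod_cast
      (Nat.le_of_dvd n.factorial_pos prod_dvd).trans n.factorial_le_pow
    have := Real.log_le_log (lt_of_le_of_ne (by positivity) (prod_ne_zero_iff.2 pow_ne_zero).symm)
      prod_le
    simpa only [Real.log_prod pow_ne_zero, Real.log_pow] using this
  have theta_bound : ∑ p ∈ Nat.primesLE n, Real.log p ≤ Real.log 4 * n := by
    simpa only [Chebyshev.theta_eq_sum_primesLE_log] using
      Chebyshev.theta_le_log4_mul_x n.cast_nonneg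
  have floor_bound (p : ℕ) : n * (Real.log p / p) ≤ (n / p : ℕ) * Real.log p + Real.log p := by
    have : (n / p : ℝ) ≤ (n / p : ℕ) + 1 := by
      simpa [Nat.floor_div_natCast] using (Nat.lt_floor_add_one ((n : ℝ) / p)).le
    calc n * (Real.log p / p) = n / p * Real.log p := by ring
      _ ≤ ((n / p : ℕ) + 1) * Real.log p :=
        mul_le_mul_of_nonneg_right this (Real.log_natCast_nonneg p)
      _ = _ := by ring
  refine le_of_mul_le_mul_left ?_ (Nat.cast_pos (α := ℝ).2 hn)
  calc n * ∑ p ∈ Nat.primesLE n, Real.log p / p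
      ≤ ∑ p ∈ Nat.primesLE n, ((n / p : ℕ) * Real.log p + Real.log p) := by
        rw [mul_sum]
        exact sum_le_sum fun p _ ↦ floor_bound p
    _ ≤ n * Real.log n + Real.log 4 * n := by
        rw [sum_add_distrib]
        exact add_le_add log_factorial_bound theta_bound
    _ = n * (Real.log n + Real.log 4) := by ring

lemma mul_inv_sub_inv_le_log_sub_log {u v : ℝ} (hu : 0 < u) (hv : 0 < v) :
    u * (u⁻¹ - v⁻¹) ≤ Real.log v - Real.log u := by
  have := Real.log_le_sub_one_of_pos (div_pos hu hv)
  rw [Real.log_div hu.ne' hv.ne'] at this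
  rw [mul_sub, mul_inv_cancel₀ hu.ne', ← div_eq_mul_inv]
  linarith

/-- Summation by parts: with `A n = ∑ k ≤ n, a k`, the difference
`∑ k ≤ n, a k / log k - A n / log n` grows by `A n * (1 / log n - 1 / log (n + 1))`. -/
lemma exists_sum_div_log_le_log_log_add {a : ℕ → ℝ} {C : ℝ}
    (ha : ∀ n ≥ 2, ∑ k ∈ Icc 2 n, a k ≤ Real.log n + C) :
    ∃ K, ∀ n ≥ 2, ∑ k ∈ Icc 2 n, a k / Real.log k ≤ Real.log (Real.log n) + K := by
  set A : ℕ → ℝ := fun n ↦ ∑ k ∈ Icc 2 n, a k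
  set S : ℕ → ℝ := fun n ↦ ∑ k ∈ Icc 2 n, a k / Real.log k
  set E : ℕ → ℝ := fun n ↦ Real.log (Real.log n) - C / Real.log n
  have log_pos (n : ℕ) (hn : 2 ≤ n) : 0 < Real.log n := Real.log_pos (by exact_mod_cast hn)
  have induction_bound (n : ℕ) (hn : 2 ≤ n) :
      S n - A n / Real.log n ≤ E n + (S 2 - A 2 / Real.log 2 - E 2) := by
    induction n, hn using Nat.le_induction with
    | base => simp
    | succ n hn ih =>
      set u := Real.log n
      set v := Real.log (n + 1 : ℕ)
      have hu : 0 < u := log_pos n hn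
      have hv : 0 < v := log_pos (n + 1) (by omega)
      have hvu : v⁻¹ ≤ u⁻¹ := inv_anti₀ hu
        (Real.log_le_log (by positivity) (by exact_mod_cast n.le_succ))
      have increment : S (n + 1) - A (n + 1) / v = S n - A n / u + A n * (u⁻¹ - v⁻¹) := by
        simp only [S, A, sum_Icc_succ_top (show 2 ≤ n + 1 by omega)]
        ring
      have := mul_le_mul_of_nonneg_right (ha n hn) (sub_nonneg.2 hvu)
      have := mul_inv_sub_inv_le_log_sub_log hu hv
      have : E (n + 1) - E n = Real.log v - Real.log u + C * (u⁻¹ - v⁻¹) := by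
        simp only [E]
        ring
      linarith
  refine ⟨1 + (S 2 - A 2 / Real.log 2 - E 2), fun n hn ↦ ?_⟩
  have hlog := log_pos n hn
  have : A n / Real.log n ≤ 1 + C / Real.log n := by
    rw [div_le_iff₀ hlog, add_mul, div_mul_cancel₀ _ hlog.ne', one_mul]
    exact ha n hn
  have := induction_bound n hn
  simp only [E] at this ⊢
  linarith

lemma sum_primesLE_eq_sum_Icc (n : ℕ) (f : ℕ → ℝ) :
    ∑ p ∈ Nat.primesLE n, f p = ∑ k ∈ Icc 2 n, if k.Prime then f k else 0 := by
  rw [Nat.primesLE_eq_filter_Icc_two, sum_filter]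

lemma exists_sum_primesLE_inv_le :
    ∃ K : ℝ, ∀ n ≥ 2, ∑ p ∈ Nat.primesLE n, (p : ℝ)⁻¹ ≤ Real.log (Real.log n) + K := by
  obtain ⟨K, hK⟩ := exists_sum_div_log_le_log_log_add (C := Real.log 4)
    (a := fun k ↦ if k.Prime then Real.log k / k else 0) fun n hn ↦ by
      rw [← sum_primesLE_eq_sum_Icc]
      exact sum_primesLE_log_div_le (one_le_two.trans hn)
  refine ⟨K, fun n hn ↦ ?_⟩
  rw [sum_primesLE_eq_sum_Icc]
  refine (sum_congr rfl fun k hk ↦ ?_).trans_le (hK n hn)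
  have : Real.log k ≠ 0 := (Real.log_pos (by exact_mod_cast (mem_Icc.1 hk).1)).ne'
  rw [ite_div, zero_div, div_right_comm, div_self this, one_div]

lemma sum_Icc_inv_sub_one_sub_inv_le_one (n : ℕ) :
    ∑ k ∈ Icc 2 n, (((k : ℝ) - 1)⁻¹ - (k : ℝ)⁻¹) ≤ 1 := by
  obtain hn | hn := lt_or_ge n 2
  · simp [Icc_eq_empty_of_lt hn]
  have telescope : ∑ k ∈ Icc 2 n, (((k : ℝ) - 1)⁻¹ - (k : ℝ)⁻¹) = 1 - (n : ℝ)⁻¹ := by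
    induction n, hn using Nat.le_induction with
    | base => norm_num
    | succ n hn ih =>
      rw [sum_Icc_succ_top (by omega), ih]
      push_cast
      ring
  rw [telescope]
  exact sub_le_self _ (by positivity)

lemma exists_sum_primesLE_inv_sub_one_le :
    ∃ K : ℝ, ∀ n ≥ 2, ∑ p ∈ Nat.primesLE n, ((p : ℝ) - 1)⁻¹ ≤ Real.log (Real.log n) + K := by
  obtain ⟨K, hK⟩ := exists_sum_primesLE_inv_le
  refine ⟨K + 1, fun n hn ↦ ?_⟩
  have : ∑ p ∈ Nat.primesLE n, (((p : ℝ) - 1)⁻¹ - (p : ℝ)⁻¹) ≤ 1 := by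
    rw [Nat.primesLE_eq_filter_Icc_two]
    refine (sum_le_sum_of_subset_of_nonneg (filter_subset _ _) fun k hk _ ↦ ?_).trans
      (sum_Icc_inv_sub_one_sub_inv_le_one n)
    have : (2 : ℝ) ≤ k := by exact_mod_cast (mem_Icc.1 hk).1
    exact sub_nonneg.2 (inv_anti₀ (by linarith) (by linarith))
  rw [sum_sub_distrib] at this
  linarith [hK n hn]

lemma log_log_le_sum_primesLE_inv_sub_one {n : ℕ} (hn : 1 ≤ n) :
    Real.log (Real.log (n + 1)) ≤ ∑ p ∈ Nat.primesLE n, ((p : ℝ) - 1)⁻¹ := by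
  have euler_product : Real.log (n + 1) ≤ ∏ p ∈ Nat.primesLE n, (1 - (p : ℝ)⁻¹)⁻¹ := by
    have harmonic_le : Real.log (n + 1) ≤ ∑ k ∈ Icc 1 n, (k : ℝ)⁻¹ := by
      simpa [harmonic_eq_sum_Icc] using log_add_one_le_harmonic n
    refine harmonic_le.trans (sum_inv_le_prod_of_primeFactors_subset
      (fun p ↦ Nat.prime_of_mem_primesLE) (fun k hk ↦ ?_) fun k hk p hp ↦ ?_)
    · exact (zero_lt_one.trans_le (mem_Icc.1 hk).1).ne'
    · exact Nat.mem_primesLE.2 ⟨(Nat.le_of_mem_primeFactors hp).trans (mem_Icc.1 hk).2,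
        Nat.prime_of_mem_primeFactors hp⟩
  have factor_pos (p) (hp : p ∈ Nat.primesLE n) : 0 < (1 - (p : ℝ)⁻¹)⁻¹ :=
    inv_pos.2 (sub_pos.2 (inv_lt_one_of_one_lt₀ (mod_cast Nat.one_lt_of_mem_primesLE hp)))
  calc Real.log (Real.log (n + 1)) ≤ Real.log (∏ p ∈ Nat.primesLE n, (1 - (p : ℝ)⁻¹)⁻¹) :=
        Real.log_le_log (Real.log_pos (by exact_mod_cast Nat.lt_succ_of_le hn)) euler_product
    _ = ∑ p ∈ Nat.primesLE n, Real.log (1 - (p : ℝ)⁻¹)⁻¹ :=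
        Real.log_prod fun p hp ↦ (factor_pos p hp).ne'
    _ ≤ ∑ p ∈ Nat.primesLE n, ((p : ℝ) - 1)⁻¹ := by
        refine sum_le_sum fun p hp ↦ (Real.log_le_sub_one_of_pos (factor_pos p hp)).trans_eq ?_
        have hp1 : (1 : ℝ) < p := mod_cast Nat.one_lt_of_mem_primesLE hp
        have : (p : ℝ) - 1 ≠ 0 := by linarith
        have : (p : ℝ) ≠ 0 := by linarith
        rw [show 1 - (p : ℝ)⁻¹ = (p - 1) / p by field_simp]
        field_simp
        ring

end Mertens

section ShiftedPrimes

variable {c : ℤ} {q Y D : ℕ}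

lemma residueDensity_le (c : ℤ) (hq : 1 ≤ q) : residueDensity c q ≤ ((q : ℝ) - 1)⁻¹ := by
  have : (1 : ℝ) ≤ q := mod_cast hq
  unfold residueDensity
  split_ifs
  exacts [inv_nonneg.2 (sub_nonneg.2 this), le_rfl]

lemma meanShiftedOmega_nonneg (c : ℤ) (Y : ℕ) : 0 ≤ meanShiftedOmega c Y :=
  sum_nonneg fun _ hq ↦ residueDensity_nonneg c (Nat.one_lt_of_mem_primesLE hq).le

lemma meanShiftedOmega_le (c : ℤ) (Y : ℕ) :
    meanShiftedOmega c Y ≤ ∑ q ∈ Nat.primesLE Y, ((q : ℝ) - 1)⁻¹ :=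
  sum_le_sum fun _ hq ↦ residueDensity_le c (Nat.one_lt_of_mem_primesLE hq).le

lemma sum_primesLE_inv_sub_one_le_meanShiftedOmega_add (hc : c ≠ 0) (Y : ℕ) :
    ∑ q ∈ Nat.primesLE Y, ((q : ℝ) - 1)⁻¹ ≤ meanShiftedOmega c Y + #c.natAbs.primeFactors := by
  have termwise (q) (hq : q ∈ Nat.primesLE Y) :
      ((q : ℝ) - 1)⁻¹ ≤ residueDensity c q + if q ∈ c.natAbs.primeFactors then 1 else 0 := by
    have hq_prime := Nat.prime_of_mem_primesLE hq
    have : (1 : ℝ) ≤ q - 1 := le_sub_iff_add_le.2 (by exact_mod_cast hq_prime.two_le)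
    have mem_iff : q ∈ c.natAbs.primeFactors ↔ (q : ℤ) ∣ c := by
      simp [hq_prime, hc, Int.natCast_dvd]
    simp only [residueDensity, mem_iff]
    split_ifs
    · simpa using inv_le_one_of_one_le₀ this
    · simp
  refine (sum_le_sum termwise).trans ?_
  rw [sum_add_distrib, sum_boole]
  gcongr
  · exact le_rfl
  · exact fun q hq ↦ (mem_filter.1 hq).2

lemma exists_abs_meanShiftedOmega_sub_log_log_le (hc : c ≠ 0) :
    ∃ K : ℝ, ∀ y ≥ 2, |meanShiftedOmega c ⌊y⌋₊ - Real.log (Real.log y)| ≤ K := by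
  obtain ⟨K, hK⟩ := exists_sum_primesLE_inv_sub_one_le
  refine ⟨max K #c.natAbs.primeFactors, fun y hy ↦ abs_le.2 ⟨?_, ?_⟩⟩
  · have : Real.log (Real.log y) ≤ Real.log (Real.log (⌊y⌋₊ + 1)) :=
      Real.log_le_log (Real.log_pos (by linarith))
        (Real.log_le_log (by linarith) (Nat.lt_floor_add_one y).le)
    have := log_log_le_sum_primesLE_inv_sub_one (Nat.le_floor (by push_cast; linarith) : 1 ≤ ⌊y⌋₊)
    have := sum_primesLE_inv_sub_one_le_meanShiftedOmega_add hc ⌊y⌋₊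
    have := le_max_right K #c.natAbs.primeFactors
    linarith
  · have hy2 : 2 ≤ ⌊y⌋₊ := Nat.le_floor hy
    have hy2r : (2 : ℝ) ≤ ⌊y⌋₊ := mod_cast hy2
    have : Real.log (Real.log ⌊y⌋₊) ≤ Real.log (Real.log y) :=
      Real.log_le_log (Real.log_pos (by linarith))
        (Real.log_le_log (by linarith) (Nat.floor_le (by linarith)))
    have := meanShiftedOmega_le c ⌊y⌋₊
    have := le_max_left K #c.natAbs.primeFactors
    linarith [hK _ hy2]

theorem sum_primesLE_sq_shiftedOmega_sub_le (c : ℤ) (hYD : Y ≤ D) (hD : 1 ≤ D) (N : ℕ) (L : ℝ) :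
    ∑ p ∈ Nat.primesLE N, ((shiftedOmega c Y p : ℝ) - L) ^ 2 ≤
      (N + 1) * (meanShiftedOmega c Y + (meanShiftedOmega c Y - L) ^ 2) / Real.log (D + 1) +
        3 * D ^ 4 * 4 ^ Y * (Y + |L|) ^ 2 := by
  set T : ℕ → ℝ := fun n ↦ ((shiftedOmega c Y n : ℝ) - L) ^ 2
  set B : ℝ := (Y + |L|) ^ 2
  have T_le (n : ℕ) : T n ≤ B := sq_shiftedOmega_sub_le c Y n L
  have hlog : 0 < Real.log (D + 1) := Real.log_pos (by exact_mod_cast Nat.lt_succ_of_le hD)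
  have primorial_le : (primorial Y : ℝ) ≤ 4 ^ Y := mod_cast primorial_le_four_pow Y
  have large_primes : ∑ p ∈ Nat.primesLE N with D < p, T p ≤
      (N + 1) * (meanShiftedOmega c Y + (meanShiftedOmega c Y - L) ^ 2) / Real.log (D + 1) +
        2 * 4 ^ Y * D ^ 4 * B := by
    refine (sum_primes_le_expect_reducedResidues (primorial_pos Y) (fun p hp ↦ ?_) hD
      (fun n ↦ by simp only [periodic_shiftedOmega c Y n]) (fun n ↦ sq_nonneg _) T_le N).trans ?_
    · rw [primeFactors_primorial] at hp
      exact (Nat.le_of_mem_primesLE hp).trans hYD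
    · gcongr
      exact expect_reducedResidues_sq_shiftedOmega_sub_le c Y L
  have small_primes : ∑ p ∈ Nat.primesLE N with ¬ D < p, T p ≤ D ^ 4 * 4 ^ Y * B := by
    have subset : {p ∈ Nat.primesLE N | ¬ D < p} ⊆ Icc 1 D := fun p hp ↦ by
      obtain ⟨hpN, hpD⟩ := mem_filter.1 hp
      exact mem_Icc.2 ⟨(Nat.one_lt_of_mem_primesLE hpN).le, not_lt.1 hpD⟩
    calc ∑ p ∈ Nat.primesLE N with ¬ D < p, T p ≤ ∑ p ∈ Icc 1 D, T p :=
          sum_le_sum_of_subset_of_nonneg subset fun _ _ _ ↦ sq_nonneg _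
      _ ≤ D * B := by simpa using sum_le_card_nsmul (Icc 1 D) T B fun n _ ↦ T_le n
      _ ≤ D ^ 4 * 4 ^ Y * B := by
          have : (D : ℝ) ≤ D ^ 4 := le_self_pow₀ (mod_cast hD) (by norm_num)
          have : (1 : ℝ) ≤ 4 ^ Y := one_le_pow₀ (by norm_num)
          gcongr
          nlinarith
  rw [← sum_filter_add_sum_filter_not _ (D < ·)]
  linarith

end ShiftedPrimes

section Asymptotics

lemma eventually_div_log_le_two_mul_primeCounting :
    ∀ᶠ x : ℝ in atTop, x / Real.log x ≤ 2 * Nat.primeCounting ⌊x⌋₊ := by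
  filter_upwards [Real.isLittleO_log_id_atTop.bound (c := 1 / 100) (by norm_num),
    eventually_ge_atTop 100] with x hlog hx
  have psi_ge := Chebyshev.psi_ge' (x := x) (by linarith)
  have psi_le := Chebyshev.psi_le_primeCounting_mul_log' x
  have log_add_two_le : Real.log (x + 2) ≤ Real.log x + 1 := by
    have := Real.log_le_log (by linarith) (show x + 2 ≤ x * 2 by linarith)
    rw [Real.log_mul (by linarith) (by norm_num)] at this
    linarith [Real.log_two_lt_d9]
  have log_le : Real.log x ≤ 1 / 100 * x := by
    simpa [abs_of_nonneg (Real.log_nonneg (show 1 ≤ x by linarith)),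
      abs_of_nonneg (show 0 ≤ x by linarith)] using hlog
  rw [div_le_iff₀ (Real.log_pos (by linarith))]
  nlinarith [Real.log_two_gt_d9]

lemma abs_log_log_le {y : ℝ} (hy : 2 ≤ y) : |Real.log (Real.log y)| ≤ y := by
  have log_two := Real.log_two_gt_d9
  have log_ge : 1 / 2 ≤ Real.log y := by linarith [Real.log_le_log two_pos hy]
  have inv_le : (Real.log y)⁻¹ ≤ 2 := by simpa using inv_anti₀ (by norm_num) log_ge
  refine abs_le.2 ⟨?_, ?_⟩
  · linarith [Real.one_sub_inv_le_log_of_pos (show 0 < Real.log y by linarith)]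
  · linarith [Real.log_le_self (show 0 ≤ Real.log y by linarith),
      Real.log_le_self (show 0 ≤ y by linarith)]

lemma four_pow_floor_le_exp {y : ℝ} (hy : 0 ≤ y) : (4 : ℝ) ^ ⌊y⌋₊ ≤ Real.exp (2 * y) := by
  have four_le : (4 : ℝ) ≤ Real.exp 2 := by
    have := Real.add_one_le_exp 1
    rw [show (2 : ℝ) = 1 + 1 by norm_num, Real.exp_add]
    nlinarith
  calc (4 : ℝ) ^ ⌊y⌋₊ ≤ Real.exp 2 ^ ⌊y⌋₊ := by gcongr
    _ = Real.exp (⌊y⌋₊ * 2) := (Real.exp_nat_mul ..).symm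
    _ ≤ Real.exp (2 * y) := Real.exp_le_exp.2 (by linarith [Nat.floor_le hy])

lemma eventually_sieve_error_le :
    ∀ᶠ x : ℝ in atTop, ∀ y ≥ 2, y ≤ Real.log x / 8 →
      3 * (⌊x ^ (1 / 8 : ℝ)⌋₊ : ℝ) ^ 4 * 4 ^ ⌊y⌋₊ * (⌊y⌋₊ + |Real.log (Real.log y)|) ^ 2 ≤
        x / Real.log x := by
  filter_upwards [(isLittleO_log_rpow_rpow_atTop 3 (show (0 : ℝ) < 1 / 4 by norm_num)).bound
    zero_lt_one, eventually_gt_atTop 1] with x hlog hx y hy hyx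
  have hx0 : 0 < x := by linarith
  have hlog0 : 0 < Real.log x := Real.log_pos hx
  have log_pow_le : Real.log x ^ 3 ≤ x ^ (1 / 4 : ℝ) := by
    have : Real.log x ^ (3 : ℝ) = Real.log x ^ 3 := mod_cast Real.rpow_natCast _ 3
    simpa [this, abs_of_pos hlog0, abs_of_pos (Real.rpow_pos_of_pos hx0 _)] using hlog
  have level_le : (⌊x ^ (1 / 8 : ℝ)⌋₊ : ℝ) ^ 4 ≤ x ^ (1 / 2 : ℝ) := by
    calc (⌊x ^ (1 / 8 : ℝ)⌋₊ : ℝ) ^ 4 ≤ (x ^ (1 / 8 : ℝ)) ^ 4 := by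
          gcongr
          exact Nat.floor_le (by positivity)
      _ = x ^ (1 / 2 : ℝ) := by
          rw [← Real.rpow_natCast, ← Real.rpow_mul hx0.le]
          norm_num
  have four_pow_le : (4 : ℝ) ^ ⌊y⌋₊ ≤ x ^ (1 / 4 : ℝ) := by
    refine (four_pow_floor_le_exp (by linarith)).trans ?_
    rw [Real.rpow_def_of_pos hx0]
    exact Real.exp_le_exp.2 (by linarith)
  have sup_le : ⌊y⌋₊ + |Real.log (Real.log y)| ≤ Real.log x / 4 := by
    linarith [Nat.floor_le (show 0 ≤ y by linarith), abs_log_log_le hy]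
  rw [le_div_iff₀ hlog0]
  calc 3 * (⌊x ^ (1 / 8 : ℝ)⌋₊ : ℝ) ^ 4 * 4 ^ ⌊y⌋₊ * (⌊y⌋₊ + |Real.log (Real.log y)|) ^ 2 *
        Real.log x
      ≤ 3 * x ^ (1 / 2 : ℝ) * x ^ (1 / 4 : ℝ) * (Real.log x / 4) ^ 2 * Real.log x := by gcongr
    _ = 3 / 16 * (x ^ (1 / 2 : ℝ) * x ^ (1 / 4 : ℝ) * Real.log x ^ 3) := by ring
    _ ≤ 1 * (x ^ (1 / 2 : ℝ) * x ^ (1 / 4 : ℝ) * x ^ (1 / 4 : ℝ)) := by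
        gcongr
        norm_num
    _ = x := by
        rw [one_mul, ← Real.rpow_add hx0, ← Real.rpow_add hx0]
        norm_num

theorem exists_eventually_sum_sq_shiftedOmega_sub_le {c : ℤ} (hc : c ≠ 0) :
    ∃ K : ℝ, ∀ᶠ x : ℝ in atTop, ∀ y ≥ 2, y ≤ Real.log x / 8 →
      ∑ p ∈ Nat.primesLE ⌊x⌋₊, ((shiftedOmega c ⌊y⌋₊ p : ℝ) - Real.log (Real.log y)) ^ 2 ≤
        (32 * Real.log (Real.log y) + K) * Nat.primeCounting ⌊x⌋₊ := by
  obtain ⟨K, hK⟩ := exists_abs_meanShiftedOmega_sub_log_log_le hc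
  refine ⟨32 * (K + K ^ 2) + 2, ?_⟩
  filter_upwards [eventually_sieve_error_le, eventually_div_log_le_two_mul_primeCounting,
    eventually_ge_atTop 1] with x error_le hπ hx y hy hyx
  set L := Real.log (Real.log y)
  set R := meanShiftedOmega c ⌊y⌋₊
  set D := ⌊x ^ (1 / 8 : ℝ)⌋₊
  have hlog : 0 < Real.log x := by linarith
  have log_rpow : Real.log (x ^ (1 / 8 : ℝ)) = Real.log x / 8 := by
    rw [Real.log_rpow (by linarith)]
    ring
  have hyD : ⌊y⌋₊ ≤ D := Nat.floor_le_floor <| hyx.trans <|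
    log_rpow ▸ Real.log_le_self (by positivity)
  have hD : 1 ≤ D := (Nat.le_floor (by push_cast; linarith)).trans hyD
  have log_level_ge : Real.log x / 8 ≤ Real.log (D + 1) :=
    log_rpow ▸ Real.log_le_log (by positivity) (Nat.lt_floor_add_one _).le
  have moment_le : R + (R - L) ^ 2 ≤ L + (K + K ^ 2) := by
    linarith [(abs_le.1 (hK y hy)).2, sq_le_sq' (abs_le.1 (hK y hy)).1 (abs_le.1 (hK y hy)).2]
  have moment_nonneg : 0 ≤ R + (R - L) ^ 2 :=
    add_nonneg (meanShiftedOmega_nonneg c _) (sq_nonneg _)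
  have bound_nonneg : 0 ≤ L + (K + K ^ 2) := moment_nonneg.trans moment_le
  have floor_le : (⌊x⌋₊ : ℝ) + 1 ≤ 2 * x := by linarith [Nat.floor_le (show 0 ≤ x by linarith)]
  calc ∑ p ∈ Nat.primesLE ⌊x⌋₊, ((shiftedOmega c ⌊y⌋₊ p : ℝ) - L) ^ 2
      ≤ (⌊x⌋₊ + 1) * (R + (R - L) ^ 2) / Real.log (D + 1) + x / Real.log x :=
        (sum_primesLE_sq_shiftedOmega_sub_le c hyD hD _ L).trans
          (add_le_add_right (error_le y hy hyx) _)
    _ ≤ 2 * x * (L + (K + K ^ 2)) / (Real.log x / 8) + x / Real.log x := by gcongr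
    _ = (16 * (L + (K + K ^ 2)) + 1) * (x / Real.log x) := by
        field_simp
        ring
    _ ≤ (16 * (L + (K + K ^ 2)) + 1) * (2 * Nat.primeCounting ⌊x⌋₊) := by
        gcongr
    _ = _ := by ring

lemma one_le_log_log {y : ℝ} (hy : Real.exp (Real.exp 1) ≤ y) : 1 ≤ Real.log (Real.log y) := by
  have := (Real.le_log_iff_exp_le ((Real.exp_pos _).trans_le hy)).2 hy
  exact (Real.le_log_iff_exp_le ((Real.exp_pos _).trans_le this)).2 this

theorem exists_eventually_sum_sq_shiftedOmega_sub_le_mul_log_log {c : ℤ} (hc : c ≠ 0) :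
    ∃ C : ℝ, 0 < C ∧ ∀ᶠ x : ℝ in atTop, ∀ y ≥ Real.exp (Real.exp 1), y ≤ Real.log x / 8 →
      ∑ p ∈ Nat.primesLE ⌊x⌋₊, ((shiftedOmega c ⌊y⌋₊ p : ℝ) - Real.log (Real.log y)) ^ 2 ≤
        C * Nat.primeCounting ⌊x⌋₊ * Real.log (Real.log y) := by
  obtain ⟨K, hK⟩ := exists_eventually_sum_sq_shiftedOmega_sub_le hc
  refine ⟨32 + |K|, by positivity, hK.mono fun x hx y hy hyx ↦ ?_⟩
  have two_le : 2 ≤ y := by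
    linarith [Real.add_one_le_exp (Real.exp 1), Real.add_one_le_exp 1]
  calc ∑ p ∈ Nat.primesLE ⌊x⌋₊, ((shiftedOmega c ⌊y⌋₊ p : ℝ) - Real.log (Real.log y)) ^ 2
      ≤ (32 * Real.log (Real.log y) + K) * Nat.primeCounting ⌊x⌋₊ := hx y two_le hyx
    _ ≤ (32 * Real.log (Real.log y) + |K| * Real.log (Real.log y)) * Nat.primeCounting ⌊x⌋₊ := by
        gcongr
        exact (le_abs_self K).trans (le_mul_of_one_le_right (abs_nonneg K) (one_le_log_log hy))
    _ = _ := by ring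

lemma eventually_log_log_le_log_div {a : ℝ} (ha : 0 < a) :
    ∀ᶠ x : ℝ in atTop, Real.log (Real.log x) ≤ Real.log x / a := by
  have := (Real.isLittleO_log_id_atTop.bound (inv_pos.2 ha)).and (eventually_ge_atTop 0)
  filter_upwards [Real.tendsto_log_atTop.eventually this] with x ⟨hlog, hx⟩
  rw [id, Real.norm_of_nonneg hx, inv_mul_eq_div] at hlog
  exact (Real.le_norm_self _).trans hlog

end Asymptotics

end TuranKubilius

theorem turan_kubilius_type_general (ℓ : ℕ) (hℓ : 0 < ℓ) :
    ∃ C : ℝ, 0 < C ∧ ∀ᶠ x : ℝ in atTop, ∀ y ≥ Real.exp (Real.exp 1), y ≤ Real.log x / 8 →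
      (∑ p ∈ (Finset.range (⌊x⌋₊ + 1)).filter (fun p => p.Prime ∧ ℓ < p),
          ((omegay y (p - ℓ) : ℝ) - Real.log (Real.log y)) ^ 2) ≤
        C * (Nat.primeCounting ⌊x⌋₊ : ℝ) * Real.log (Real.log y) ∧
      (∑ p ∈ (Finset.range (⌊x⌋₊ + 1)).filter Nat.Prime,
          ((omegay y (p + ℓ) : ℝ) - Real.log (Real.log y)) ^ 2) ≤
        C * (Nat.primeCounting ⌊x⌋₊ : ℝ) * Real.log (Real.log y) := by
  have hℓ0 : (ℓ : ℤ) ≠ 0 := mod_cast hℓ.ne'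
  obtain ⟨C, hC, bound_sub⟩ :=
    TuranKubilius.exists_eventually_sum_sq_shiftedOmega_sub_le_mul_log_log hℓ0
  obtain ⟨C', -, bound_add⟩ :=
    TuranKubilius.exists_eventually_sum_sq_shiftedOmega_sub_le_mul_log_log (neg_ne_zero.2 hℓ0)
  refine ⟨max C C', lt_max_of_lt_left hC, ?_⟩
  filter_upwards [bound_sub, bound_add] with x bound_sub bound_add y hy hyx
  have hy0 : 0 ≤ y := (Real.exp_pos _).le.trans hy
  have log_log_nonneg : 0 ≤ Real.log (Real.log y) :=
    zero_le_one.trans (TuranKubilius.one_le_log_log hy)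
  constructor
  · rw [← Finset.filter_filter]
    refine ((TuranKubilius.sum_sq_omegay_sub_le hy0 ℓ _ _).trans (bound_sub y hy hyx)).trans ?_
    gcongr
    exact le_max_left _ _
  · simp only [TuranKubilius.omegay_add_eq_shiftedOmega hy0 hℓ]
    refine (bound_add y hy hyx).trans ?_
    gcongr
    exact le_max_right _ _

theorem turan_kubilius_type (ℓ : ℕ) (hℓ : 0 < ℓ) :
    ∃ C : ℝ, 0 < C ∧ ∀ᶠ x : ℝ in atTop,
      (∑ p ∈ (Finset.range (⌊x⌋₊ + 1)).filter (fun p => p.Prime ∧ ℓ < p),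
          ((omegay (Real.log (Real.log x)) (p - ℓ) : ℝ) -
            Real.log (Real.log (Real.log (Real.log x)))) ^ 2) ≤
        C * (Nat.primeCounting ⌊x⌋₊ : ℝ) * Real.log (Real.log (Real.log (Real.log x))) ∧
      (∑ p ∈ (Finset.range (⌊x⌋₊ + 1)).filter Nat.Prime,
          ((omegay (Real.log (Real.log x)) (p + ℓ) : ℝ) -
            Real.log (Real.log (Real.log (Real.log x)))) ^ 2) ≤
        C * (Nat.primeCounting ⌊x⌋₊ : ℝ) * Real.log (Real.log (Real.log (Real.log x))) := by
  obtain ⟨C, hC, bound⟩ := turan_kubilius_type_general ℓ hℓ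
  refine ⟨C, hC, ?_⟩
  have log_log_tendsto := Real.tendsto_log_atTop.comp Real.tendsto_log_atTop
  filter_upwards [bound, log_log_tendsto.eventually_ge_atTop (Real.exp (Real.exp 1)),
    TuranKubilius.eventually_log_log_le_log_div (show (0 : ℝ) < 8 by norm_num)] with x hx hy hyx
  exact hx _ hy hyx
end

section
/- There exists a constant C > 0 such that for all sufficiently large real x, writing y = log log x, the number of primes p with 3 ≤ p ≤ x for which (p²−1)/φ(p²−1) > (log y)^{1/3} is at most C · π(x) / (log y)^{1/6}. In particular this count is o(π(x)). -/
open Filter Topology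

/-! Let `p ≤ x` be prime and `n = p ^ 2 - 1`. In the Euler product of `n / φ n` over the primes
`q ∣ n`, those with `q ≤ m` contribute at most `m` by telescoping, and those with `q > log x` only
a bounded factor, because `∑ log q ≤ log n ≤ 2 log x`. Hence if `n / φ n` exceeds a large constant
times `m`, then `∑ 1 / q > 1` over the prime factors `m < q ≤ log x` of `n`.

By Markov's inequality it is enough to bound the sum of these `∑ 1 / q` over all primes `p ≤ x`.
For fixed `q`, the condition `q ∣ p ^ 2 - 1` means `p ≡ ± 1` modulo `q`. The primes of a class
modulo `q` divide a product of terms of an arithmetic progression. That product is also divisible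
by the prime-to-`q` part of a factorial, which leaves room for only `O(π(x) / √q)` such primes. So
the sum is `O(π(x) ∑_{q > m} q ^ (-3 / 2)) = O(π(x) / √m)`. -/

section

open Finset Real
open scoped Nat

/-! ### Primes in a residue class -/

/-- The primes `p ≤ n` in the residue class `a` modulo `q`. -/
def primesInClass {q : ℕ} (n : ℕ) (a : ZMod q) : Finset ℕ :=
  (Nat.primesLE n).filter fun p : ℕ => (p : ZMod q) = a

theorem mem_primesInClass {q n p : ℕ} {a : ZMod q} :
    p ∈ primesInClass n a ↔ (p ≤ n ∧ p.Prime) ∧ (p : ZMod q) = a := by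
  rw [primesInClass, mem_filter, Nat.mem_primesLE]

/-- Modulo `M` the product is `q ^ N` times a product of `N` consecutive integers. -/
theorem dvd_prod_range_mul_add {M N q : ℕ} (hM : M ∣ N !) (hq : q.Coprime M) (a : ℕ) :
    M ∣ ∏ k ∈ range N, (q * k + a) := by
  have : NeZero M := ⟨ne_zero_of_dvd_ne_zero N.factorial_ne_zero hM⟩
  obtain ⟨b, hb⟩ : ∃ b : ℕ, (q * b : ZMod M) = a :=
    ⟨((q : ZMod M)⁻¹ * a).val, by
      rw [ZMod.natCast_zmod_val, ← mul_assoc, ZMod.coe_mul_inv_eq_one q hq, one_mul]⟩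
  have hprod : ((∏ k ∈ range N, (q * k + a) : ℕ) : ZMod M) =
      ((q ^ N * b.ascFactorial N : ℕ) : ZMod M) := by
    rw [Nat.ascFactorial_eq_prod_range]
    push_cast
    rw [← hb, ← card_range N, ← prod_const, card_range, ← prod_mul_distrib]
    exact prod_congr rfl fun k _ => by ring
  rw [← ZMod.natCast_eq_zero_iff, hprod, ZMod.natCast_eq_zero_iff]
  exact (hM.trans (Nat.factorial_dvd_ascFactorial b N)).mul_left _

theorem pow_factorization_factorial_le_two_pow {q : ℕ} (hq : q.Prime) (N : ℕ) :
    q ^ (N !).factorization q ≤ 2 ^ N := by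
  have hq_le : q ≤ 2 ^ (q - 1) := by
    have := Nat.lt_two_pow_self (n := q - 1)
    omega
  calc q ^ (N !).factorization q ≤ (2 ^ (q - 1)) ^ (N !).factorization q := by gcongr
    _ = 2 ^ ((q - 1) * (N !).factorization q) := (pow_mul ..).symm
    _ ≤ 2 ^ N := by
      gcongr
      · exact one_le_two
      · exact (Nat.sub_one_mul_factorization_factorial hq).trans_le (Nat.sub_le ..)

theorem prod_primesInClass_dvd {q n N : ℕ} {a : ZMod q} (hn : n < q * N) :
    ∏ p ∈ primesInClass n a, p ∣ ∏ k ∈ range N, (q * k + a.val) := by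
  refine prod_primes_dvd _ (fun p hp => (mem_primesInClass.1 hp).1.2.prime) fun p hp => ?_
  obtain ⟨⟨hpn, -⟩, rfl⟩ := mem_primesInClass.1 hp
  have hdiv : p / q ∈ range N := mem_range.2 (Nat.div_lt_of_lt_mul (hpn.trans_lt hn))
  convert dvd_prod_of_mem (fun k => q * k + (p : ZMod q).val) hdiv
  rw [ZMod.val_natCast, Nat.div_add_mod]

/-- The product is coprime to the part `M` of `N !` prime to `q`, and both divide
`∏ (q * k + a) ≤ q ^ N * N !`, where `N ! / M` is a power of `q` that is at most `2 ^ N`. -/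
theorem prod_primesInClass_le {q : ℕ} [hq : Fact q.Prime] {a : ZMod q} (ha : a ≠ 0) {n N : ℕ}
    (hn : n < q * N) :
    ∏ p ∈ primesInClass n a with N < p, p ≤ (2 * q) ^ N := by
  set P := {p ∈ primesInClass n a | N < p}
  set M := ordCompl[q] N !
  have hM : M ∣ N ! := Nat.ordCompl_dvd _ _
  have hcoprime : (∏ p ∈ P, p).Coprime M := Nat.Coprime.prod_left fun p hp => by
    obtain ⟨hp, hpN⟩ := mem_filter.1 hp
    have hp := (mem_primesInClass.1 hp).1.2
    refine Nat.Coprime.coprime_dvd_right hM ?_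
    rwa [hp.coprime_iff_not_dvd, hp.dvd_factorial, not_le]
  have hdvd : (∏ p ∈ P, p) * M ∣ ∏ k ∈ range N, (q * k + a.val) :=
    hcoprime.mul_dvd_of_dvd_of_dvd
      ((prod_dvd_prod_of_subset _ _ _ (filter_subset ..)).trans (prod_primesInClass_dvd hn))
      (dvd_prod_range_mul_add hM (Nat.coprime_ordCompl hq.out N.factorial_ne_zero) a.val)
  have hpos : 0 < ∏ k ∈ range N, (q * k + a.val) :=
    prod_pos fun k _ => Nat.add_pos_right _ (ZMod.val_pos.2 ha)
  refine Nat.le_of_mul_le_mul_right ?_ (Nat.ordCompl_pos q N.factorial_ne_zero)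
  calc (∏ p ∈ P, p) * M ≤ ∏ k ∈ range N, (q * k + a.val) := Nat.le_of_dvd hpos hdvd
    _ ≤ ∏ k ∈ range N, q * (k + 1) := by
      gcongr with k
      rw [mul_add_one]
      gcongr
      exact a.val_lt.le
    _ = q ^ N * N ! := by
      rw [prod_mul_distrib, prod_const, card_range, prod_range_add_one_eq_factorial]
    _ = q ^ N * (q ^ (N !).factorization q * M) := by rw [Nat.ordProj_mul_ordCompl_eq_self]
    _ ≤ q ^ N * (2 ^ N * M) :=
      Nat.mul_le_mul_left _
        (Nat.mul_le_mul_right _ (pow_factorization_factorial_le_two_pow hq.out N))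
    _ = (2 * q) ^ N * M := by ring

theorem sum_log_primesInClass_le {q : ℕ} [hq : Fact q.Prime] {a : ZMod q} (ha : a ≠ 0) (n : ℕ) :
    ∑ p ∈ primesInClass n a, log p ≤ 3 * ((n : ℝ) / q + 1) * log (2 * q) := by
  set N := n / q + 1
  have hq2 : (2 : ℝ) ≤ q := mod_cast hq.out.two_le
  have hnN : n < q * N := Nat.lt_mul_div_succ n hq.out.pos
  have hlarge : ∑ p ∈ primesInClass n a with N < p, log p ≤ N * log (2 * q) := by
    have hpos : ∀ p ∈ {p ∈ primesInClass n a | N < p}, 0 < p := fun p hp =>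
      pos_of_gt (mem_filter.1 hp).2
    rw [← log_prod fun p hp => Nat.cast_ne_zero.2 (hpos p hp).ne', ← log_pow]
    refine log_le_log (prod_pos fun p hp => Nat.cast_pos.2 (hpos p hp)) ?_
    rw [← Nat.cast_prod]
    exact mod_cast prod_primesInClass_le ha hnN
  have hsmall : ∑ p ∈ primesInClass n a with ¬ N < p, log p ≤ 2 * N * log (2 * q) := by
    have hsubset : {p ∈ primesInClass n a | ¬ N < p} ⊆ Nat.primesLE N := fun p hp => by
      obtain ⟨hp, hpN⟩ := mem_filter.1 hp
      exact Nat.mem_primesLE.2 ⟨not_lt.1 hpN, (mem_primesInClass.1 hp).1.2⟩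
    calc ∑ p ∈ primesInClass n a with ¬ N < p, log p ≤ ∑ p ∈ Nat.primesLE N, log p :=
          sum_le_sum_of_subset_of_nonneg hsubset fun p _ _ => log_natCast_nonneg p
      _ = Chebyshev.theta N := (Chebyshev.theta_eq_sum_primesLE_log N).symm
      _ ≤ log 4 * N := Chebyshev.theta_le_log4_mul_x N.cast_nonneg
      _ ≤ log ((2 * q) ^ 2) * N := by gcongr; nlinarith
      _ = 2 * N * log (2 * q) := by rw [log_pow]; push_cast; ring
  have hlog : 0 ≤ log (2 * q) := log_nonneg (by linarith)
  calc ∑ p ∈ primesInClass n a, log p ≤ 3 * (N : ℝ) * log (2 * q) := by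
        rw [← sum_filter_add_sum_filter_not _ (N < ·)]
        linarith
    _ ≤ 3 * ((n : ℝ) / q + 1) * log (2 * q) := by
      rw [Nat.cast_add_one]
      gcongr
      exact Nat.cast_div_le

theorem card_le_sqrt_add_sum_log {s : Finset ℕ} (hs : 0 ∉ s) {x : ℝ} (hx : 1 < x) :
    (#s : ℝ) ≤ √x + 2 * (∑ n ∈ s, log n) / log x := by
  have hlog : 0 < log x := log_pos hx
  have hsmall : (#{n ∈ s | n ≤ ⌊√x⌋₊} : ℝ) ≤ √x := by
    have hsubset : {n ∈ s | n ≤ ⌊√x⌋₊} ⊆ Icc 1 ⌊√x⌋₊ := fun n hn => by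
      obtain ⟨hns, hn⟩ := mem_filter.1 hn
      exact mem_Icc.2 ⟨Nat.pos_of_ne_zero (ne_of_mem_of_not_mem hns hs), hn⟩
    calc (#{n ∈ s | n ≤ ⌊√x⌋₊} : ℝ) ≤ #(Icc 1 ⌊√x⌋₊) := mod_cast card_le_card hsubset
      _ ≤ √x := by simpa using Nat.floor_le (sqrt_nonneg x)
  have hlarge : (#{n ∈ s | ¬ n ≤ ⌊√x⌋₊} : ℝ) * (log x / 2) ≤ ∑ n ∈ s, log n := by
    rw [← nsmul_eq_mul, ← sum_const]
    calc ∑ n ∈ s with ¬ n ≤ ⌊√x⌋₊, log x / 2 ≤ ∑ n ∈ s with ¬ n ≤ ⌊√x⌋₊, log n :=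
          sum_le_sum fun n hn => by
            rw [← log_sqrt (by linarith)]
            exact log_le_log (by positivity)
              (Nat.lt_of_floor_lt (not_le.1 (mem_filter.1 hn).2)).le
      _ ≤ ∑ n ∈ s, log n :=
          sum_le_sum_of_subset_of_nonneg (filter_subset ..) fun n _ _ => log_natCast_nonneg n
  rw [← card_filter_add_card_filter_not (s := s) (· ≤ ⌊√x⌋₊), Nat.cast_add]
  refine add_le_add hsmall ?_
  rw [le_div_iff₀ hlog]
  linarith

/-- A Brun–Titchmarsh inequality that is weaker than the truth by the factor `log (2 * q)`. -/
theorem card_primesInClass_le {q : ℕ} [hq : Fact q.Prime] {a : ZMod q} (ha : a ≠ 0) {x : ℝ}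
    (hx : 1 < x) (hqx : q ≤ x) :
    (#(primesInClass ⌊x⌋₊ a) : ℝ) ≤ √x + 12 * (x / log x) * (log (2 * q) / q) := by
  have hq2 : (2 : ℝ) ≤ q := mod_cast hq.out.two_le
  have hlog : 0 < log x := log_pos hx
  have hlogq : 0 ≤ log (2 * q) := log_nonneg (by linarith)
  have hsum : ∑ p ∈ primesInClass ⌊x⌋₊ a, log p ≤ 6 * (x / q) * log (2 * q) := by
    have hfloor : (⌊x⌋₊ : ℝ) / q ≤ x / q := by gcongr; exact Nat.floor_le (by linarith)
    have hone : 1 ≤ x / q := by rwa [one_le_div (by linarith)]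
    refine (sum_log_primesInClass_le ha ⌊x⌋₊).trans ?_
    exact mul_le_mul_of_nonneg_right (by linarith) hlogq
  have hzero : 0 ∉ primesInClass ⌊x⌋₊ a := fun h => Nat.not_prime_zero (mem_primesInClass.1 h).1.2
  calc (#(primesInClass ⌊x⌋₊ a) : ℝ)
      ≤ √x + 2 * (∑ p ∈ primesInClass ⌊x⌋₊ a, log p) / log x := card_le_sqrt_add_sum_log hzero hx
    _ ≤ √x + 2 * (6 * (x / q) * log (2 * q)) / log x := by gcongr
    _ = √x + 12 * (x / log x) * (log (2 * q) / q) := by ring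

theorem dvd_sq_sub_one_iff {q p : ℕ} [Fact q.Prime] (hp : p ≠ 0) :
    q ∣ p ^ 2 - 1 ↔ (p : ZMod q) = 1 ∨ (p : ZMod q) = -1 := by
  rw [← sq_eq_one_iff, ← ZMod.natCast_eq_zero_iff, Nat.cast_sub (Nat.one_le_pow _ _ (by omega)),
    sub_eq_zero, Nat.cast_pow, Nat.cast_one]

theorem card_primes_dvd_sq_sub_one_le {q : ℕ} (hq : q.Prime) {x : ℝ} (hx : 1 < x) (hqx : q ≤ x) :
    (#{p ∈ Nat.primesLE ⌊x⌋₊ | q ∣ p ^ 2 - 1} : ℝ) ≤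
      2 * √x + 24 * (x / log x) * (log (2 * q) / q) := by
  have : Fact q.Prime := ⟨hq⟩
  have hunion : {p ∈ Nat.primesLE ⌊x⌋₊ | q ∣ p ^ 2 - 1} =
      primesInClass ⌊x⌋₊ (1 : ZMod q) ∪ primesInClass ⌊x⌋₊ (-1 : ZMod q) := by
    rw [primesInClass, primesInClass, ← filter_or]
    exact filter_congr fun p hp => dvd_sq_sub_one_iff (Nat.prime_of_mem_primesLE hp).ne_zero
  have hcard : (#{p ∈ Nat.primesLE ⌊x⌋₊ | q ∣ p ^ 2 - 1} : ℝ) ≤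
      #(primesInClass ⌊x⌋₊ (1 : ZMod q)) + #(primesInClass ⌊x⌋₊ (-1 : ZMod q)) := by
    rw [hunion]
    exact mod_cast card_union_le ..
  linarith [card_primesInClass_le (one_ne_zero (α := ZMod q)) hx hqx,
    card_primesInClass_le (neg_ne_zero.2 (one_ne_zero (α := ZMod q))) hx hqx]

theorem log_two_mul_le_three_mul_sqrt {t : ℝ} (ht : 0 < t) : log (2 * t) ≤ 3 * √t := by
  have hsqrt : √(2 * t) ≤ 3 / 2 * √t := by
    rw [sqrt_mul zero_le_two]
    gcongr
    exact (sqrt_le_left (by norm_num)).2 (by norm_num)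
  have hlog := log_le_sub_one_of_pos (sqrt_pos.2 (show 0 < 2 * t by positivity))
  rw [log_sqrt (by positivity)] at hlog
  linarith

theorem card_primes_dvd_sq_sub_one_le_div_sqrt {q : ℕ} (hq : q.Prime) {x : ℝ} (hx : 1 < x)
    (hqx : q ≤ log x) (hlog : log x ^ 2 ≤ √x) :
    (#{p ∈ Nat.primesLE ⌊x⌋₊ | q ∣ p ^ 2 - 1} : ℝ) ≤ 74 * (x / log x) / √q := by
  have hq1 : (1 : ℝ) ≤ q := mod_cast hq.one_le
  have hlogx : 0 < log x := log_pos hx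
  have hqx' : (q : ℝ) ≤ x := hqx.trans (log_le_self (by linarith))
  have hsqrt : √x ≤ x / log x / √q := by
    rw [div_div, le_div_iff₀ (by positivity)]
    calc √x * (log x * √q) ≤ √x * (log x * log x) := by
          gcongr
          exact (sqrt_le_left (by linarith)).2 (by nlinarith)
      _ ≤ √x * √x := by gcongr; rwa [← sq]
      _ = x := mul_self_sqrt (by linarith)
  have hlogq : log (2 * q) / q ≤ 3 / √q := by
    calc log (2 * q) / q ≤ 3 * √q / q := by
          gcongr
          exact log_two_mul_le_three_mul_sqrt (by linarith)
      _ = 3 / √q := by rw [mul_div_assoc, sqrt_div_self, div_eq_mul_inv]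
  calc (#{p ∈ Nat.primesLE ⌊x⌋₊ | q ∣ p ^ 2 - 1} : ℝ)
      ≤ 2 * √x + 24 * (x / log x) * (log (2 * q) / q) := card_primes_dvd_sq_sub_one_le hq hx hqx'
    _ ≤ 2 * (x / log x / √q) + 24 * (x / log x) * (3 / √q) := by gcongr
    _ = 74 * (x / log x) / √q := by ring

/-! ### The Euler product of `n / φ n` -/

theorem prod_Ioc_one_inv_one_sub_inv {m : ℕ} (hm : 1 ≤ m) :
    ∏ k ∈ Ioc 1 m, (1 - (k : ℝ)⁻¹)⁻¹ = m := by
  induction m, hm using Nat.le_induction with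
  | base => simp
  | succ m hm ih =>
    have hm0 : (m : ℝ) ≠ 0 := Nat.cast_ne_zero.2 (by omega)
    have hfactor : 1 - ((m : ℝ) + 1)⁻¹ = m / (m + 1) := by
      field_simp
      ring
    rw [prod_Ioc_succ_top hm, ih, Nat.cast_add_one, hfactor, inv_div, mul_div_cancel₀ _ hm0]

theorem inv_one_sub_le_exp {t : ℝ} (ht0 : 0 ≤ t) (ht : t ≤ 1 / 2) :
    (1 - t)⁻¹ ≤ exp (2 * t) := by
  rw [inv_le_iff_one_le_mul₀ (by linarith)]
  calc 1 ≤ (2 * t + 1) * (1 - t) := by nlinarith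
    _ ≤ exp (2 * t) * (1 - t) := by
      gcongr
      · linarith
      · exact add_one_le_exp _

theorem div_totient_eq_prod {n : ℕ} (hn : n ≠ 0) :
    (n : ℝ) / φ n = ∏ q ∈ n.primeFactors, (1 - (q : ℝ)⁻¹)⁻¹ := by
  have htotient : (φ n : ℝ) = n * ∏ q ∈ n.primeFactors, (1 - (q : ℝ)⁻¹) := by
    simpa using congrArg (Rat.cast (K := ℝ)) (Nat.totient_eq_mul_prod_factors n)
  rw [htotient, prod_inv_distrib, div_mul_cancel_left₀ (Nat.cast_ne_zero.2 hn)]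

theorem div_totient_le {n m : ℕ} (hn : n ≠ 0) (hm : m ≠ 0) :
    (n : ℝ) / φ n ≤ m * exp (2 * ∑ q ∈ n.primeFactors with m < q, (q : ℝ)⁻¹) := by
  have hlt : ∀ q ∈ n.primeFactors, 1 < q := fun q hq => (Nat.prime_of_mem_primeFactors hq).one_lt
  have hinv : ∀ k : ℕ, 1 < k → (k : ℝ)⁻¹ ≤ 1 / 2 := fun k hk => by
    rw [← one_div]
    gcongr
    exact mod_cast hk
  have hfactor : ∀ k : ℕ, 1 < k → 1 ≤ (1 - (k : ℝ)⁻¹)⁻¹ := fun k hk =>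
    one_le_inv_iff₀.2 ⟨by linarith [hinv k hk], sub_le_self _ (by positivity)⟩
  have hfactor_nonneg : ∀ k : ℕ, 1 < k → 0 ≤ (1 - (k : ℝ)⁻¹)⁻¹ := fun k hk =>
    zero_le_one.trans (hfactor k hk)
  have hsmall : ∏ q ∈ n.primeFactors with ¬ m < q, (1 - (q : ℝ)⁻¹)⁻¹ ≤ m := by
    have hsubset : {q ∈ n.primeFactors | ¬ m < q} ⊆ Ioc 1 m := fun q hq => by
      obtain ⟨hq, hqm⟩ := mem_filter.1 hq
      exact mem_Ioc.2 ⟨hlt q hq, not_lt.1 hqm⟩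
    rw [← prod_Ioc_one_inv_one_sub_inv (Nat.one_le_iff_ne_zero.2 hm)]
    exact prod_le_prod_of_subset_of_one_le hsubset
      (fun q hq => hfactor_nonneg q (mem_Ioc.1 (hsubset hq)).1)
      fun k hk _ => hfactor k (mem_Ioc.1 hk).1
  have hlarge : ∏ q ∈ n.primeFactors with m < q, (1 - (q : ℝ)⁻¹)⁻¹ ≤
      exp (2 * ∑ q ∈ n.primeFactors with m < q, (q : ℝ)⁻¹) := by
    rw [mul_sum, exp_sum]
    refine prod_le_prod (fun q hq => ?_) fun q hq => ?_
    · exact hfactor_nonneg q (hlt q (mem_filter.1 hq).1)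
    · exact inv_one_sub_le_exp (by positivity) (hinv q (hlt q (mem_filter.1 hq).1))
  rw [div_totient_eq_prod hn, ← prod_filter_not_mul_prod_filter _ (m < ·)]
  gcongr
  exact prod_nonneg fun q hq => hfactor_nonneg q (hlt q (mem_filter.1 hq).1)

theorem sum_log_primeFactors_le {n : ℕ} (hn : n ≠ 0) : ∑ q ∈ n.primeFactors, log q ≤ log n := by
  rw [← log_prod fun q hq => Nat.cast_ne_zero.2 (Nat.prime_of_mem_primeFactors hq).ne_zero]
  refine log_le_log (prod_pos fun q hq => Nat.cast_pos.2 (Nat.prime_of_mem_primeFactors hq).pos) ?_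
  rw [← Nat.cast_prod]
  exact mod_cast Nat.le_of_dvd (Nat.pos_of_ne_zero hn) (Nat.prod_primeFactors_dvd n)

theorem sum_inv_primeFactors_le {n : ℕ} (hn : n ≠ 0) {T : ℝ} (hT : 1 < T) :
    ∑ q ∈ n.primeFactors with ¬ (q : ℕ) ≤ ⌊T⌋₊, (q : ℝ)⁻¹ ≤ log n / (T * log T) := by
  have hlog := log_pos hT
  calc ∑ q ∈ n.primeFactors with ¬ (q : ℕ) ≤ ⌊T⌋₊, (q : ℝ)⁻¹
      ≤ ∑ q ∈ n.primeFactors with ¬ (q : ℕ) ≤ ⌊T⌋₊, log q / (T * log T) :=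
        sum_le_sum fun q hq => by
          have hTq : T < q := Nat.lt_of_floor_lt (not_le.1 (mem_filter.1 hq).2)
          rw [← one_div, div_le_div_iff₀ (by linarith) (by positivity), one_mul, mul_comm]
          gcongr
    _ ≤ ∑ q ∈ n.primeFactors, log q / (T * log T) :=
        sum_le_sum_of_subset_of_nonneg (filter_subset ..) fun q _ _ => by
          have := log_natCast_nonneg q
          positivity
    _ ≤ log n / (T * log T) := by
      rw [← sum_div]
      gcongr
      exact sum_log_primeFactors_le hn

/-- The primes up to `m` and those beyond `T` contribute at most `m` and `exp 4` to the Euler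
product of `n / φ n`, so the primes in between contribute more than `exp 2`. -/
theorem one_lt_sum_inv_primeFactors {n m : ℕ} (hn : n ≠ 0) (hm : m ≠ 0) {T : ℝ}
    (hT : exp 1 ≤ T) (hnT : log n ≤ 2 * T) (hlarge : m * exp 6 < (n : ℝ) / φ n) :
    1 < ∑ q ∈ n.primeFactors with m < q ∧ q ≤ ⌊T⌋₊, (q : ℝ)⁻¹ := by
  have hT1 : 1 < T := (one_lt_exp_iff.2 one_pos).trans_le hT
  have hlogT : 1 ≤ log T := (le_log_iff_exp_le (by linarith)).2 hT
  have htail : ∑ q ∈ n.primeFactors with m < q ∧ ¬ q ≤ ⌊T⌋₊, (q : ℝ)⁻¹ ≤ 2 := by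
    calc ∑ q ∈ n.primeFactors with m < q ∧ ¬ q ≤ ⌊T⌋₊, (q : ℝ)⁻¹
        ≤ ∑ q ∈ n.primeFactors with ¬ (q : ℕ) ≤ ⌊T⌋₊, (q : ℝ)⁻¹ :=
          sum_le_sum_of_subset_of_nonneg (monotone_filter_right _ fun _ _ h => h.2)
            fun _ _ _ => by positivity
      _ ≤ log n / (T * log T) := sum_inv_primeFactors_le hn hT1
      _ ≤ 2 := by
        rw [div_le_iff₀ (by positivity)]
        nlinarith
  have hexp : exp 6 < exp (2 * ∑ q ∈ n.primeFactors with m < q, (q : ℝ)⁻¹) :=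
    lt_of_mul_lt_mul_left (hlarge.trans_le (div_totient_le hn hm)) m.cast_nonneg
  rw [exp_lt_exp, ← sum_filter_add_sum_filter_not _ (· ≤ ⌊T⌋₊), filter_filter,
    filter_filter] at hexp
  linarith

theorem inv_sq_mul_le_two_div_sub {a b : ℝ} (ha : 0 < a) (hab : a < b) (hsq : b ^ 2 = a ^ 2 + 1) :
    (b ^ 2 * b)⁻¹ ≤ 2 / a - 2 / b := by
  have hb : 0 < b := ha.trans hab
  rw [div_sub_div _ _ ha.ne' hb.ne', le_div_iff₀ (by positivity), inv_mul_eq_div,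
    div_le_iff₀ (by positivity)]
  have hdiff : 2 * b - a * 2 = 2 / (a + b) := by
    rw [eq_div_iff (by positivity)]
    linear_combination 2 * hsq
  rw [hdiff, div_mul_eq_mul_div, le_div_iff₀ (by positivity)]
  nlinarith [mul_pos ha hb]

theorem sum_Ioc_inv_mul_sqrt_le_sub {m M : ℕ} (hm : m ≠ 0) (h : m ≤ M) :
    ∑ k ∈ Ioc m M, ((k : ℝ) * √k)⁻¹ ≤ 2 / √m - 2 / √M := by
  induction M, h using Nat.le_induction with
  | base => simp
  | succ M h ih =>
    have hM : (0 : ℝ) < M := by exact_mod_cast (Nat.pos_of_ne_zero hm).trans_le h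
    rw [sum_Ioc_succ_top h]
    have hstep := inv_sq_mul_le_two_div_sub (sqrt_pos.2 hM) (sqrt_lt_sqrt hM.le (lt_add_one _))
      (by rw [sq_sqrt hM.le, sq_sqrt (by linarith)])
    rw [sq_sqrt (by linarith)] at hstep
    push_cast
    linarith

/-! ### Inconvenient primes -/

theorem sq_sub_one_ne_zero {p : ℕ} (hp : 1 < p) : p ^ 2 - 1 ≠ 0 :=
  (Nat.sub_pos_of_lt (Nat.one_lt_pow two_ne_zero hp)).ne'

theorem sum_sum_inv_primeFactors_le {x : ℝ} (hx : 1 < x) (hlog : log x ^ 2 ≤ √x) {m : ℕ}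
    (hm : m ≠ 0) :
    ∑ p ∈ Nat.primesLE ⌊x⌋₊, ∑ q ∈ (p ^ 2 - 1).primeFactors with m < q ∧ q ≤ ⌊log x⌋₊, (q : ℝ)⁻¹ ≤
      148 * (x / log x) / √m := by
  have hlogx : 0 < log x := log_pos hx
  have hterm : ∀ q ∈ {q ∈ Nat.primesLE ⌊log x⌋₊ | m < q},
      ∑ p ∈ Nat.primesLE ⌊x⌋₊ with q ∣ p ^ 2 - 1, (q : ℝ)⁻¹ ≤
        74 * (x / log x) * ((q : ℝ) * √q)⁻¹ := fun q hq => by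
    obtain ⟨hqx, hq⟩ := Nat.mem_primesLE.1 (mem_filter.1 hq).1
    rw [sum_const, nsmul_eq_mul, mul_inv_rev, ← mul_assoc, ← div_eq_mul_inv _ √(q : ℝ)]
    gcongr
    exact card_primes_dvd_sq_sub_one_le_div_sqrt hq hx
      ((Nat.le_floor_iff hlogx.le).1 hqx) hlog
  have hsubset : {q ∈ Nat.primesLE ⌊log x⌋₊ | m < q} ⊆ Ioc m (max m ⌊log x⌋₊) := fun q hq => by
    obtain ⟨hq, hmq⟩ := mem_filter.1 hq
    exact mem_Ioc.2 ⟨hmq, (Nat.mem_primesLE.1 hq).1.trans (le_max_right ..)⟩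
  calc ∑ p ∈ Nat.primesLE ⌊x⌋₊,
        ∑ q ∈ (p ^ 2 - 1).primeFactors with m < q ∧ q ≤ ⌊log x⌋₊, (q : ℝ)⁻¹
      = ∑ q ∈ Nat.primesLE ⌊log x⌋₊ with m < q,
          ∑ p ∈ Nat.primesLE ⌊x⌋₊ with q ∣ p ^ 2 - 1, (q : ℝ)⁻¹ :=
        sum_comm' fun p q => by
          have hne : p.Prime → p ^ 2 - 1 ≠ 0 := fun hp => sq_sub_one_ne_zero hp.one_lt
          simp only [mem_filter, Nat.mem_primesLE, Nat.mem_primeFactors]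
          tauto
    _ ≤ ∑ q ∈ Nat.primesLE ⌊log x⌋₊ with m < q, 74 * (x / log x) * ((q : ℝ) * √q)⁻¹ :=
        sum_le_sum hterm
    _ ≤ ∑ q ∈ Ioc m (max m ⌊log x⌋₊), 74 * (x / log x) * ((q : ℝ) * √q)⁻¹ :=
        sum_le_sum_of_subset_of_nonneg hsubset fun _ _ _ => by positivity
    _ ≤ 74 * (x / log x) * (2 / √m) := by
      rw [← mul_sum]
      gcongr
      exact (sum_Ioc_inv_mul_sqrt_le_sub hm (le_max_left ..)).trans
        (sub_le_self _ (by positivity))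
    _ = 148 * (x / log x) / √m := by ring

/-- The primes `3 ≤ p ≤ x` that are inconvenient at level `z`: those for which `p ^ 2 - 1` exceeds
`z` times its totient. -/
def inconvenientPrimes (x z : ℝ) : Set ℕ :=
  {p : ℕ | p.Prime ∧ 3 ≤ p ∧ (p : ℝ) ≤ x ∧ ((p ^ 2 - 1 : ℕ) : ℝ) / (φ (p ^ 2 - 1) : ℝ) > z}

theorem inconvenientPrimes_subset_primesLE (x z : ℝ) :
    inconvenientPrimes x z ⊆ Nat.primesLE ⌊x⌋₊ := fun _ hp =>
  mem_coe.2 (Nat.mem_primesLE.2 ⟨Nat.le_floor hp.2.2.1, hp.1⟩)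

theorem inconvenientPrimes_finite (x z : ℝ) : (inconvenientPrimes x z).Finite :=
  (Nat.primesLE ⌊x⌋₊).finite_toSet.subset (inconvenientPrimes_subset_primesLE x z)

theorem inconvenientPrimes_antitone (x : ℝ) : Antitone (inconvenientPrimes x) :=
  fun _ _ hz _ hp => ⟨hp.1, hp.2.1, hp.2.2.1, hz.trans_lt hp.2.2.2⟩

theorem ncard_inconvenientPrimes_le_primeCounting (x z : ℝ) :
    (inconvenientPrimes x z).ncard ≤ Nat.primeCounting ⌊x⌋₊ := by
  rw [← Nat.primesLE_card_eq_primeCounting, ← Set.ncard_coe_finset]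
  exact Set.ncard_le_ncard (inconvenientPrimes_subset_primesLE x z)

theorem ncard_inconvenientPrimes_le {x : ℝ} (hx : exp (exp 1) ≤ x) (hlog : log x ^ 2 ≤ √x) {m : ℕ}
    (hm : m ≠ 0) :
    ((inconvenientPrimes x (m * exp 6)).ncard : ℝ) ≤ 148 * (x / log x) / √m := by
  have hx1 : 1 < x := (one_lt_exp_iff.2 (exp_pos 1)).trans_le hx
  have hlogx : exp 1 ≤ log x := (le_log_iff_exp_le (by linarith)).2 hx
  obtain ⟨s, hs⟩ := (inconvenientPrimes_finite x (m * exp 6)).exists_finset_coe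
  rw [← hs, Set.ncard_coe_finset]
  have hsx : s ⊆ Nat.primesLE ⌊x⌋₊ :=
    coe_subset.1 (hs.trans_subset (inconvenientPrimes_subset_primesLE ..))
  have hone : ∀ p ∈ s,
      1 ≤ ∑ q ∈ (p ^ 2 - 1).primeFactors with m < q ∧ q ≤ ⌊log x⌋₊, (q : ℝ)⁻¹ := fun p hp => by
    rw [← mem_coe, hs] at hp
    obtain ⟨hp, -, hpx, hlarge⟩ := hp
    have hne : p ^ 2 - 1 ≠ 0 := sq_sub_one_ne_zero hp.one_lt
    have hlogp : log (p ^ 2 - 1 : ℕ) ≤ 2 * log x := by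
      calc log (p ^ 2 - 1 : ℕ) ≤ log (x ^ 2) := by
            gcongr
            calc ((p ^ 2 - 1 : ℕ) : ℝ) ≤ (p ^ 2 : ℕ) := mod_cast Nat.sub_le ..
              _ ≤ x ^ 2 := by push_cast; gcongr
        _ = 2 * log x := by rw [log_pow]; norm_num
    exact (one_lt_sum_inv_primeFactors hne hm hlogx hlogp hlarge).le
  calc (#s : ℝ) = ∑ p ∈ s, 1 := by simp
    _ ≤ ∑ p ∈ s, ∑ q ∈ (p ^ 2 - 1).primeFactors with m < q ∧ q ≤ ⌊log x⌋₊, (q : ℝ)⁻¹ :=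
      sum_le_sum hone
    _ ≤ ∑ p ∈ Nat.primesLE ⌊x⌋₊,
          ∑ q ∈ (p ^ 2 - 1).primeFactors with m < q ∧ q ≤ ⌊log x⌋₊, (q : ℝ)⁻¹ :=
      sum_le_sum_of_subset_of_nonneg hsx fun _ _ _ => by positivity
    _ ≤ 148 * (x / log x) / √m := sum_sum_inv_primeFactors_le hx1 hlog hm

theorem eventually_log_sq_le_sqrt : ∀ᶠ x : ℝ in atTop, log x ^ 2 ≤ √x := by
  filter_upwards [(isLittleO_pow_log_id_atTop (n := 4)).bound one_pos, eventually_ge_atTop 0]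
    with x hx hx0
  refine le_sqrt_of_sq_le ?_
  rw [← pow_mul]
  simpa [abs_of_nonneg hx0, Even.pow_abs (n := 4) (by decide)] using hx

theorem eventually_div_log_le_primeCounting :
    ∀ᶠ x : ℝ in atTop, x / log x ≤ 4 * Nat.primeCounting ⌊x⌋₊ := by
  filter_upwards [isLittleO_log_id_atTop.bound (c := 1 / 100) (by norm_num),
    eventually_ge_atTop 100] with x hx hx100
  have hlog : 0 < log x := log_pos (by linarith)
  have hlog_le : log x ≤ x / 100 := by
    rw [norm_of_nonneg hlog.le, id, norm_of_nonneg (by linarith)] at hx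
    linarith
  have hlog_add_two : log (x + 2) ≤ log 2 + log x := by
    rw [← log_mul two_ne_zero (by linarith)]
    exact log_le_log (by linarith) (by linarith)
  have hmain : x ≤ 4 * ((x - 1) * log 2 - log (x + 2)) := by
    nlinarith [log_two_gt_d9, log_two_lt_d9]
  calc x / log x ≤ 4 * (((x - 1) * log 2 - log (x + 2)) / log x) := by
        rw [← mul_div_assoc]
        gcongr
    _ ≤ 4 * Nat.primeCounting ⌊x⌋₊ := by
      gcongr
      exact Chebyshev.pi_ge' (by linarith)

theorem exists_ncard_inconvenientPrimes_le :
    ∃ C : ℝ, 0 < C ∧ ∀ᶠ x : ℝ in atTop, ∀ z > 0,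
      ((inconvenientPrimes x z).ncard : ℝ) ≤ C * Nat.primeCounting ⌊x⌋₊ / √z := by
  refine ⟨592 * √(2 * exp 6), by positivity, ?_⟩
  filter_upwards [eventually_log_sq_le_sqrt, eventually_div_log_le_primeCounting,
    eventually_ge_atTop (exp (exp 1))] with x hlog hpi hx z hz
  obtain hz_small | hz_large := lt_or_ge z (exp 6)
  · have hsqrt : √z ≤ 592 * √(2 * exp 6) := by
      calc √z ≤ √(2 * exp 6) := by gcongr; linarith
        _ ≤ 592 * √(2 * exp 6) := by linarith [sqrt_nonneg (2 * exp 6)]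
    rw [le_div_iff₀ (sqrt_pos.2 hz), mul_comm]
    gcongr
    exact mod_cast ncard_inconvenientPrimes_le_primeCounting x z
  · set m := ⌊z / exp 6⌋₊
    have hone : 1 ≤ z / exp 6 := (one_le_div (exp_pos 6)).2 hz_large
    have hm : m ≠ 0 := (Nat.floor_pos.2 hone).ne'
    have hmz : m * exp 6 ≤ z := (le_div_iff₀ (exp_pos 6)).1 (Nat.floor_le (by positivity))
    have hzm : √z ≤ √(2 * exp 6) * √m := by
      rw [← sqrt_mul (by positivity)]
      gcongr
      calc z = exp 6 * (z / exp 6) := (mul_div_cancel₀ z (exp_pos 6).ne').symm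
        _ ≤ exp 6 * (2 * m) := by
          gcongr
          have hm1 : (1 : ℝ) ≤ m := mod_cast Nat.one_le_iff_ne_zero.2 hm
          linarith [Nat.lt_floor_add_one (z / exp 6)]
        _ = 2 * exp 6 * m := by ring
    calc ((inconvenientPrimes x z).ncard : ℝ) ≤ (inconvenientPrimes x (m * exp 6)).ncard :=
          mod_cast Set.ncard_le_ncard (inconvenientPrimes_antitone x hmz)
            (inconvenientPrimes_finite ..)
      _ ≤ 148 * (x / log x) / √m := ncard_inconvenientPrimes_le hx hlog hm
      _ ≤ 148 * (4 * Nat.primeCounting ⌊x⌋₊) / √m := by gcongr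
      _ ≤ 592 * √(2 * exp 6) * Nat.primeCounting ⌊x⌋₊ / √z := by
        rw [div_le_div_iff₀ (by positivity) (by positivity)]
        calc 148 * (4 * Nat.primeCounting ⌊x⌋₊) * √z
            ≤ 148 * (4 * Nat.primeCounting ⌊x⌋₊) * (√(2 * exp 6) * √m) := by gcongr
          _ = 592 * √(2 * exp 6) * Nat.primeCounting ⌊x⌋₊ * √m := by ring

theorem type4_inconvenient_primes_general {f : ℝ → ℝ} (hf : Tendsto f atTop atTop) :
    (∃ C : ℝ, 0 < C ∧ ∀ᶠ x : ℝ in atTop,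
      ((inconvenientPrimes x (f x ^ (1 / 3 : ℝ))).ncard : ℝ) ≤
        C * Nat.primeCounting ⌊x⌋₊ / f x ^ (1 / 6 : ℝ)) ∧
    Tendsto (fun x : ℝ =>
      ((inconvenientPrimes x (f x ^ (1 / 3 : ℝ))).ncard : ℝ) / Nat.primeCounting ⌊x⌋₊)
      atTop (𝓝 0) := by
  obtain ⟨C, hC, hbound⟩ := exists_ncard_inconvenientPrimes_le
  have hbound_f : ∀ᶠ x : ℝ in atTop, ((inconvenientPrimes x (f x ^ (1 / 3 : ℝ))).ncard : ℝ) ≤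
      C * Nat.primeCounting ⌊x⌋₊ / f x ^ (1 / 6 : ℝ) := by
    filter_upwards [hbound, hf.eventually_gt_atTop 0] with x hx hfx
    have hsqrt : √(f x ^ (1 / 3 : ℝ)) = f x ^ (1 / 6 : ℝ) := by
      rw [sqrt_eq_rpow, ← rpow_mul hfx.le]
      norm_num
    exact hsqrt ▸ hx _ (rpow_pos_of_pos hfx _)
  have hlim : Tendsto (fun x => C / f x ^ (1 / 6 : ℝ)) atTop (𝓝 0) :=
    ((tendsto_rpow_atTop (by norm_num)).comp hf).const_div_atTop C
  refine ⟨⟨C, hC, hbound_f⟩, squeeze_zero' (Eventually.of_forall fun x => by positivity) ?_ hlim⟩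
  filter_upwards [hbound_f, hf.eventually_ge_atTop 0] with x hx hfx
  exact div_le_of_le_mul₀ (by positivity) (by positivity) (hx.trans_eq (by ring))

end

theorem type4_inconvenient_primes :
    (∃ C : ℝ, 0 < C ∧ ∀ᶠ x : ℝ in atTop,
      ({p : ℕ | p.Prime ∧ 3 ≤ p ∧ (p : ℝ) ≤ x ∧
          ((p ^ 2 - 1 : ℕ) : ℝ) / (Nat.totient (p ^ 2 - 1) : ℝ) >
            (Real.log (Real.log (Real.log x))) ^ ((1 : ℝ) / 3)}.ncard : ℝ) ≤
        C * (Nat.primeCounting ⌊x⌋₊ : ℝ) /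
          (Real.log (Real.log (Real.log x))) ^ ((1 : ℝ) / 6)) ∧
    Tendsto (fun x : ℝ =>
      ({p : ℕ | p.Prime ∧ 3 ≤ p ∧ (p : ℝ) ≤ x ∧
          ((p ^ 2 - 1 : ℕ) : ℝ) / (Nat.totient (p ^ 2 - 1) : ℝ) >
            (Real.log (Real.log (Real.log x))) ^ ((1 : ℝ) / 3)}.ncard : ℝ) /
        (Nat.primeCounting ⌊x⌋₊ : ℝ)) atTop (𝓝 0) := by
  exact type4_inconvenient_primes_general
    (Real.tendsto_log_atTop.comp (Real.tendsto_log_atTop.comp Real.tendsto_log_atTop))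
end

section
/- Fix a positive integer ℓ. There exists a constant C > 0 (depending only on ℓ) such that for all sufficiently large real x, Σ_{p ≤ x, p prime, p > ℓ} (p−ℓ)/φ(p−ℓ) ≤ C·π(x) and Σ_{p ≤ x, p prime} (p+ℓ)/φ(p+ℓ) ≤ C·π(x). -/
open Filter Topology

/-!
The product `∏ p ∣ n, (1 + 1 / p)` is at least half of `n / φ n`, the quotient being
`∏ p ∣ n, (1 - 1 / p ^ 2)`, so `n / φ n ≤ 2 * ∑ d ∣ n, 1 / d`, and pairing `d` with `n / d`
restricts the sum to `d ≤ √n` at the cost of another factor `2`. Summing over `n = p + k` and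
exchanging the sums reduces the claim to counting the primes `p ≤ N` in a residue class modulo `d`,
for `d ≪ √N`. A weak form of the Brun–Titchmarsh inequality, with `O(N / (√d log N))` primes, is
enough, since `∑ d, 1 / d ^ (3 / 2)` converges. That form follows from
`n ! ∣ q ^ n * ∏ m < n, (a + q * m)`, which forces the primes exceeding `n` among the `a + q * m`
to have product at most `q ^ (2 * n)`.
-/

section PrimesInProgressions

open Finset
open Real (log)
open scoped Nat Nat.Prime

lemma div_totient_eq_prod_one_sub_inv {n : ℕ} (hn : n ≠ 0) :
    (n : ℝ) / φ n = ∏ p ∈ n.primeFactors, (1 - (p : ℝ)⁻¹)⁻¹ := by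
  have h : (φ n : ℝ) = n * ∏ p ∈ n.primeFactors, (1 - (p : ℝ)⁻¹) := by
    have h := congrArg ((↑) : ℚ → ℝ) (Nat.totient_eq_mul_prod_factors n)
    push_cast at h
    exact h
  rw [h, prod_inv_distrib, div_mul_cancel_left₀ (Nat.cast_ne_zero.mpr hn)]

lemma prod_Ioc_one_sub_inv_sq {n : ℕ} (hn : n ≠ 0) :
    ∏ k ∈ Ioc 1 n, (1 - ((k : ℝ)⁻¹) ^ 2) = ((n : ℝ) + 1) / (2 * n) := by
  induction n, Nat.one_le_iff_ne_zero.mpr hn using Nat.le_induction with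
  | base => norm_num
  | succ n h1n ih =>
    rw [prod_Ioc_succ_top h1n, ih (by lia)]
    push_cast
    field_simp
    ring

lemma half_le_prod_one_sub_inv_sq {s : Finset ℕ} (hs : ∀ k ∈ s, 1 < k) :
    1 / 2 ≤ ∏ k ∈ s, (1 - ((k : ℝ)⁻¹) ^ 2) := by
  set n := s.sup id + 1
  have hsub : s ⊆ Ioc 1 n := fun k hk =>
    mem_Ioc.mpr ⟨hs k hk, (le_sup (f := id) hk).trans (Nat.le_succ _)⟩
  calc (1 / 2 : ℝ) ≤ (n + 1) / (2 * n) := by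
        rw [div_le_div_iff₀ (by positivity) (by positivity)]
        linarith
    _ = ∏ k ∈ Ioc 1 n, (1 - ((k : ℝ)⁻¹) ^ 2) :=
        (prod_Ioc_one_sub_inv_sq (Nat.succ_ne_zero _)).symm
    _ ≤ ∏ k ∈ s, (1 - ((k : ℝ)⁻¹) ^ 2) :=
        prod_le_prod_of_subset_of_le_one hsub
          (fun k _ => sub_nonneg.mpr (pow_le_one₀ (by positivity) (Nat.cast_inv_le_one k)))
          fun k _ _ => sub_le_self 1 (by positivity)

lemma prod_one_add_inv_le_sum_divisors_inv {n : ℕ} (hn : n ≠ 0) :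
    ∏ p ∈ n.primeFactors, (1 + (p : ℝ)⁻¹) ≤ ∑ d ∈ n.divisors, (d : ℝ)⁻¹ := by
  calc ∏ p ∈ n.primeFactors, (1 + (p : ℝ)⁻¹)
      = ∑ d ∈ n.divisors with Squarefree d, (d : ℝ)⁻¹ := by
        simp only [prod_one_add, prod_inv_distrib, Nat.sum_divisors_filter_squarefree hn,
          UniqueFactorizationMonoid.toFinset_normalizedFactors,
          UniqueFactorizationMonoid.primeFactors_eq_natPrimeFactors, prod_val, id, Nat.cast_prod]
    _ ≤ ∑ d ∈ n.divisors, (d : ℝ)⁻¹ :=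
        sum_le_sum_of_subset_of_nonneg (filter_subset _ _) fun _ _ _ => by positivity

lemma sum_divisors_inv_le_two_mul (n : ℕ) :
    ∑ d ∈ n.divisors, (d : ℝ)⁻¹ ≤ 2 * ∑ d ∈ n.divisors with d ^ 2 ≤ n, (d : ℝ)⁻¹ := by
  set f : ℕ → ℝ := fun d => if d ^ 2 ≤ n then (d : ℝ)⁻¹ else 0
  have hf_nonneg (d : ℕ) : 0 ≤ f d := by
    unfold f
    positivity
  have hflip : ∀ d ∈ n.divisors, (d : ℝ)⁻¹ ≤ f d + f (n / d) := by
    intro d hd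
    obtain ⟨⟨e, rfl⟩, hn⟩ := Nat.mem_divisors.mp hd
    obtain ⟨hd0, he0⟩ := mul_ne_zero_iff.mp hn
    rw [Nat.mul_div_cancel_left e (Nat.pos_of_ne_zero hd0)]
    by_cases hle : d ≤ e
    · have : f d = (d : ℝ)⁻¹ := if_pos (by nlinarith)
      linarith [hf_nonneg e]
    · have hfe : f e = (e : ℝ)⁻¹ := if_pos (by nlinarith)
      have : (d : ℝ)⁻¹ ≤ (e : ℝ)⁻¹ := by
        have : 0 < e := Nat.pos_of_ne_zero he0
        gcongr
        exact (not_le.mp hle).le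
      linarith [hf_nonneg d]
  calc ∑ d ∈ n.divisors, (d : ℝ)⁻¹ ≤ ∑ d ∈ n.divisors, (f d + f (n / d)) := sum_le_sum hflip
    _ = 2 * ∑ d ∈ n.divisors, f d := by
        rw [sum_add_distrib, Nat.sum_div_divisors, two_mul]
    _ = 2 * ∑ d ∈ n.divisors with d ^ 2 ≤ n, (d : ℝ)⁻¹ := by rw [sum_filter]

lemma div_totient_le_four_mul_sum_divisors_inv (n : ℕ) :
    (n : ℝ) / φ n ≤ 4 * ∑ d ∈ n.divisors with d ^ 2 ≤ n, (d : ℝ)⁻¹ := by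
  rcases eq_or_ne n 0 with rfl | hn
  · simp
  have hp : ∀ p ∈ n.primeFactors, 1 < p := fun p h => (Nat.prime_of_mem_primeFactors h).one_lt
  have hfactor : (n : ℝ) / φ n * ∏ p ∈ n.primeFactors, (1 - ((p : ℝ)⁻¹) ^ 2) =
      ∏ p ∈ n.primeFactors, (1 + (p : ℝ)⁻¹) := by
    rw [div_totient_eq_prod_one_sub_inv hn, ← prod_mul_distrib]
    refine prod_congr rfl fun p hpn => ?_
    have : 1 - (p : ℝ)⁻¹ ≠ 0 :=
      (sub_pos.mpr (inv_lt_one_of_one_lt₀ (Nat.one_lt_cast.mpr (hp p hpn)))).ne'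
    rw [inv_mul_eq_iff_eq_mul₀ this]
    ring
  have hhalf := half_le_prod_one_sub_inv_sq hp
  calc (n : ℝ) / φ n ≤ 2 * ∏ p ∈ n.primeFactors, (1 + (p : ℝ)⁻¹) := by
        rw [← hfactor]
        have : 0 ≤ (n : ℝ) / φ n := by positivity
        nlinarith
    _ ≤ 2 * ∑ d ∈ n.divisors, (d : ℝ)⁻¹ := by grw [prod_one_add_inv_le_sum_divisors_inv hn]
    _ ≤ 2 * (2 * ∑ d ∈ n.divisors with d ^ 2 ≤ n, (d : ℝ)⁻¹) := by
        grw [sum_divisors_inv_le_two_mul]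
    _ = 4 * ∑ d ∈ n.divisors with d ^ 2 ≤ n, (d : ℝ)⁻¹ := by ring

-- Modulo `u` the progression is `q` times a run of consecutive integers.
lemma dvd_prod_range_add_mul_of_coprime {q u n : ℕ} (hu : u ∣ n !) (hq : q.Coprime u) (a : ℕ) :
    u ∣ ∏ m ∈ range n, (a + q * m) := by
  obtain ⟨b, hb⟩ : ∃ b, q * b ≡ a [MOD u] := by
    obtain ⟨x, hxq, hxu⟩ := Nat.chineseRemainder hq 0 a
    obtain ⟨b, rfl⟩ := Nat.modEq_zero_iff_dvd.mp hxq
    exact ⟨b, hxu⟩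
  have h : ∏ m ∈ range n, (a + q * m) ≡ q ^ n * b.ascFactorial n [MOD u] := by
    rw [Nat.ascFactorial_eq_prod_range, pow_eq_prod_const, ← prod_mul_distrib]
    refine Nat.ModEq.prod fun m _ => ?_
    rw [mul_add]
    exact hb.symm.add_right _
  rw [h.dvd_iff dvd_rfl]
  exact (hu.trans (Nat.factorial_dvd_ascFactorial b n)).mul_left _

lemma factorial_dvd_pow_mul_prod_range_add_mul (a q n : ℕ) :
    n ! ∣ q ^ n * ∏ m ∈ range n, (a + q * m) := by
  rw [Nat.dvd_iff_prime_pow_dvd_dvd]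
  intro p k hp hk
  by_cases hpq : p ∣ q
  · have hkn : k ≤ n := by
      calc k ≤ (n !).factorization p := (hp.pow_dvd_iff_le_factorization n.factorial_ne_zero).mp hk
        _ ≤ n / (p - 1) := Nat.factorization_factorial_le_div_pred hp n
        _ ≤ n := Nat.div_le_self n _
    exact ((pow_dvd_pow p hkn).trans (pow_dvd_pow_of_dvd hpq n)).mul_right _
  · have hcop : q.Coprime (p ^ k) := hp.coprime_pow_of_not_dvd hpq
    exact (dvd_prod_range_add_mul_of_coprime hk hcop a).mul_left _

lemma prod_primes_gt_progression_le {a q : ℕ} (ha : 0 < a) (haq : a ≤ q) (n : ℕ) :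
    ∏ m ∈ range n with (a + q * m).Prime ∧ n < a + q * m, (a + q * m) ≤ q ^ (2 * n) := by
  set P := ∏ m ∈ range n with (a + q * m).Prime ∧ n < a + q * m, (a + q * m)
  have hP : P ∣ q ^ n * ∏ m ∈ range n, (a + q * m) :=
    (prod_dvd_prod_of_subset _ _ _ (filter_subset _ _)).mul_left _
  have hcop : P.Coprime n ! := by
    refine Nat.Coprime.prod_left fun m hm => ?_
    obtain ⟨-, hp, hlt⟩ := mem_filter.mp hm
    rw [hp.coprime_iff_not_dvd, hp.dvd_factorial]
    exact hlt.not_ge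
  have hdvd := hcop.mul_dvd_of_dvd_of_dvd hP (factorial_dvd_pow_mul_prod_range_add_mul a q n)
  have hpos : 0 < q ^ n * ∏ m ∈ range n, (a + q * m) := by
    have := ha.trans_le haq
    positivity
  have hle : ∏ m ∈ range n, (a + q * m) ≤ q ^ n * n ! := by
    calc ∏ m ∈ range n, (a + q * m) ≤ ∏ m ∈ range n, q * (m + 1) :=
          prod_le_prod' fun m _ => by linarith
      _ = q ^ n * n ! := by
          rw [prod_mul_distrib, prod_const, card_range, prod_range_add_one_eq_factorial]
  refine Nat.le_of_mul_le_mul_right (c := n !) ?_ n.factorial_pos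
  calc P * n ! ≤ q ^ n * ∏ m ∈ range n, (a + q * m) := Nat.le_of_dvd hpos hdvd
    _ ≤ q ^ n * (q ^ n * n !) := Nat.mul_le_mul_left _ hle
    _ = q ^ (2 * n) * n ! := by ring

lemma card_primes_progression_mul_log_le {a q : ℕ} (ha : 0 < a) (haq : a ≤ q) (n : ℕ) :
    #{m ∈ range n | (a + q * m).Prime} * log n ≤ π n * log n + 2 * n * log q := by
  have hsmall : #{m ∈ range n | (a + q * m).Prime ∧ a + q * m ≤ n} ≤ π n := by
    rw [← Nat.primesLE_card_eq_primeCounting]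
    refine card_le_card_of_injOn (fun m => a + q * m) (fun m hm => ?_) fun m _ m' _ h => ?_
    · obtain ⟨-, hp, hle⟩ := mem_filter.mp hm
      exact Nat.mem_primesLE.mpr ⟨hle, hp⟩
    · exact Nat.eq_of_mul_eq_mul_left (ha.trans_le haq) (Nat.add_left_cancel h)
  set L := {m ∈ range n | (a + q * m).Prime ∧ n < a + q * m}
  have hlarge : #L * log n ≤ 2 * n * log q := by
    rcases n.eq_zero_or_pos with rfl | hn
    · simp
    have hpow : n ^ #L ≤ q ^ (2 * n) := calc
      n ^ #L ≤ ∏ m ∈ L, (a + q * m) := pow_card_le_prod _ _ _ fun m hm => (mem_filter.mp hm).2.2.le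
      _ ≤ q ^ (2 * n) := prod_primes_gt_progression_le ha haq n
    have := Real.log_le_log (by positivity) (Nat.cast_le (α := ℝ).mpr hpow)
    push_cast [Real.log_pow] at this
    exact this
  have hsplit : #{m ∈ range n | (a + q * m).Prime} =
      #{m ∈ range n | (a + q * m).Prime ∧ a + q * m ≤ n} + #L := by
    rw [← card_filter_add_card_filter_not (fun m => a + q * m ≤ n)]
    simp only [filter_filter, not_le, L]
  have : 0 ≤ log n := Real.log_natCast_nonneg n
  rw [hsplit]
  push_cast
  grw [add_mul, hlarge, hsmall]

lemma log_le_two_mul_sqrt_sub_one {x : ℝ} (hx : 0 < x) : log x ≤ 2 * (√x - 1) := by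
  have := Real.log_le_sub_one_of_pos (Real.sqrt_pos.mpr hx)
  rw [Real.log_sqrt hx.le] at this
  linarith

lemma primeCounting_mul_log_le (n : ℕ) : π n * log n ≤ 5 * n := by
  rcases le_or_gt n 1 with hn | hn
  · interval_cases n <;> simp
  have hn' : (1 : ℝ) < n := Nat.one_lt_cast.mpr hn
  have hlog : 0 < log n := Real.log_pos hn'
  have hpi : (π n : ℝ) ≤ log 4 * n / log √n + √n := by
    simpa only [Nat.floor_natCast] using Chebyshev.pi_le_log4_mul_div hn'
  have hsqrt : √n * log n ≤ 2 * n := calc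
    √n * log n ≤ √n * (2 * √n) := by
      gcongr
      linarith [log_le_two_mul_sqrt_sub_one (zero_lt_one.trans hn')]
    _ = 2 * n := by rw [mul_left_comm, Real.mul_self_sqrt n.cast_nonneg]
  have hlog4 : log 4 ≤ 3 / 2 := by
    rw [show (4 : ℝ) = 2 ^ 2 by norm_num, Real.log_pow]
    push_cast
    linarith [Real.log_two_lt_d9]
  calc π n * log n ≤ (log 4 * n / log √n + √n) * log n := by gcongr
    _ = 2 * log 4 * n + √n * log n := by
      rw [Real.log_sqrt n.cast_nonneg]
      field_simp
    _ ≤ 2 * (3 / 2) * n + 2 * n := by gcongr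
    _ = 5 * n := by ring

lemma eventually_le_primeCounting_mul_log :
    ∀ᶠ n : ℕ in atTop, (n : ℝ) ≤ 2 * (π n * log n) := by
  have hlog : ∀ᶠ n : ℕ in atTop, ‖log ((n + 1 : ℕ) : ℝ)‖ ≤ 1 / 10 * ‖((n + 1 : ℕ) : ℝ)‖ :=
    (tendsto_natCast_atTop_atTop.comp (tendsto_add_atTop_nat 1)).eventually
      (Real.isLittleO_log_id_atTop.bound (by norm_num))
  filter_upwards [hlog, eventually_ge_atTop 2] with n hn h2
  rw [Real.norm_of_nonneg (Real.log_natCast_nonneg _),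
    Real.norm_of_nonneg (Nat.cast_nonneg _)] at hn
  push_cast at hn
  have h2' : (2 : ℝ) ≤ n := Nat.ofNat_le_cast.mpr h2
  have hpi := Chebyshev.pi_ge n
  rw [div_le_iff₀ (Real.log_pos (by linarith))] at hpi
  nlinarith [Real.log_two_gt_d9]

-- `(a - 1).val + 1` is the representative of the class `a` in `[1, q]`.
lemma card_primesLE_residue_le {q : ℕ} (N : ℕ) (a : ZMod q) :
    #{p ∈ Nat.primesLE N | ((p : ℕ) : ZMod q) = a} ≤
      #{m ∈ range (N / q + 1) | ((a - 1).val + 1 + q * m).Prime} := by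
  refine (card_le_card fun p hp => ?_).trans
    (card_image_le (f := fun m => (a - 1).val + 1 + q * m))
  obtain ⟨hpN, rfl⟩ := mem_filter.mp hp
  obtain ⟨hle, hprime⟩ := Nat.mem_primesLE.mp hpN
  have hval : ((p : ZMod q) - 1).val = (p - 1) % q := by
    rw [← ZMod.val_natCast, Nat.cast_pred hprime.pos]
  have hdecomp : ((p : ZMod q) - 1).val + 1 + q * ((p - 1) / q) = p := by
    rw [hval]
    have := Nat.mod_add_div (p - 1) q
    have := hprime.pos
    lia
  refine mem_image.mpr ⟨(p - 1) / q, mem_filter.mpr ⟨?_, hdecomp.symm ▸ hprime⟩, hdecomp⟩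
  exact mem_range.mpr (Nat.lt_succ_of_le (Nat.div_le_div_right (by lia)))

lemma card_primesLE_residue_mul_log_le {q N : ℕ} [NeZero q] (hqN : q ^ 2 ≤ 2 * N) (a : ZMod q) :
    #{p ∈ Nat.primesLE N | ((p : ℕ) : ZMod q) = a} * log N ≤ 30 * N / √q := by
  set n := N / q + 1
  have hq : 0 < q := NeZero.pos q
  have hqR : (1 : ℝ) ≤ q := Nat.one_le_cast.mpr hq
  have hN : 0 < N := by nlinarith
  have hqN' : q ≤ N := by nlinarith
  have hlogN : log N ≤ 3 * log n := by
    have hNn : N < q * n := Nat.lt_mul_div_succ N hq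
    have hn : 2 ≤ n := Nat.succ_le_succ (Nat.div_pos hqN' hq)
    have hqn : q ≤ n * n := by nlinarith
    have hpow : N ≤ n ^ 3 := by nlinarith
    have := Real.log_le_log (by positivity) (Nat.cast_le (α := ℝ).mpr hpow)
    push_cast [Real.log_pow] at this
    exact this
  have hnN : (n : ℝ) ≤ 2 * N / q := by
    have hnq : n * q = N / q * q + q := add_one_mul _ _
    have : n * q ≤ 2 * N := by linarith [Nat.div_mul_le_self N q]
    rw [le_div_iff₀ (zero_lt_one.trans_le hqR)]
    exact_mod_cast this
  have hlogq : 5 + 2 * log q ≤ 5 * √q := by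
    linarith [log_le_two_mul_sqrt_sub_one (zero_lt_one.trans_le hqR), Real.one_le_sqrt.mpr hqR]
  calc #{p ∈ Nat.primesLE N | ((p : ℕ) : ZMod q) = a} * log N
      ≤ #{m ∈ range n | ((a - 1).val + 1 + q * m).Prime} * (3 * log n) := by
        grw [card_primesLE_residue_le N a, hlogN]
    _ = 3 * (#{m ∈ range n | ((a - 1).val + 1 + q * m).Prime} * log n) := by ring
    _ ≤ 3 * (π n * log n + 2 * n * log q) := by
        grw [card_primes_progression_mul_log_le (Nat.succ_pos _) (ZMod.val_lt (a - 1)) n]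
    _ ≤ 3 * n * (5 + 2 * log q) := by linarith [primeCounting_mul_log_le n]
    _ ≤ 3 * (2 * N / q) * (5 * √q) := by gcongr
    _ = 30 * N / √q := by
        field_simp
        rw [Real.sq_sqrt q.cast_nonneg]
        ring

lemma summable_inv_mul_sqrt : Summable fun d : ℕ => ((d : ℝ) * √d)⁻¹ := by
  refine ((Real.summable_nat_rpow_inv (p := 1 + 1 / 2)).mpr (by norm_num)).congr fun d => ?_
  rw [Real.rpow_one_add' d.cast_nonneg (by norm_num), Real.sqrt_eq_rpow]

lemma sum_div_totient_add_le {k : ℤ} {N : ℕ} (hkN : k.natAbs ≤ N) :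
    ∑ p ∈ Nat.primesLE N, ((p + k : ℤ).natAbs : ℝ) / φ (p + k : ℤ).natAbs ≤
      4 * ∑ d ∈ Icc 1 (Nat.sqrt (2 * N)),
        (d : ℝ)⁻¹ * #{p ∈ Nat.primesLE N | ((p : ℕ) : ZMod d) = -k} := by
  have hdvd (p d : ℕ) : d ∣ (p + k : ℤ).natAbs ↔ (p : ZMod d) = -k := by
    rw [← Int.natCast_dvd, ← ZMod.intCast_zmod_eq_zero_iff_dvd, eq_neg_iff_add_eq_zero]
    push_cast
    rfl
  calc ∑ p ∈ Nat.primesLE N, ((p + k : ℤ).natAbs : ℝ) / φ (p + k : ℤ).natAbs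
      ≤ ∑ p ∈ Nat.primesLE N, 4 * ∑ d ∈ Icc 1 (Nat.sqrt (2 * N)) with (p : ZMod d) = -k,
          (d : ℝ)⁻¹ := by
        refine sum_le_sum fun p hp => (div_totient_le_four_mul_sum_divisors_inv _).trans ?_
        gcongr with d hd
        intro d hd
        simp only [mem_filter, Nat.mem_divisors, mem_Icc] at hd ⊢
        have hle : (p + k : ℤ).natAbs ≤ 2 * N := by
          have := Nat.le_of_mem_primesLE hp
          lia
        exact ⟨⟨Nat.pos_of_dvd_of_pos hd.1.1 (Nat.pos_of_ne_zero hd.1.2),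
          Nat.le_sqrt'.mpr (hd.2.trans hle)⟩, (hdvd p d).mp hd.1.1⟩
    _ = 4 * ∑ d ∈ Icc 1 (Nat.sqrt (2 * N)),
          (d : ℝ)⁻¹ * #{p ∈ Nat.primesLE N | ((p : ℕ) : ZMod d) = -k} := by
        simp only [← mul_sum, sum_filter]
        rw [sum_comm]
        simp only [← sum_filter, sum_const, nsmul_eq_mul, mul_comm]

theorem isBigO_sum_div_totient_add (k : ℤ) :
    (fun N : ℕ => ∑ p ∈ Nat.primesLE N, ((p + k : ℤ).natAbs : ℝ) / φ (p + k : ℤ).natAbs)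
      =O[atTop] fun N : ℕ => (π N : ℝ) := by
  refine Asymptotics.IsBigO.of_bound (240 * ∑' d : ℕ, ((d : ℝ) * √d)⁻¹) ?_
  filter_upwards [eventually_le_primeCounting_mul_log, eventually_ge_atTop k.natAbs,
    eventually_ge_atTop 2] with N hpi hkN hN
  rw [Real.norm_of_nonneg (by positivity), Real.norm_of_nonneg (by positivity)]
  have hlog : 0 < log N := Real.log_pos (Nat.one_lt_cast.mpr hN)
  have hcount : ∀ d ∈ Icc 1 (Nat.sqrt (2 * N)),
      (d : ℝ)⁻¹ * #{p ∈ Nat.primesLE N | ((p : ℕ) : ZMod d) = -k} ≤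
        60 * π N * ((d : ℝ) * √d)⁻¹ := by
    intro d hd
    obtain ⟨hd1, hdN⟩ := mem_Icc.mp hd
    have : NeZero d := ⟨by lia⟩
    have h : #{p ∈ Nat.primesLE N | ((p : ℕ) : ZMod d) = -k} * log N ≤ 60 * π N / √d * log N :=
      calc _ ≤ 30 * N / √d := card_primesLE_residue_mul_log_le (Nat.le_sqrt'.mp hdN) _
        _ ≤ 30 * (2 * (π N * log N)) / √d := by gcongr
        _ = 60 * π N / √d * log N := by ring
    calc _ ≤ (d : ℝ)⁻¹ * (60 * π N / √d) := by gcongr; exact le_of_mul_le_mul_right h hlog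
      _ = _ := by rw [mul_inv]; ring
  calc _ ≤ _ := sum_div_totient_add_le hkN
    _ ≤ 4 * ∑ d ∈ Icc 1 (Nat.sqrt (2 * N)), 60 * π N * ((d : ℝ) * √d)⁻¹ := by
        grw [sum_le_sum hcount]
    _ = 240 * (∑ d ∈ Icc 1 (Nat.sqrt (2 * N)), ((d : ℝ) * √d)⁻¹) * π N := by
        rw [← mul_sum]
        ring
    _ ≤ 240 * (∑' d : ℕ, ((d : ℝ) * √d)⁻¹) * π N := by
        gcongr
        exact summable_inv_mul_sqrt.sum_le_tsum _ fun d _ => by positivity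

end PrimesInProgressions

theorem reciprocal_phi_sum_bound (ℓ : ℕ) (hℓ : 0 < ℓ) :
    ∃ C : ℝ, 0 < C ∧ ∀ᶠ x : ℝ in atTop,
      (∑ p ∈ (Finset.range (⌊x⌋₊ + 1)).filter (fun p => p.Prime ∧ ℓ < p),
          ((p - ℓ : ℕ) : ℝ) / (Nat.totient (p - ℓ) : ℝ)) ≤
        C * (Nat.primeCounting ⌊x⌋₊ : ℝ) ∧
      (∑ p ∈ (Finset.range (⌊x⌋₊ + 1)).filter Nat.Prime,
          ((p + ℓ : ℕ) : ℝ) / (Nat.totient (p + ℓ) : ℝ)) ≤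
        C * (Nat.primeCounting ⌊x⌋₊ : ℝ) := by
  obtain ⟨C₁, hC₁, hsub⟩ := (isBigO_sum_div_totient_add (-ℓ)).exists_pos
  obtain ⟨C₂, -, hadd⟩ := (isBigO_sum_div_totient_add ℓ).exists_pos
  refine ⟨max C₁ C₂, lt_max_of_lt_left hC₁, ?_⟩
  filter_upwards [tendsto_nat_floor_atTop.eventually (hsub.bound.and hadd.bound)] with x hx
  obtain ⟨hsub, hadd⟩ := hx
  rw [Real.norm_of_nonneg (by positivity), Real.norm_of_nonneg (by positivity)] at hsub hadd
  constructor
  · grw [← le_max_left, ← hsub]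
    calc _ = ∑ p ∈ Nat.primesLE ⌊x⌋₊ with ℓ < p,
          ((p + -ℓ : ℤ).natAbs : ℝ) / Nat.totient (p + -ℓ : ℤ).natAbs := by
          rw [← Finset.filter_filter]
          refine Finset.sum_congr rfl fun p hp => ?_
          have := (Finset.mem_filter.mp hp).2
          rw [show (p + -ℓ : ℤ).natAbs = p - ℓ by lia]
      _ ≤ _ := Finset.sum_le_sum_of_subset_of_nonneg (Finset.filter_subset _ _)
          fun _ _ _ => by positivity
  · grw [← le_max_right, ← hadd]
    rfl
end

section
/- For all positive integers ℓ and m, the number of primes p ≤ x with p > ℓ such that 2^m divides φ(p−ℓ) and 2^m divides φ(p+ℓ) is asymptotic to π(x) as x → ∞; that is, this count divided by π(x) tends to 1. -/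
open Filter Topology

/-!
The primes `p` with `p ≡ s [ZMOD q]` for no `q` in a finite set `P` of primes not dividing `s` lie,
up to finitely many, in `∏ (q - 2)` of the `∏ (q - 1)` reduced residue classes modulo `∏ q`. By the
Brun–Titchmarsh inequality, which comes from Selberg's sieve, their relative density is therefore
`O(exp (-∑ 1 / q))`.

As `∑ 1 / q` diverges over the primes `q ≡ 1 [MOD d]`, almost every prime `p` has such a `q`
dividing `p - s`, and then `d ∣ q - 1 = φ q ∣ φ |p - s|`. The theorem is the case `d = 2 ^ m` with
`s = ℓ` and `s = -ℓ`.
-/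

section SelbergSieve

open BoundingSieve Finset
open ArithmeticFunction hiding moebius
open scoped ArithmeticFunction.Moebius

/-- The divisors `l ∣ P` with `l ^ 2 ≤ level`, which support the weights of the Selberg sieve. -/
noncomputable def sieveDivisors (s : SelbergSieve) : Finset ℕ :=
  {l ∈ s.prodPrimes.divisors | (l : ℝ) ^ 2 ≤ s.level}

/-- The sum `S` of the Selberg terms over `sieveDivisors`; the main term of the sieve is
`totalMass / S`. -/
noncomputable def selbergSum (s : SelbergSieve) : ℝ := ∑ l ∈ sieveDivisors s, s.selbergTerms l

/-- Selberg's choice of the weights of the `Λ²` sieve, which minimises the main term subject to the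
weight at `1` being `1`. -/
noncomputable def selbergWeight (s : SelbergSieve) (d : ℕ) : ℝ :=
  μ d / (s.nu d * selbergSum s) * ∑ l ∈ sieveDivisors s with d ∣ l, s.selbergTerms l

variable {s : SelbergSieve}

lemma mem_sieveDivisors {l : ℕ} :
    l ∈ sieveDivisors s ↔ l ∣ s.prodPrimes ∧ (l : ℝ) ^ 2 ≤ s.level := by
  simp [sieveDivisors, prodPrimes_ne_zero]

lemma sieveDivisors_subset : sieveDivisors s ⊆ s.prodPrimes.divisors := filter_subset _ _

lemma mem_sieveDivisors_of_dvd {d l : ℕ} (hl : l ∈ sieveDivisors s) (hdl : d ∣ l) :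
    d ∈ sieveDivisors s := by
  rw [mem_sieveDivisors] at hl ⊢
  have hl0 : 0 < l := Nat.pos_of_ne_zero (ne_zero_of_dvd_ne_zero prodPrimes_ne_zero hl.1)
  refine ⟨hdl.trans hl.1, le_trans ?_ hl.2⟩
  gcongr
  exact Nat.le_of_dvd hl0 hdl

lemma nu_le_selbergTerms {l : ℕ} (hl : l ∣ s.prodPrimes) : s.nu l ≤ s.selbergTerms l := by
  rw [selbergTerms_apply]
  refine le_mul_of_one_le_right (nu_pos_of_dvd_prodPrimes hl).le (Finset.one_le_prod fun p hp ↦ ?_)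
  have hp' := Nat.prime_of_mem_primeFactors hp
  have hpP := (Nat.dvd_of_mem_primeFactors hp).trans hl
  have hν_pos := s.nu_pos_of_prime p hp' hpP
  have hν_lt := s.nu_lt_one_of_prime p hp' hpP
  exact (one_le_inv₀ (by linarith)).2 (by linarith)

lemma sum_nu_le_selbergSum : ∑ l ∈ sieveDivisors s, s.nu l ≤ selbergSum s :=
  sum_le_sum fun _ hl ↦ nu_le_selbergTerms (mem_sieveDivisors.1 hl).1

lemma selbergSum_pos : 0 < selbergSum s := by
  refine sum_pos (fun l hl ↦ selbergTerms_pos (mem_sieveDivisors.1 hl).1) ⟨1, ?_⟩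
  simpa [mem_sieveDivisors] using s.one_le_level

lemma selbergWeight_one : selbergWeight s 1 = 1 := by
  simp only [selbergWeight, moebius_apply_one, s.nu_mult.map_one, one_dvd, filter_true]
  rw [← selbergSum, Int.cast_one, one_mul, one_div_mul_cancel selbergSum_pos.ne']

lemma selbergWeight_eq_zero {d : ℕ} (hd : d ∉ sieveDivisors s) : selbergWeight s d = 0 := by
  rw [selbergWeight, filter_eq_empty_iff.2 fun l hl hdl ↦ hd (mem_sieveDivisors_of_dvd hl hdl)]
  simp

lemma abs_selbergWeight_le {d : ℕ} (hd : d ∣ s.prodPrimes) : |selbergWeight s d| ≤ (s.nu d)⁻¹ := by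
  have hν := nu_pos_of_dvd_prodPrimes hd
  have hS := selbergSum_pos (s := s)
  have hg (l : ℕ) (hl : l ∈ sieveDivisors s) : 0 ≤ s.selbergTerms l :=
    (selbergTerms_pos (mem_sieveDivisors.1 hl).1).le
  have hμ : |(μ d : ℝ)| ≤ 1 := mod_cast abs_moebius_le_one
  set T := ∑ l ∈ sieveDivisors s with d ∣ l, s.selbergTerms l with hT
  have hT_nonneg : 0 ≤ T := sum_nonneg fun l hl ↦ hg l (mem_of_mem_filter l hl)
  have hT_le : T ≤ selbergSum s :=
    sum_le_sum_of_subset_of_nonneg (filter_subset _ _) fun l hl _ ↦ hg l hl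
  calc |selbergWeight s d|
      = |(μ d : ℝ)| / (s.nu d * selbergSum s) * T := by
        rw [selbergWeight, ← hT, abs_mul, abs_div, abs_of_pos (mul_pos hν hS),
          abs_of_nonneg hT_nonneg]
    _ ≤ 1 / (s.nu d * selbergSum s) * selbergSum s := by gcongr
    _ = (s.nu d)⁻¹ := by field_simp

lemma sum_moebius_of_dvd_of_dvd {l k : ℕ} (hk : Squarefree k) (hlk : l ∣ k) :
    ∑ d ∈ k.divisors with l ∣ d, μ d = if l = k then μ l else 0 := by
  obtain ⟨j, rfl⟩ := hlk
  have hl : 0 < l := Nat.pos_of_ne_zero (left_ne_zero_of_mul hk.ne_zero)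
  have hj : j ≠ 0 := right_ne_zero_of_mul hk.ne_zero
  have hmul : {d ∈ (l * j).divisors | l ∣ d} = j.divisors.image (l * ·) := by
    ext d
    simp only [mem_filter, Nat.mem_divisors, mem_image]
    constructor
    · rintro ⟨⟨hd, -⟩, i, rfl⟩
      exact ⟨i, ⟨Nat.dvd_of_mul_dvd_mul_left hl hd, hj⟩, rfl⟩
    · rintro ⟨i, ⟨hi, -⟩, rfl⟩
      exact ⟨⟨Nat.mul_dvd_mul_left l hi, hk.ne_zero⟩, dvd_mul_right l i⟩
  have hμ : ∀ i ∈ j.divisors, μ (l * i) = μ l * μ i := fun i hi ↦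
    isMultiplicative_moebius.map_mul_of_coprime
      ((Nat.coprime_of_squarefree_mul hk).coprime_dvd_right (Nat.dvd_of_mem_divisors hi))
  have hsum : ∑ i ∈ j.divisors, μ i = if j = 1 then 1 else 0 := by
    simpa only [coe_zeta_mul_apply, one_apply] using DFunLike.congr_fun coe_zeta_mul_moebius j
  rw [hmul, sum_image fun _ _ _ _ ↦ Nat.eq_of_mul_eq_mul_left hl, sum_congr rfl hμ, ← mul_sum, hsum]
  simp [hl.ne']

lemma sum_nu_mul_selbergWeight {l : ℕ} :
    ∑ d ∈ s.prodPrimes.divisors with l ∣ d, s.nu d * selbergWeight s d =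
      if l ∈ sieveDivisors s then μ l * s.selbergTerms l / selbergSum s else 0 := by
  calc ∑ d ∈ s.prodPrimes.divisors with l ∣ d, s.nu d * selbergWeight s d
      = ∑ d ∈ s.prodPrimes.divisors with l ∣ d, ∑ k ∈ sieveDivisors s with d ∣ k,
          μ d * (s.selbergTerms k / selbergSum s) := by
        refine sum_congr rfl fun d hd ↦ ?_
        have := nu_ne_zero (Nat.dvd_of_mem_divisors (mem_of_mem_filter d hd))
        rw [← mul_sum, ← sum_div, selbergWeight]
        field_simp
    _ = ∑ k ∈ sieveDivisors s, ∑ d ∈ k.divisors with l ∣ d,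
          μ d * (s.selbergTerms k / selbergSum s) := by
        refine sum_comm' fun d k ↦ ?_
        simp only [mem_filter, Nat.mem_divisors, mem_sieveDivisors]
        constructor
        · rintro ⟨⟨⟨-, hP⟩, hld⟩, ⟨hkP, hk⟩, hdk⟩
          exact ⟨⟨⟨hdk, ne_zero_of_dvd_ne_zero hP hkP⟩, hld⟩, hkP, hk⟩
        · rintro ⟨⟨⟨hdk, -⟩, hld⟩, hkP, hk⟩
          exact ⟨⟨⟨hdk.trans hkP, prodPrimes_ne_zero⟩, hld⟩, ⟨hkP, hk⟩, hdk⟩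
    _ = ∑ k ∈ sieveDivisors s,
          if l = k then μ l * (s.selbergTerms l / selbergSum s) else 0 := by
        refine sum_congr rfl fun k hk ↦ ?_
        rw [← sum_mul]
        by_cases hlk : l ∣ k
        · have := sum_moebius_of_dvd_of_dvd
            (squarefree_of_dvd_prodPrimes (mem_sieveDivisors.1 hk).1) hlk
          rw [← Int.cast_sum, this]
          split_ifs with h <;> simp [h]
        · rw [filter_false_of_mem fun d hd hld ↦ hlk (hld.trans (Nat.dvd_of_mem_divisors hd)),
            if_neg fun h : l = k ↦ hlk h.dvd]
          simp
    _ = _ := by rw [sum_ite_eq, mul_div_assoc]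

lemma mainSum_lambdaSquared_selbergWeight :
    s.mainSum (lambdaSquared (selbergWeight s)) = (selbergSum s)⁻¹ := by
  have hS := selbergSum_pos (s := s)
  have hterm : ∀ l ∈ sieveDivisors s,
      (s.selbergTerms l)⁻¹ * (μ l * s.selbergTerms l / selbergSum s) ^ 2 =
        s.selbergTerms l / selbergSum s ^ 2 := fun l hl ↦ by
    have hlP := (mem_sieveDivisors.1 hl).1
    have hg := selbergTerms_pos hlP
    have hμ : (μ l : ℝ) ^ 2 = 1 :=
      mod_cast moebius_sq_eq_one_of_squarefree (squarefree_of_dvd_prodPrimes hlP)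
    field_simp
    exact hμ
  calc s.mainSum (lambdaSquared (selbergWeight s))
      = ∑ l ∈ s.prodPrimes.divisors, if l ∈ sieveDivisors s then
          (s.selbergTerms l)⁻¹ * (μ l * s.selbergTerms l / selbergSum s) ^ 2 else 0 := by
        rw [mainSum_lambdaSquared_eq_sum_mul_sum_sq]
        refine sum_congr rfl fun l _ ↦ ?_
        rw [← sum_filter, sum_nu_mul_selbergWeight]
        split_ifs <;> simp
    _ = ∑ l ∈ sieveDivisors s, s.selbergTerms l / selbergSum s ^ 2 := by
        rw [← sum_filter, filter_mem_eq_inter, inter_eq_right.2 sieveDivisors_subset]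
        exact sum_congr rfl hterm
    _ = (selbergSum s)⁻¹ := by
        rw [← sum_div, ← selbergSum]
        field_simp

lemma sum_abs_lambdaSquared_le (w : ℕ → ℝ) (n : ℕ) :
    ∑ d ∈ n.divisors, |lambdaSquared w d| ≤ (∑ d ∈ n.divisors, |w d|) ^ 2 := by
  rcases eq_or_ne n 0 with rfl | hn
  · simp
  calc ∑ d ∈ n.divisors, |lambdaSquared w d|
      ≤ ∑ d ∈ n.divisors, ∑ d₁ ∈ n.divisors, ∑ d₂ ∈ n.divisors,
          if d = d₁.lcm d₂ then |w d₁| * |w d₂| else 0 := by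
        refine sum_le_sum fun d hd ↦ ?_
        have hsub : d.divisors ⊆ n.divisors :=
          Nat.divisors_subset_of_dvd hn (Nat.dvd_of_mem_divisors hd)
        calc |lambdaSquared w d|
            ≤ ∑ d₁ ∈ d.divisors, ∑ d₂ ∈ d.divisors,
                if d = d₁.lcm d₂ then |w d₁| * |w d₂| else 0 := by
              refine (abs_sum_le_sum_abs _ _).trans (sum_le_sum fun d₁ _ ↦ ?_)
              refine (abs_sum_le_sum_abs _ _).trans_eq (sum_congr rfl fun d₂ _ ↦ ?_)
              rw [apply_ite abs, abs_mul, abs_zero]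
          _ ≤ _ := by
              refine (sum_le_sum fun d₁ _ ↦ ?_).trans
                (sum_le_sum_of_subset_of_nonneg hsub fun d₁ _ _ ↦ sum_nonneg fun d₂ _ ↦ ?_)
              · exact sum_le_sum_of_subset_of_nonneg hsub fun d₂ _ _ ↦ by positivity
              · positivity
    _ = (∑ d ∈ n.divisors, |w d|) ^ 2 := by
        rw [sum_comm, sq, sum_mul_sum]
        refine sum_congr rfl fun d₁ hd₁ ↦ ?_
        rw [sum_comm]
        refine sum_congr rfl fun d₂ hd₂ ↦ sum_ite_eq_of_mem' _ _ _ ?_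
        exact Nat.mem_divisors.2 ⟨Nat.lcm_dvd (Nat.dvd_of_mem_divisors hd₁)
          (Nat.dvd_of_mem_divisors hd₂), hn⟩

lemma errSum_lambdaSquared_selbergWeight_le {R : ℝ} (hR : ∀ d, d ∣ s.prodPrimes → |s.rem d| ≤ R) :
    s.errSum (lambdaSquared (selbergWeight s)) ≤ R * (∑ d ∈ sieveDivisors s, (s.nu d)⁻¹) ^ 2 := by
  have hR0 : 0 ≤ R := (abs_nonneg _).trans (hR 1 (one_dvd _))
  have hw : ∑ d ∈ s.prodPrimes.divisors, |selbergWeight s d| ≤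
      ∑ d ∈ sieveDivisors s, (s.nu d)⁻¹ := by
    rw [← sum_subset sieveDivisors_subset
      fun d _ hd ↦ by rw [selbergWeight_eq_zero hd, abs_zero]]
    exact sum_le_sum fun d hd ↦ abs_selbergWeight_le (mem_sieveDivisors.1 hd).1
  calc s.errSum (lambdaSquared (selbergWeight s))
      ≤ ∑ d ∈ s.prodPrimes.divisors, |lambdaSquared (selbergWeight s) d| * R :=
        sum_le_sum fun d hd ↦
          mul_le_mul_of_nonneg_left (hR d (Nat.dvd_of_mem_divisors hd)) (abs_nonneg _)
    _ ≤ R * (∑ d ∈ s.prodPrimes.divisors, |selbergWeight s d|) ^ 2 := by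
        rw [← sum_mul, mul_comm]
        gcongr
        exact sum_abs_lambdaSquared_le _ _
    _ ≤ R * (∑ d ∈ sieveDivisors s, (s.nu d)⁻¹) ^ 2 := by gcongr

theorem siftedSum_le_div_selbergSum_add {R : ℝ} (hR : ∀ d, d ∣ s.prodPrimes → |s.rem d| ≤ R) :
    s.siftedSum ≤ s.totalMass / selbergSum s + R * (∑ d ∈ sieveDivisors s, (s.nu d)⁻¹) ^ 2 := by
  grw [siftedSum_le_mainSum_errSum_of_upperMoebius _
      (upperMoebius_lambdaSquared _ selbergWeight_one),
    mainSum_lambdaSquared_selbergWeight, errSum_lambdaSquared_selbergWeight_le hR, div_eq_mul_inv]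

end SelbergSieve

section BrunTitchmarsh

open BoundingSieve Finset
open scoped Nat Nat.Prime

/-- The product of the primes up to `z` that do not divide `Q`. -/
def coprimePrimorial (Q z : ℕ) : ℕ := ∏ p ∈ z.primesLE with Q.Coprime p, p

lemma primeFactors_coprimePrimorial (Q z : ℕ) :
    (coprimePrimorial Q z).primeFactors = {p ∈ z.primesLE | Q.Coprime p} :=
  Nat.primeFactors_prod fun _ hp ↦ Nat.prime_of_mem_primesLE (mem_of_mem_filter _ hp)

lemma coprimePrimorial_ne_zero (Q z : ℕ) : coprimePrimorial Q z ≠ 0 :=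
  prod_ne_zero_iff.2 fun _ hp ↦ (Nat.prime_of_mem_primesLE (mem_of_mem_filter _ hp)).ne_zero

lemma squarefree_coprimePrimorial (Q z : ℕ) : Squarefree (coprimePrimorial Q z) := by
  refine Finset.squarefree_prod_of_pairwise_isCoprime (fun p hp q hq hpq ↦ ?_) fun p hp ↦ ?_
  · rw [Function.onFun, ← Nat.coprime_iff_isRelPrime, Nat.coprime_primes]
    · exact hpq
    · exact Nat.prime_of_mem_primesLE (mem_of_mem_filter _ hp)
    · exact Nat.prime_of_mem_primesLE (mem_of_mem_filter _ hq)
  · exact (Nat.prime_of_mem_primesLE (mem_of_mem_filter _ hp)).prime.squarefree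

lemma coprime_coprimePrimorial (Q z : ℕ) : Q.Coprime (coprimePrimorial Q z) :=
  Nat.Coprime.prod_right fun _ hp ↦ (mem_filter.1 hp).2

lemma dvd_coprimePrimorial {Q z l : ℕ} (hl : Squarefree l) (hQl : Q.Coprime l) (hlz : l ≤ z) :
    l ∣ coprimePrimorial Q z := by
  rw [← Nat.prod_primeFactors_of_squarefree hl]
  refine prod_dvd_prod_of_subset _ _ _ fun p hp ↦ ?_
  have hpl := Nat.dvd_of_mem_primeFactors hp
  simp only [mem_filter, Nat.mem_primesLE]
  exact ⟨⟨(Nat.le_of_dvd (Nat.pos_of_ne_zero hl.ne_zero) hpl).trans hlz,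
    Nat.prime_of_mem_primeFactors hp⟩, hQl.coprime_dvd_right hpl⟩

/-- The sieve for the primes of the residue class of `a` modulo `Q` up to `x`: the class is sifted
by the primes up to `z` that do not divide `Q`, at level `z ^ 2`. -/
noncomputable def progressionSieve (Q a x z : ℕ) (hz : 0 < z) : SelbergSieve where
  support := {n ∈ Ioc 0 x | n ≡ a [MOD Q]}
  prodPrimes := coprimePrimorial Q z
  prodPrimes_squarefree := squarefree_coprimePrimorial Q z
  weights := 1
  weights_nonneg := by simp
  totalMass := x / Q
  nu := ⟨fun d ↦ (d : ℝ)⁻¹, by simp⟩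
  nu_mult := ⟨by simp, fun _ ↦ by simp [mul_comm]⟩
  nu_pos_of_prime p hp _ := by simpa using hp.pos
  nu_lt_one_of_prime p hp _ := inv_lt_one_of_one_lt₀ (mod_cast hp.one_lt)
  level := (z : ℝ) ^ 2
  one_le_level := one_le_pow₀ (mod_cast hz)

variable {Q a x z : ℕ}

lemma abs_card_modEq_sub_div_le_one {r : ℕ} (hr : 0 < r) (x v : ℕ) :
    |(#{n ∈ Ioc 0 x | n ≡ v [MOD r]} : ℝ) - x / r| ≤ 1 := by
  have hcount := Nat.Ioc_filter_modEq_card 0 x hr v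
  have hx : ((x : ℚ) - v) / r = x / r + (((0 : ℕ) : ℚ) - v) / r := by push_cast; ring
  have hmono : ⌊(((0 : ℕ) : ℚ) - v) / r⌋ ≤ ⌊((x : ℚ) - v) / r⌋ :=
    Int.floor_le_floor (hx ▸ le_add_of_nonneg_left (by positivity))
  rw [max_eq_left (by linarith)] at hcount
  have hcount' : (#{n ∈ Ioc 0 x | n ≡ v [MOD r]} : ℚ) =
      ⌊((x : ℚ) - v) / r⌋ - ⌊(((0 : ℕ) : ℚ) - v) / r⌋ := mod_cast hcount
  have habs : |(#{n ∈ Ioc 0 x | n ≡ v [MOD r]} : ℚ) - x / r| ≤ 1 := by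
    rw [abs_le]
    constructor <;> linarith [Int.floor_le (((x : ℚ) - v) / r),
      Int.lt_floor_add_one (((x : ℚ) - v) / r), Int.floor_le ((((0 : ℕ) : ℚ) - v) / r),
      Int.lt_floor_add_one ((((0 : ℕ) : ℚ) - v) / r)]
  simpa using (Rat.cast_le (K := ℝ)).2 habs

lemma abs_rem_progressionSieve_le_one (hQ : 0 < Q) (hz : 0 < z) {d : ℕ}
    (hd : d ∣ coprimePrimorial Q z) : |(progressionSieve Q a x z hz).rem d| ≤ 1 := by
  have hd0 : 0 < d := Nat.pos_of_ne_zero (ne_zero_of_dvd_ne_zero (coprimePrimorial_ne_zero Q z) hd)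
  have hcop : Q.Coprime d := (coprime_coprimePrimorial Q z).coprime_dvd_right hd
  obtain ⟨v, hva, hv0⟩ := Nat.chineseRemainder hcop a 0
  have hclass : {n ∈ Ioc 0 x | n ≡ a [MOD Q] ∧ d ∣ n} = {n ∈ Ioc 0 x | n ≡ v [MOD Q * d]} := by
    refine filter_congr fun n _ ↦ ?_
    rw [← Nat.modEq_and_modEq_iff_modEq_mul hcop, ← Nat.modEq_zero_iff_dvd]
    exact and_congr ⟨(·.trans hva.symm), (·.trans hva)⟩ ⟨(·.trans hv0.symm), (·.trans hv0)⟩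
  have hrem : (progressionSieve Q a x z hz).rem d =
      #{n ∈ Ioc 0 x | n ≡ v [MOD Q * d]} - x / (Q * d : ℕ) := by
    simp only [BoundingSieve.rem, multSum, progressionSieve, Pi.one_apply, sum_boole, filter_filter,
      hclass, ArithmeticFunction.coe_mk, Nat.cast_mul]
    field_simp
  rw [hrem]
  exact abs_card_modEq_sub_div_le_one (Nat.mul_pos hQ hd0) x v

lemma mem_sieveDivisors_progressionSieve {hz : 0 < z} {d : ℕ} :
    d ∈ sieveDivisors (progressionSieve Q a x z hz) ↔ d ∣ coprimePrimorial Q z ∧ d ≤ z := by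
  rw [mem_sieveDivisors]
  simp only [progressionSieve]
  rw [sq_le_sq₀ (Nat.cast_nonneg d) (Nat.cast_nonneg z), Nat.cast_le]

lemma sq_sum_inv_nu_progressionSieve_le (hz : 0 < z) :
    (∑ d ∈ sieveDivisors (progressionSieve Q a x z hz),
      ((progressionSieve Q a x z hz).nu d)⁻¹) ^ 2 ≤ (z : ℝ) ^ 4 := by
  set D := sieveDivisors (progressionSieve Q a x z hz)
  have hD : ∀ d ∈ D, d ≤ z := fun d hd ↦ (mem_sieveDivisors_progressionSieve.1 hd).2
  have hsub : D ⊆ Ioc 0 z := fun d hd ↦ mem_Ioc.2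
    ⟨Nat.pos_of_mem_divisors (sieveDivisors_subset hd), hD d hd⟩
  have hcard : #D ≤ z := by simpa using card_le_card hsub
  calc (∑ d ∈ D, ((progressionSieve Q a x z hz).nu d)⁻¹) ^ 2
      = (∑ d ∈ D, (d : ℝ)) ^ 2 := by simp [progressionSieve]
    _ ≤ (#D • (z : ℝ)) ^ 2 := by
        gcongr
        exact sum_le_card_nsmul _ _ _ fun d hd ↦ mod_cast hD d hd
    _ ≤ ((z : ℝ) * z) ^ 2 := by
        rw [nsmul_eq_mul]
        gcongr
    _ = (z : ℝ) ^ 4 := by ring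

lemma card_primes_modEq_le_add_siftedSum (hz : 0 < z) :
    (#{p ∈ x.primesLE | p ≡ a [MOD Q]} : ℝ) ≤ z + (progressionSieve Q a x z hz).siftedSum := by
  have hsub : {p ∈ x.primesLE | p ≡ a [MOD Q]} ⊆ Ioc 0 z ∪
      {n ∈ Ioc 0 x | n ≡ a [MOD Q] ∧ (coprimePrimorial Q z).Coprime n} := by
    intro p hp
    obtain ⟨⟨hpx, hp⟩, hpa⟩ : (p ≤ x ∧ p.Prime) ∧ p ≡ a [MOD Q] := by
      simpa only [mem_filter, Nat.mem_primesLE] using hp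
    rw [mem_union, mem_Ioc, mem_filter, mem_Ioc]
    refine (le_or_gt p z).imp (⟨hp.pos, ·⟩) fun hzp ↦ ⟨⟨hp.pos, hpx⟩, hpa, ?_⟩
    rw [Nat.coprime_comm, hp.coprime_iff_not_dvd]
    intro hdvd
    have hmem := Nat.mem_primeFactors.2 ⟨hp, hdvd, coprimePrimorial_ne_zero Q z⟩
    rw [primeFactors_coprimePrimorial] at hmem
    exact hzp.not_ge (Nat.le_of_mem_primesLE (mem_of_mem_filter _ hmem))
  have hsifted : (progressionSieve Q a x z hz).siftedSum =
      #{n ∈ Ioc 0 x | n ≡ a [MOD Q] ∧ (coprimePrimorial Q z).Coprime n} := by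
    rw [siftedSum, ← sum_filter, ← filter_filter, cast_card]
    rfl
  rw [hsifted]
  exact_mod_cast (card_le_card hsub).trans ((card_union_le _ _).trans_eq (by simp))

lemma totient_div_mul_harmonic_le (Q K : ℕ) :
    (φ Q : ℝ) / Q * harmonic K ≤ ∑ n ∈ Ico 1 (K * Q + 1) with Q.Coprime n, (n : ℝ)⁻¹ := by
  induction K with
  | zero => simp
  | succ K ih =>
    have hblock : (φ Q : ℝ) / Q * (K + 1 : ℝ)⁻¹ ≤
        ∑ n ∈ Ico (K * Q + 1) (K * Q + 1 + Q) with Q.Coprime n, (n : ℝ)⁻¹ :=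
      calc (φ Q : ℝ) / Q * (K + 1 : ℝ)⁻¹
          = #{n ∈ Ico (K * Q + 1) (K * Q + 1 + Q) | Q.Coprime n} • ((K + 1) * Q : ℝ)⁻¹ := by
            rw [Nat.filter_coprime_Ico_eq_totient, nsmul_eq_mul, mul_inv_rev, div_eq_mul_inv,
              mul_assoc]
        _ ≤ _ := card_nsmul_le_sum _ _ _ fun n hn ↦ by
            obtain ⟨hn, -⟩ := mem_filter.1 hn
            rw [mem_Ico] at hn
            have hn0 : (0 : ℝ) < n := mod_cast (by lia)
            have hnQ : n ≤ (K + 1) * Q := by lia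
            exact inv_anti₀ hn0 (mod_cast hnQ)
    have hsplit := sum_Ico_consecutive (fun n : ℕ ↦ if Q.Coprime n then (n : ℝ)⁻¹ else 0)
      (show 1 ≤ K * Q + 1 by lia) (show K * Q + 1 ≤ K * Q + 1 + Q by lia)
    simp only [← sum_filter] at hsplit
    rw [show (K + 1) * Q + 1 = K * Q + 1 + Q by ring, ← hsplit, harmonic_succ]
    push_cast
    rw [mul_add]
    exact add_le_add ih hblock

lemma sum_inv_coprime_le_two_mul_sum_squarefree (Q z : ℕ) :
    ∑ n ∈ Ico 1 (z + 1) with Q.Coprime n, (n : ℝ)⁻¹ ≤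
      2 * ∑ l ∈ Ico 1 (z + 1) with Squarefree l ∧ Q.Coprime l, (l : ℝ)⁻¹ := by
  set L := {l ∈ Ico 1 (z + 1) | Squarefree l ∧ Q.Coprime l} with hL
  have hsub : {n ∈ Ico 1 (z + 1) | Q.Coprime n} ⊆
      (Ico 1 (z + 1) ×ˢ L).image fun t : ℕ × ℕ ↦ t.1 ^ 2 * t.2 := by
    intro n hn
    obtain ⟨l, b, hbl, hl⟩ := Nat.sq_mul_squarefree n
    simp only [mem_filter, mem_Ico] at hn
    have hb : 0 < b := Nat.pos_of_ne_zero fun h ↦ by simp [h] at hbl; lia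
    have hl0 : 0 < l := Nat.pos_of_ne_zero hl.ne_zero
    have hln : l ≤ n := hbl ▸ Nat.le_mul_of_pos_left l (by positivity)
    have hbn : b ≤ n := hbl ▸ (Nat.le_self_pow two_ne_zero b).trans (Nat.le_mul_of_pos_right _ hl0)
    simp only [mem_image, mem_product, hL, mem_filter, mem_Ico, Prod.exists]
    exact ⟨b, l, ⟨⟨hb, by lia⟩, ⟨hl0, by lia⟩, hl,
      hn.2.coprime_dvd_right (hbl ▸ dvd_mul_left l _)⟩, hbl⟩
  have hsq : ∑ b ∈ Ico 1 (z + 1), ((b : ℝ) ^ 2)⁻¹ ≤ 2 := by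
    rw [show Ico 1 (z + 1) = Ioo 0 (z + 1) from rfl]
    simpa using sum_Ioo_inv_sq_le (α := ℝ) 0 (z + 1)
  calc ∑ n ∈ Ico 1 (z + 1) with Q.Coprime n, (n : ℝ)⁻¹
      ≤ ∑ n ∈ (Ico 1 (z + 1) ×ˢ L).image fun t : ℕ × ℕ ↦ t.1 ^ 2 * t.2, (n : ℝ)⁻¹ :=
        sum_le_sum_of_subset_of_nonneg hsub fun _ _ _ ↦ by positivity
    _ ≤ ∑ t ∈ Ico 1 (z + 1) ×ˢ L, ((t.1 ^ 2 * t.2 : ℕ) : ℝ)⁻¹ :=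
        sum_image_le_of_nonneg fun _ _ ↦ by positivity
    _ = (∑ b ∈ Ico 1 (z + 1), ((b : ℝ) ^ 2)⁻¹) * ∑ l ∈ L, (l : ℝ)⁻¹ := by
        simp [sum_mul_sum, sum_product, mul_comm]
    _ ≤ 2 * ∑ l ∈ L, (l : ℝ)⁻¹ := by gcongr

lemma totient_div_mul_log_le_two_mul_selbergSum {K : ℕ} (hK : 0 < K * Q) :
    (φ Q : ℝ) / Q * Real.log K ≤ 2 * selbergSum (progressionSieve Q a x (K * Q) hK) := by
  have hK0 : 0 < K := Nat.pos_of_mul_pos_right hK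
  have hsub : {l ∈ Ico 1 (K * Q + 1) | Squarefree l ∧ Q.Coprime l} ⊆
      sieveDivisors (progressionSieve Q a x (K * Q) hK) := fun l hl ↦ by
    simp only [mem_filter, mem_Ico] at hl
    exact mem_sieveDivisors_progressionSieve.2
      ⟨dvd_coprimePrimorial hl.2.1 hl.2.2 (by lia), by lia⟩
  calc (φ Q : ℝ) / Q * Real.log K
      ≤ (φ Q : ℝ) / Q * harmonic K := by
        gcongr
        refine le_trans ?_ (log_add_one_le_harmonic K)
        gcongr
        simp
    _ ≤ 2 * ∑ l ∈ Ico 1 (K * Q + 1) with Squarefree l ∧ Q.Coprime l, (l : ℝ)⁻¹ :=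
        (totient_div_mul_harmonic_le Q K).trans (sum_inv_coprime_le_two_mul_sum_squarefree Q _)
    _ ≤ 2 * ∑ l ∈ sieveDivisors (progressionSieve Q a x (K * Q) hK), (l : ℝ)⁻¹ := by
        gcongr
    _ ≤ 2 * selbergSum (progressionSieve Q a x (K * Q) hK) := by
        gcongr
        exact sum_nu_le_selbergSum

theorem card_primes_modEq_le {K : ℕ} (hQ : 0 < Q) (hK : 1 < K) :
    (#{p ∈ x.primesLE | p ≡ a [MOD Q]} : ℝ) ≤
      2 * x / (φ Q * Real.log K) + 2 * (K * Q : ℝ) ^ 4 := by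
  have hz : 0 < K * Q := Nat.mul_pos (by lia) hQ
  have hlog : 0 < Real.log K := Real.log_pos (mod_cast hK)
  set S := selbergSum (progressionSieve Q a x (K * Q) hz)
  have hS : (φ Q : ℝ) / Q * Real.log K / 2 ≤ S := by
    linarith [totient_div_mul_log_le_two_mul_selbergSum (a := a) (x := x) hz]
  have hsieve := siftedSum_le_div_selbergSum_add fun d hd ↦
    abs_rem_progressionSieve_le_one (a := a) (x := x) hQ hz hd
  have hz1 : (1 : ℝ) ≤ (K * Q : ℕ) := mod_cast hz
  calc (#{p ∈ x.primesLE | p ≡ a [MOD Q]} : ℝ)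
      ≤ (K * Q : ℕ) + (progressionSieve Q a x (K * Q) hz).siftedSum :=
        card_primes_modEq_le_add_siftedSum hz
    _ ≤ (K * Q : ℕ) ^ 4 + (x / Q / S + 1 * (K * Q : ℕ) ^ 4) := by
        gcongr
        · exact le_self_pow₀ hz1 (by norm_num)
        · grw [hsieve, sq_sum_inv_nu_progressionSieve_le hz]
          rfl
    _ ≤ (K * Q : ℕ) ^ 4 + (x / Q / (φ Q / Q * Real.log K / 2) + 1 * (K * Q : ℕ) ^ 4) := by
        gcongr
    _ = 2 * x / (φ Q * Real.log K) + 2 * (K * Q : ℝ) ^ 4 := by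
        push_cast
        field_simp
        ring

lemma eventually_div_log_le_two_mul_primeCounting :
    ∀ᶠ x : ℕ in atTop, (x : ℝ) / Real.log x ≤ 2 * π x := by
  have hlog_small : ∀ᶠ x : ℕ in atTop, Real.log (x + 1) ≤ 0.09 * (x + 1) := by
    have hlim : Tendsto (fun x : ℕ ↦ (x : ℝ) + 1) atTop atTop :=
      tendsto_atTop_add_const_right _ _ tendsto_natCast_atTop_atTop
    have hbound := Real.isLittleO_log_id_atTop.bound (by norm_num : (0 : ℝ) < 0.09)
    filter_upwards [hlim.eventually hbound] with x hx
    have hx0 : (0 : ℝ) ≤ x + 1 := by positivity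
    simpa [abs_of_nonneg hx0] using (le_abs_self _).trans hx
  filter_upwards [hlog_small, eventually_ge_atTop 2] with x hx hx2
  have hx2' : (2 : ℝ) ≤ x := mod_cast hx2
  have hlog : 0 < Real.log x := Real.log_pos (by linarith)
  have hhalf : (x : ℝ) / 2 ≤ x * Real.log 2 - Real.log (x + 1) := by
    nlinarith [Real.log_two_gt_d9]
  calc (x : ℝ) / Real.log x = 2 * (x / 2 / Real.log x) := by ring
    _ ≤ 2 * ((x * Real.log 2 - Real.log (x + 1)) / Real.log x) := by gcongr
    _ ≤ 2 * π x := by grw [Chebyshev.pi_ge x]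

lemma log_le_mul_log_nthRoot {n x : ℕ} (hn : n ≠ 0) (hx : 2 ≤ Nat.nthRoot n x) :
    Real.log x ≤ 2 * n * Real.log (Nat.nthRoot n x) := by
  set K := Nat.nthRoot n x
  have hKx : K ^ n ≤ x := Nat.pow_nthRoot_le (.inl hn)
  have hxK : x ≤ K ^ (2 * n) :=
    calc x ≤ (K + 1) ^ n := (Nat.lt_pow_nthRoot_add_one hn x).le
      _ ≤ (K ^ 2) ^ n := by gcongr; nlinarith
      _ = K ^ (2 * n) := (pow_mul K 2 n).symm
  have hx0 : (0 : ℝ) < x := mod_cast (Nat.pow_pos (by lia)).trans_le hKx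
  simpa using Real.log_le_log hx0 (mod_cast hxK : (x : ℝ) ≤ (K : ℝ) ^ (2 * n))

lemma pow_four_mul_le_of_pow_eight_le {K : ℕ} (hQK : 32 * Q ^ 5 ≤ K) (hKx : K ^ 8 ≤ x) :
    2 * (K * Q) ^ 4 * (Q * (16 * K)) ≤ x := by
  rcases K.eq_zero_or_pos with rfl | hK
  · simp
  calc 2 * (K * Q) ^ 4 * (Q * (16 * K)) = 32 * Q ^ 5 * K ^ 5 := by ring
    _ ≤ K * K ^ 5 := by gcongr
    _ = K ^ 6 := (pow_succ' K 5).symm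
    _ ≤ K ^ 8 := Nat.pow_le_pow_right hK (by norm_num)
    _ ≤ x := hKx

lemma eventually_card_primes_modEq_le_div_log (hQ : 0 < Q) :
    ∀ᶠ x : ℕ in atTop, ∀ a,
      (#{p ∈ x.primesLE | p ≡ a [MOD Q]} : ℝ) ≤ 33 / φ Q * (x / Real.log x) := by
  filter_upwards [eventually_ge_atTop ((32 * Q ^ 5) ^ 8)] with x hx a
  -- With `K` the integral eighth root of `x`, the error term `(K * Q) ^ 4` is of order `√x`.
  set K := Nat.nthRoot 8 x
  have hKQ : 32 * Q ^ 5 ≤ K := (Nat.le_nthRoot_iff (by norm_num)).2 hx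
  have hKx : K ^ 8 ≤ x := Nat.pow_nthRoot_le (by norm_num)
  have hK : 32 ≤ K := (Nat.le_mul_of_pos_right 32 (by positivity)).trans hKQ
  have hlogK : 0 < Real.log K := Real.log_pos (mod_cast (by lia))
  have hK8 : (1 : ℝ) < (K : ℝ) ^ 8 := one_lt_pow₀ (mod_cast (by lia)) (by norm_num)
  have hlogx : 0 < Real.log x := Real.log_pos (hK8.trans_le (mod_cast hKx))
  have hlog : Real.log x ≤ 16 * Real.log K := by
    convert! log_le_mul_log_nthRoot (by norm_num : 8 ≠ 0) (le_trans (by norm_num) hK : 2 ≤ K)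
    norm_num
  have hmain : 2 * x / (φ Q * Real.log K) ≤ 32 / φ Q * (x / Real.log x) := by
    rw [div_mul_div_comm, div_le_div_iff₀ (by positivity) (by positivity)]
    have := mul_le_mul_of_nonneg_left hlog (by positivity : (0 : ℝ) ≤ 2 * x * φ Q)
    linarith
  have herror : 2 * (K * Q : ℝ) ^ 4 ≤ 1 / φ Q * (x / Real.log x) := by
    have hlog' : Real.log x ≤ 16 * K := by
      linarith [Real.log_le_self (Nat.cast_nonneg (α := ℝ) K)]
    have hφQ : (φ Q : ℝ) ≤ Q := mod_cast Nat.totient_le Q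
    rw [div_mul_div_comm, le_div_iff₀ (by positivity), one_mul]
    calc 2 * (K * Q : ℝ) ^ 4 * (φ Q * Real.log x)
        ≤ 2 * (K * Q : ℝ) ^ 4 * (Q * (16 * K)) := by gcongr
      _ ≤ (x : ℝ) := mod_cast pow_four_mul_le_of_pow_eight_le hKQ hKx
  calc (#{p ∈ x.primesLE | p ≡ a [MOD Q]} : ℝ)
      ≤ 2 * x / (φ Q * Real.log K) + 2 * (K * Q : ℝ) ^ 4 := card_primes_modEq_le hQ (by lia)
    _ ≤ 32 / φ Q * (x / Real.log x) + 1 / φ Q * (x / Real.log x) := add_le_add hmain herror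
    _ = 33 / φ Q * (x / Real.log x) := by ring

theorem eventually_card_primes_modEq_le (hQ : 0 < Q) :
    ∀ᶠ x : ℕ in atTop, ∀ a, (#{p ∈ x.primesLE | p ≡ a [MOD Q]} : ℝ) ≤ 66 / φ Q * π x := by
  filter_upwards [eventually_card_primes_modEq_le_div_log hQ,
    eventually_div_log_le_two_mul_primeCounting] with x hcount hπ a
  calc (#{p ∈ x.primesLE | p ≡ a [MOD Q]} : ℝ)
      ≤ 33 / φ Q * (x / Real.log x) := hcount a
    _ ≤ 33 / φ Q * (2 * π x) := by gcongr
    _ = 66 / φ Q * π x := by ring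

end BrunTitchmarsh

section AlmostAllPrimes

open Finset Asymptotics
open scoped Nat Nat.Prime
open scoped Classical in
/-- The filter of the sets that contain almost all primes, in the sense of relative density:
`∀ᶠ p in almostAllPrimes, A p` says that only `o(π x)` of the primes up to `x` violate `A`. -/
def almostAllPrimes : Filter ℕ where
  sets := {S | (fun x : ℕ ↦ (#{p ∈ x.primesLE | p ∉ S} : ℝ)) =o[atTop] fun x ↦ (π x : ℝ)}
  univ_sets := by simp
  sets_of_superset {S T} hS hST := by
    refine IsBigO.trans_isLittleO (.of_bound 1 (.of_forall fun x ↦ ?_)) hS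
    simp only [Real.norm_natCast, one_mul, Nat.cast_le]
    gcongr
  inter_sets {S T} hS hT := by
    refine IsBigO.trans_isLittleO (.of_bound 1 (.of_forall fun x ↦ ?_)) (hS.add hT)
    rw [Real.norm_natCast, ← Nat.cast_add, Real.norm_natCast, one_mul, Nat.cast_le]
    simp only [Set.mem_inter_iff, not_and_or, filter_or]
    exact card_union_le _ _

lemma eventually_almostAllPrimes_iff {A : ℕ → Prop} [DecidablePred A] :
    (∀ᶠ p in almostAllPrimes, A p) ↔
      (fun x : ℕ ↦ (#{p ∈ x.primesLE | ¬A p} : ℝ)) =o[atTop] fun x ↦ (π x : ℝ) := by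
  change IsLittleO .. ↔ _
  congr!

lemma eventually_almostAllPrimes_of_forall_card_le {A : ℕ → Prop} [DecidablePred A]
    (hA : ∀ ε > 0, ∃ c : ℝ, ∀ᶠ x : ℕ in atTop, #{p ∈ x.primesLE | ¬A p} ≤ ε * π x + c) :
    ∀ᶠ p in almostAllPrimes, A p := by
  rw [eventually_almostAllPrimes_iff, isLittleO_iff]
  intro ε hε
  obtain ⟨c, hc⟩ := hA (ε / 2) (half_pos hε)
  have hπ : Tendsto (fun x : ℕ ↦ (π x : ℝ)) atTop atTop :=
    tendsto_natCast_atTop_atTop.comp Nat.tendsto_primeCounting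
  filter_upwards [hc, hπ.eventually_ge_atTop (c / (ε / 2))] with x hx hπx
  rw [div_le_iff₀' (half_pos hε)] at hπx
  rw [Real.norm_natCast, Real.norm_natCast]
  linarith

lemma almostAllPrimes_le_atTop : almostAllPrimes ≤ atTop := by
  refine atTop_basis.ge_iff.2 fun N _ ↦ ?_
  refine eventually_almostAllPrimes_of_forall_card_le fun ε hε ↦ ⟨N, .of_forall fun x ↦ ?_⟩
  have hsub : {p ∈ x.primesLE | p ∉ Set.Ici N} ⊆ range N := fun p hp ↦ by
    simpa using (mem_filter.1 hp).2
  have hcard : (#{p ∈ x.primesLE | p ∉ Set.Ici N} : ℝ) ≤ N := by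
    simpa using card_le_card hsub
  exact hcard.trans (le_add_of_nonneg_left (by positivity))

lemma tendsto_card_div_primeCounting_of_eventually {A : ℕ → Prop} [DecidablePred A]
    (hA : ∀ᶠ p in almostAllPrimes, A p) :
    Tendsto (fun x : ℕ ↦ (#{p ∈ x.primesLE | A p} : ℝ) / π x) atTop (𝓝 1) := by
  have hlim := (eventually_almostAllPrimes_iff.1 hA).tendsto_div_nhds_zero.const_sub 1
  rw [sub_zero] at hlim
  refine hlim.congr' ?_
  filter_upwards [Nat.tendsto_primeCounting.eventually_gt_atTop 0] with x hx
  have hπ : (π x : ℝ) ≠ 0 := mod_cast hx.ne'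
  have hsplit : (#{p ∈ x.primesLE | A p} : ℝ) + #{p ∈ x.primesLE | ¬A p} = π x := by
    exact_mod_cast (card_filter_add_card_filter_not A).trans (Nat.primesLE_card_eq_primeCounting x)
  field_simp
  linarith

end AlmostAllPrimes

section AvoidedDivisors

open Finset
open scoped Nat Nat.Prime

lemma eventually_card_primes_mod_mem_le {Q : ℕ} (hQ : 0 < Q) (B : Finset ℕ) :
    ∀ᶠ x : ℕ in atTop, (#{p ∈ x.primesLE | p % Q ∈ B} : ℝ) ≤ 66 * (#B / φ Q) * π x := by
  filter_upwards [eventually_card_primes_modEq_le hQ] with x hx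
  have hsub : {p ∈ x.primesLE | p % Q ∈ B} ⊆
      B.biUnion fun a ↦ {p ∈ x.primesLE | p ≡ a [MOD Q]} := fun p hp ↦ by
    rw [mem_filter] at hp
    exact mem_biUnion.2 ⟨p % Q, hp.2, mem_filter.2 ⟨hp.1, (Nat.mod_modEq p Q).symm⟩⟩
  calc (#{p ∈ x.primesLE | p % Q ∈ B} : ℝ)
      ≤ ∑ a ∈ B, (#{p ∈ x.primesLE | p ≡ a [MOD Q]} : ℝ) :=
        mod_cast (card_le_card hsub).trans card_biUnion_le
    _ ≤ #B • (66 / φ Q * π x) := sum_le_card_nsmul _ _ _ fun a _ ↦ hx a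
    _ = 66 * (#B / φ Q) * π x := by rw [nsmul_eq_mul]; ring

lemma card_filter_range_prod_mod_mem_le {P : Finset ℕ}
    (hP : (P : Set ℕ).Pairwise Nat.Coprime) (t : ℕ → Finset ℕ) :
    #{a ∈ range (∏ q ∈ P, q) | ∀ q ∈ P, a % q ∈ t q} ≤ ∏ q ∈ P, #(t q) := by
  rw [← card_pi]
  refine card_le_card_of_injOn (fun a q _ ↦ a % q) (fun a ha ↦ ?_) fun a ha b hb hab ↦ ?_
  · exact mem_pi.2 (mem_filter.1 ha).2
  · rw [mem_coe, mem_filter, mem_range] at ha hb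
    have hdvd : ∀ q ∈ P, (q : ℤ) ∣ b - a := fun q hq ↦
      Nat.modEq_iff_dvd.1 (congr_fun (congr_fun hab q) hq)
    have hprod : (∏ q ∈ P, (q : ℤ)) ∣ b - a :=
      prod_dvd_of_coprime (fun p hp q hq hpq ↦ (hP hp hq hpq).isCoprime) hdvd
    rw [← Nat.cast_prod] at hprod
    exact (Nat.modEq_iff_dvd.2 hprod).eq_of_lt_of_lt ha.1 hb.1

variable {s : ℤ}

lemma mod_mem_range_sdiff {p q : ℕ} (hq : 0 < q) (hqp : ¬q ∣ p) (hqs : ¬(q : ℤ) ∣ p - s) :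
    p % q ∈ range q \ {0, (s % q).toNat} := by
  have hs : ((s % q).toNat : ℤ) = s % q := Int.toNat_of_nonneg (Int.emod_nonneg s (by lia))
  rw [Finset.mem_sdiff, mem_range, mem_insert, mem_singleton, not_or]
  refine ⟨Nat.mod_lt p hq, fun h ↦ hqp (Nat.dvd_of_mod_eq_zero h), fun h ↦ hqs ?_⟩
  have hmod : (p : ℤ) % q = s % q := by rw [← hs, ← h, Int.natCast_mod]
  exact Int.ModEq.dvd (Int.ModEq.symm hmod)

lemma card_range_sdiff_pair {q : ℕ} (hq : 0 < q) (hqs : ¬(q : ℤ) ∣ s) :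
    #(range q \ {0, (s % q).toNat}) = q - 2 := by
  have hq' : (0 : ℤ) < q := mod_cast hq
  have hlt := Int.emod_lt_of_pos s hq'
  have hnonneg := Int.emod_nonneg s hq'.ne'
  have hne : s % q ≠ 0 := fun h ↦ hqs (Int.dvd_of_emod_eq_zero h)
  have hsub : {0, (s % q).toNat} ⊆ range q := by
    intro r hr
    rw [mem_insert, mem_singleton] at hr
    rw [mem_range]
    lia
  rw [card_sdiff_of_subset hsub, card_range, card_pair (by lia)]

lemma totient_prod_primes {P : Finset ℕ} (hP : ∀ q ∈ P, q.Prime) :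
    φ (∏ q ∈ P, q) = ∏ q ∈ P, (q - 1) := by
  induction P using Finset.induction_on with
  | empty => simp
  | insert r T hr ih =>
    rw [forall_mem_insert] at hP
    have hcop : r.Coprime (∏ q ∈ T, q) := Nat.Coprime.prod_right fun q hq ↦
      (Nat.coprime_primes hP.1 (hP.2 q hq)).2 fun h ↦ hr (h ▸ hq)
    rw [prod_insert hr, prod_insert hr, Nat.totient_mul hcop, Nat.totient_prime hP.1, ih hP.2]

lemma prod_sub_two_div_totient_le {P : Finset ℕ} (hP : ∀ q ∈ P, q.Prime) :
    ((∏ q ∈ P, (q - 2) : ℕ) : ℝ) / φ (∏ q ∈ P, q) ≤ Real.exp (-∑ q ∈ P, 1 / (q : ℝ)) := by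
  rw [totient_prod_primes hP, Nat.cast_prod, Nat.cast_prod, ← prod_div_distrib, ← sum_neg_distrib,
    Real.exp_sum]
  refine prod_le_prod (fun q _ ↦ by positivity) fun q hq ↦ ?_
  have hq2 : (2 : ℝ) ≤ q := mod_cast (hP q hq).two_le
  rw [Nat.cast_sub (hP q hq).two_le, Nat.cast_sub (hP q hq).one_le]
  calc ((q : ℝ) - (2 : ℕ)) / (q - (1 : ℕ)) ≤ 1 - 1 / q := by
        push_cast
        rw [one_sub_div (by positivity), div_le_div_iff₀ (by linarith) (by linarith)]
        nlinarith
    _ ≤ Real.exp (-(1 / q)) := Real.one_sub_le_exp_neg _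

lemma eventually_card_primes_forall_not_dvd_sub_le {P : Finset ℕ} (hP : ∀ q ∈ P, q.Prime)
    (hPs : ∀ q ∈ P, ¬(q : ℤ) ∣ s) :
    ∀ᶠ x : ℕ in atTop, (#(x.primesLE.filter fun p : ℕ ↦ ∀ q ∈ P, ¬(q : ℤ) ∣ p - s) : ℝ) ≤
      66 * Real.exp (-∑ q ∈ P, 1 / (q : ℝ)) * π x + #P := by
  set Q := ∏ q ∈ P, q
  set t : ℕ → Finset ℕ := fun q ↦ range q \ {0, (s % q).toNat}
  set B : Finset ℕ := {a ∈ range Q | ∀ q ∈ P, a % q ∈ t q}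
  have hQ : 0 < Q := prod_pos fun q hq ↦ (hP q hq).pos
  have hB : #B ≤ ∏ q ∈ P, (q - 2) :=
    (card_filter_range_prod_mod_mem_le
      (fun p hp q hq ↦ (Nat.coprime_primes (hP p hp) (hP q hq)).2) t).trans_eq
      (prod_congr rfl fun q hq ↦ card_range_sdiff_pair (hP q hq).pos (hPs q hq))
  have hratio : (#B : ℝ) / φ Q ≤ Real.exp (-∑ q ∈ P, 1 / (q : ℝ)) :=
    le_trans (by gcongr) (prod_sub_two_div_totient_le hP)
  filter_upwards [eventually_card_primes_mod_mem_le hQ B] with x hx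
  have hsub : (x.primesLE.filter fun p : ℕ ↦ ∀ q ∈ P, ¬(q : ℤ) ∣ p - s) ⊆
      {p ∈ x.primesLE | p % Q ∈ B} ∪ P := fun p hp ↦ by
    obtain ⟨hpx, hps⟩ := mem_filter.1 hp
    rw [mem_union, mem_filter, or_iff_not_imp_right]
    refine fun hpP ↦ ⟨hpx, mem_filter.2 ⟨mem_range.2 (Nat.mod_lt p hQ), fun q hq ↦ ?_⟩⟩
    have hqp : ¬q ∣ p := fun h ↦
      hpP ((Nat.prime_dvd_prime_iff_eq (hP q hq) (Nat.prime_of_mem_primesLE hpx)).1 h ▸ hq)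
    rw [Nat.mod_mod_of_dvd p (dvd_prod_of_mem _ hq)]
    exact mod_mem_range_sdiff (hP q hq).pos hqp (hps q hq)
  calc (#(x.primesLE.filter fun p : ℕ ↦ ∀ q ∈ P, ¬(q : ℤ) ∣ p - s) : ℝ)
      ≤ #{p ∈ x.primesLE | p % Q ∈ B} + #P :=
        mod_cast (card_le_card hsub).trans (card_union_le _ _)
    _ ≤ 66 * (#B / φ Q) * π x + #P := by gcongr
    _ ≤ 66 * Real.exp (-∑ q ∈ P, 1 / (q : ℝ)) * π x + #P := by gcongr

lemma exists_finset_subset_le_sum_of_not_summable {S : Set ℕ} {f : ℕ → ℝ} (hf : 0 ≤ f)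
    (hS : ¬Summable (S.indicator f)) (k : ℕ) (C : ℝ) :
    ∃ P : Finset ℕ, ↑P ⊆ S ∧ (∀ q ∈ P, k ≤ q) ∧ C ≤ ∑ q ∈ P, f q := by
  classical
  have hnonneg : ∀ q, 0 ≤ S.indicator f (q + k) := fun q ↦ Set.indicator_nonneg (fun q _ ↦ hf q) _
  rw [← summable_nat_add_iff k, not_summable_iff_tendsto_nat_atTop_of_nonneg hnonneg] at hS
  obtain ⟨N, hN⟩ := (hS.eventually_ge_atTop C).exists
  refine ⟨{q ∈ Ico k (N + k) | q ∈ S}, fun q hq ↦ (mem_filter.1 hq).2,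
    fun q hq ↦ (mem_Ico.1 (mem_filter.1 hq).1).1, hN.trans_eq ?_⟩
  rw [sum_filter, sum_Ico_eq_sum_range, Nat.add_sub_cancel]
  simp only [Set.indicator_apply, add_comm]

theorem eventually_almostAllPrimes_exists_dvd_sub (hs : s ≠ 0) {S : Set ℕ}
    (hprime : ∀ q ∈ S, q.Prime) (hS : ¬Summable (S.indicator fun q ↦ 1 / (q : ℝ))) :
    ∀ᶠ p : ℕ in almostAllPrimes, ∃ q ∈ S, (q : ℤ) ∣ p - s := by
  classical
  refine eventually_almostAllPrimes_of_forall_card_le fun ε hε ↦ ?_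
  obtain ⟨P, hPS, hPs, hsum⟩ := exists_finset_subset_le_sum_of_not_summable
    (fun q ↦ by positivity) hS (s.natAbs + 1) (Real.log (66 / ε))
  have hexp : 66 * Real.exp (-∑ q ∈ P, 1 / (q : ℝ)) ≤ ε := by
    rw [Real.exp_neg, ← div_eq_mul_inv, div_le_comm₀ (Real.exp_pos _) hε]
    exact (Real.log_le_iff_le_exp (by positivity)).1 hsum
  have hndvd : ∀ q ∈ P, ¬(q : ℤ) ∣ s := fun q hq h ↦
    (hPs q hq).not_gt (Nat.lt_succ_of_le (Int.natAbs_le_of_dvd_ne_zero h hs))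
  refine ⟨#P, ?_⟩
  filter_upwards [eventually_card_primes_forall_not_dvd_sub_le (fun q hq ↦ hprime q (hPS hq)) hndvd]
    with x hx
  have hsub : (x.primesLE.filter fun p : ℕ ↦ ¬∃ q ∈ S, (q : ℤ) ∣ p - s) ⊆
      (x.primesLE.filter fun p : ℕ ↦ ∀ q ∈ P, ¬(q : ℤ) ∣ p - s) := by
    gcongr with p
    exact fun h q hq hdvd ↦ h ⟨q, hPS hq, hdvd⟩
  calc (#(x.primesLE.filter fun p : ℕ ↦ ¬∃ q ∈ S, (q : ℤ) ∣ p - s) : ℝ)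
      ≤ #(x.primesLE.filter fun p : ℕ ↦ ∀ q ∈ P, ¬(q : ℤ) ∣ p - s) := mod_cast card_le_card hsub
    _ ≤ 66 * Real.exp (-∑ q ∈ P, 1 / (q : ℝ)) * π x + #P := hx
    _ ≤ ε * π x + #P := by gcongr

end AvoidedDivisors

section PrimesInProgressions

open ArithmeticFunction.vonMangoldt

lemma mul_residueClass_div_rpow_le {n : ℕ} (a : ZMod n) {δ : ℝ} (hδ : 0 < δ) (hδ1 : δ ≤ 1) (k : ℕ) :
    δ * (residueClass a k / (k : ℝ) ^ (1 + δ)) ≤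
      {p : ℕ | p.Prime ∧ (p : ZMod n) = a}.indicator (fun p ↦ 1 / (p : ℝ)) k +
        (if k.Prime then 0 else residueClass a k) / k := by
  rcases k.eq_zero_or_pos with rfl | hk
  · simp [Set.indicator_apply]
  have hk' : (0 : ℝ) < k := mod_cast hk
  have hkδ : 1 ≤ (k : ℝ) ^ δ := Real.one_le_rpow (mod_cast hk) hδ.le
  rw [Real.rpow_add hk', Real.rpow_one]
  by_cases hprime : k.Prime
  · by_cases hka : (k : ZMod n) = a
    · have hmem : k ∈ {p : ℕ | p.Prime ∧ (p : ZMod n) = a} := ⟨hprime, hka⟩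
      have hlog : Real.log k ≤ (k : ℝ) ^ δ / δ := Real.log_le_rpow_div hk'.le hδ
      rw [if_pos hprime, Set.indicator_of_mem hmem, residueClass,
        Set.indicator_of_mem (show k ∈ {k : ℕ | (k : ZMod n) = a} from hka),
        ArithmeticFunction.vonMangoldt_apply_prime hprime, zero_div, add_zero, ← mul_div_assoc,
        div_le_div_iff₀ (by positivity) hk']
      rw [le_div_iff₀' hδ] at hlog
      nlinarith
    · simp [residueClass, hka, hprime]
  · have hnonneg := residueClass_nonneg a k
    have hmem : k ∉ {p : ℕ | p.Prime ∧ (p : ZMod n) = a} := fun h ↦ hprime h.1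
    rw [if_neg hprime, Set.indicator_of_notMem hmem, zero_add]
    calc δ * (residueClass a k / (k * (k : ℝ) ^ δ)) ≤ 1 * (residueClass a k / (k * 1)) := by
          gcongr
      _ = residueClass a k / k := by rw [one_mul, mul_one]

lemma tendsto_mul_div_rpow_one_add_nhdsGT_zero (c : ℝ) (k : ℕ) :
    Tendsto (fun δ : ℝ ↦ δ * (c / (k : ℝ) ^ (1 + δ))) (𝓝[>] 0) (𝓝 0) := by
  have hid : Tendsto (fun δ : ℝ ↦ δ) (𝓝[>] 0) (𝓝 0) :=
    tendsto_nhdsWithin_of_tendsto_nhds tendsto_id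
  rcases k.eq_zero_or_pos with rfl | hk
  · refine tendsto_const_nhds.congr' ?_
    filter_upwards [self_mem_nhdsWithin] with δ (hδ : 0 < δ)
    rw [Nat.cast_zero, Real.zero_rpow (by positivity), div_zero, mul_zero]
  have hpow : Tendsto (fun δ : ℝ ↦ (k : ℝ) ^ (1 + δ)) (𝓝[>] 0) (𝓝 ((k : ℝ) ^ (1 + 0 : ℝ))) :=
    tendsto_const_nhds.rpow (hid.const_add 1) (.inl (by positivity))
  simpa only [Pi.div_apply, zero_mul] using
    hid.mul ((tendsto_const_nhds (x := c)).div hpow (by positivity))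

theorem not_summable_one_div_prime_eq_mod {n : ℕ} [NeZero n] {a : ZMod n} (ha : IsUnit a) :
    ¬Summable ({p : ℕ | p.Prime ∧ (p : ZMod n) = a}.indicator fun p ↦ 1 / (p : ℝ)) := by
  -- As `δ * log k ≤ k ^ δ`, summability makes `δ` times the L-series of the residue class at
  -- `1 + δ` tend to `0` by dominated convergence, but its limit inferior is at least `1 / φ n`.
  intro hsum
  obtain ⟨C, hC⟩ := LSeries_residueClass_lower_bound ha
  have hδ : ∀ᶠ δ : ℝ in 𝓝[>] 0, δ ∈ Set.Ioc 0 1 := Ioc_mem_nhdsGT one_pos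
  have hupper : Tendsto (fun δ : ℝ ↦ ∑' k : ℕ, δ * (residueClass a k / (k : ℝ) ^ (1 + δ)))
      (𝓝[>] 0) (𝓝 0) := by
    suffices h : Tendsto (fun δ : ℝ ↦ ∑' k : ℕ, δ * (residueClass a k / (k : ℝ) ^ (1 + δ)))
        (𝓝[>] 0) (𝓝 (∑' _ : ℕ, 0)) by rwa [tsum_zero] at h
    refine tendsto_tsum_of_dominated_convergence
      (hsum.add (summable_residueClass_non_primes_div a))
      (fun k ↦ tendsto_mul_div_rpow_one_add_nhdsGT_zero _ k) ?_
    filter_upwards [hδ] with δ hδ k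
    have := residueClass_nonneg a k
    have := hδ.1
    rw [Real.norm_of_nonneg (by positivity)]
    exact mul_residueClass_div_rpow_le a hδ.1 hδ.2 k
  have hlower : ∀ᶠ δ : ℝ in 𝓝[>] 0, (n.totient : ℝ)⁻¹ - δ * C ≤
      ∑' k : ℕ, δ * (residueClass a k / (k : ℝ) ^ (1 + δ)) := by
    filter_upwards [hδ] with δ hδ
    have hx : 1 + δ ∈ Set.Ioc 1 2 := ⟨by linarith [hδ.1], by linarith [hδ.2]⟩
    have := mul_le_mul_of_nonneg_left (hC hx) hδ.1.le
    rwa [add_sub_cancel_left, mul_sub, mul_div_cancel₀ _ hδ.1.ne', ← tsum_mul_left] at this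
  have hid : Tendsto (fun δ : ℝ ↦ δ) (𝓝[>] 0) (𝓝 0) :=
    tendsto_nhdsWithin_of_tendsto_nhds tendsto_id
  have hle : (n.totient : ℝ)⁻¹ - 0 * C ≤ 0 :=
    le_of_tendsto_of_tendsto ((hid.mul_const C).const_sub _) hupper hlower
  have hpos : (0 : ℝ) < (n.totient : ℝ)⁻¹ := inv_pos.2 (mod_cast n.totient.pos_of_neZero)
  linarith

end PrimesInProgressions

open scoped Nat in
theorem eventually_almostAllPrimes_dvd_totient_natAbs_sub {s : ℤ} (hs : s ≠ 0) {d : ℕ}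
    (hd : 0 < d) : ∀ᶠ p : ℕ in almostAllPrimes, d ∣ φ (p - s).natAbs := by
  have : NeZero d := ⟨hd.ne'⟩
  filter_upwards [eventually_almostAllPrimes_exists_dvd_sub hs (fun q hq ↦ hq.1)
    (not_summable_one_div_prime_eq_mod (isUnit_one (M := ZMod d)))] with p ⟨q, ⟨hq, hqd⟩, hqp⟩
  have hdq : d ∣ q - 1 := by
    rw [← CharP.cast_eq_zero_iff (ZMod d), Nat.cast_sub hq.one_le, hqd, Nat.cast_one, sub_self]
  rw [← Nat.totient_prime hq] at hdq
  exact hdq.trans (Nat.totient_dvd_of_dvd (Int.natCast_dvd.1 hqp))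

theorem two_pow_divides_phi_density_general (ℓ d : ℕ) (hℓ : 0 < ℓ) (hd : 0 < d) :
    Tendsto (fun x : ℕ =>
      ({p : ℕ | p.Prime ∧ p ≤ x ∧ ℓ < p ∧
          d ∣ Nat.totient (p - ℓ) ∧ d ∣ Nat.totient (p + ℓ)}.ncard : ℝ) /
        (Nat.primeCounting x : ℝ)) atTop (𝓝 1) := by
  have hℓ₀ : (ℓ : ℤ) ≠ 0 := mod_cast hℓ.ne'
  have hall : ∀ᶠ p in almostAllPrimes,
      ℓ < p ∧ d ∣ Nat.totient (p - ℓ) ∧ d ∣ Nat.totient (p + ℓ) := by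
    filter_upwards [almostAllPrimes_le_atTop (eventually_gt_atTop ℓ),
      eventually_almostAllPrimes_dvd_totient_natAbs_sub hℓ₀ hd,
      eventually_almostAllPrimes_dvd_totient_natAbs_sub (neg_ne_zero.2 hℓ₀) hd]
      with p hp hsub hadd
    have hsub' : ((p : ℤ) - ℓ).natAbs = p - ℓ := by lia
    have hadd' : ((p : ℤ) - -ℓ).natAbs = p + ℓ := by lia
    rw [hsub'] at hsub
    rw [hadd'] at hadd
    exact ⟨hp, hsub, hadd⟩
  refine (tendsto_card_div_primeCounting_of_eventually hall).congr fun x ↦ ?_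
  rw [← Set.ncard_coe_finset]
  congr! 3
  ext p
  simp only [Finset.coe_filter, Nat.mem_primesLE, Set.mem_ofPred_eq]
  tauto

theorem two_pow_divides_phi_density (ℓ m : ℕ) (hℓ : 0 < ℓ) (hm : 0 < m) :
    Tendsto (fun x : ℕ =>
      ({p : ℕ | p.Prime ∧ p ≤ x ∧ ℓ < p ∧
          2 ^ m ∣ Nat.totient (p - ℓ) ∧ 2 ^ m ∣ Nat.totient (p + ℓ)}.ncard : ℝ) /
        (Nat.primeCounting x : ℝ)) atTop (𝓝 1) :=
  two_pow_divides_phi_density_general ℓ (2 ^ m) hℓ (by positivity)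
end
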